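/- arXiv:math/9811004 — 6 statements merged into one kernel-verified Lean document; each statement's English description precedes it below -/
import Mathlib

section
/- Let P be a finite regular p-group with ω_1(P) ≥ 2 and μ_1(P) = μ_2(P) ≥ 2. Then for every i with 1 ≤ i ≤ μ_1(P) - 1, the left-normed iterated commutator subgroup [℧_i(P), P, ..., P], with P repeated ω_{i+1}(P) - 1 times, is contained in ℧_{i+1}(P). -/
/-!
Let the finite nilpotent group `P` satisfy the regularity identity with an arbitrary exponent `q` in
place of the prime `p`, that is, `IsRegularPGroup q P`. Then `x ^ q = y ^ q` if and only if
`(x⁻¹ * y) ^ q = 1`, and the `q`-th powers of the elements of a subgroup form a subgroup. Exponents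
with this property are closed under products, so a regular `p`-group has it for `q = p ^ i`, and
taking `p ^ i`-th powers induces bijections `H Ω_i(P) / Ω_i(P) → ℧_i(H)` for all `H ≤ P`. In
particular `|℧_i(P) : ℧_{i+1}(P)| = p ^ ω_{i+1}`.

Since some `ω_j` with `j > i` is at least `2`, the group `P / Ω_i(P)` is not cyclic, so
`Φ(P) Ω_i(P)` has index at least `p ^ 2` in `P`, and therefore `℧_i(Φ(P))` has index at least
`p ^ 2` in `℧_i(P)`. This subgroup contains both `[℧_i(P), P]` and `℧_{i+1}(P)`: modulo
`℧_{i+1}(P)`, the first commutation with `P` divides the order by at least `p ^ 2`, and each later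
one by at least `p`, so that the order `p ^ ω_{i+1}` is used up after `ω_{i+1} - 1` of them.
-/

/-- `℧_1(H) = ⟨h^p : h ∈ H⟩` for a subgroup `H`. -/
def MhoOne (p : ℕ) {P : Type} [Group P] (H : Subgroup P) : Subgroup P :=
  Subgroup.closure {y : P | ∃ x ∈ H, y = x ^ p}

/-- A `p`-group `P` is regular if for all `x y : P` there is
`z ∈ ℧_1(γ_2(⟨x,y⟩))` with `x^p * y^p = (x*y)^p * z`. -/
def IsRegularPGroup (p : ℕ) (P : Type) [Group P] : Prop :=
  ∀ x y : P,
    ∃ z ∈ MhoOne p ⁅Subgroup.closure {x, y}, Subgroup.closure {x, y}⁆,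
      x ^ p * y ^ p = (x * y) ^ p * z

/-- `Ω_i(P) = ⟨x : x^(p^i) = 1⟩`. -/
def OmegaSubgroup (p : ℕ) (P : Type) [Group P] (i : ℕ) : Subgroup P :=
  Subgroup.closure {x : P | x ^ p ^ i = 1}

/-- `℧_i(P) = ⟨x^(p^i) : x ∈ P⟩`. -/
def MhoSubgroup (p : ℕ) (P : Type) [Group P] (i : ℕ) : Subgroup P :=
  Subgroup.closure {y : P | ∃ x : P, y = x ^ p ^ i}

/-- `ω_i(P)`, defined by `p ^ ω_i(P) = |Ω_i(P)/Ω_{i-1}(P)|`. -/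
noncomputable def omegaInv (p : ℕ) (P : Type) [Group P] (i : ℕ) : ℕ :=
  ((OmegaSubgroup p P (i - 1)).relIndex (OmegaSubgroup p P i)).factorization p

/-- `μ_j(P)` (for `j ≥ 1`): the dual partition of `(ω_1(P), ω_2(P), ...)`. -/
noncomputable def muInv (p : ℕ) (P : Type) [Group P] (j : ℕ) : ℕ :=
  Nat.card {i : ℕ // 1 ≤ i ∧ j ≤ omegaInv p P i}

/-- The left-normed iterated commutator `[H, P, P, ..., P]` (`k` copies of `P`). -/
def iterCommutator {P : Type} [Group P] (H : Subgroup P) : ℕ → Subgroup P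
  | 0 => H
  | (k + 1) => ⁅iterCommutator H k, (⊤ : Subgroup P)⁆

section GroupTheory

open Subgroup
open scoped commutatorElement

variable {G : Type*} [Group G]

theorem closure_pair_le {H : Subgroup G} {x y : G} (hx : x ∈ H) (hy : y ∈ H) :
    closure {x, y} ≤ H :=
  (closure_le H).2 (Set.pair_subset hx hy)

theorem closure_normal_of_forall_conj_mem {s : Set G} (hs : ∀ x ∈ s, ∀ g : G, g * x * g⁻¹ ∈ s) :
    (closure s).Normal := by
  have hconj : Group.conjugatesOfSet s = s := by
    refine Set.Subset.antisymm (fun y hy => ?_) Group.subset_conjugatesOfSet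
    obtain ⟨x, hx, hxy⟩ := Group.mem_conjugatesOfSet_iff.1 hy
    obtain ⟨g, rfl⟩ := isConj_iff.1 hxy
    exact hs x hx g
  rw [← hconj]
  exact normalClosure_normal

theorem conj_mem_commutator_self {H : Subgroup G} {g c : G} (hg : g ∈ H) (hc : c ∈ ⁅H, H⁆) :
    g * c * g⁻¹ ∈ ⁅H, H⁆ :=
  (mem_normalizer_iff.1 (normalizer_commutator_ge_left H H hg) c).1 hc

theorem conj_mem_zpowers_sup_commutator {H : Subgroup G} {x g : G} (hx : x ∈ H) (hg : g ∈ H) :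
    g * x * g⁻¹ ∈ zpowers x ⊔ ⁅H, H⁆ := by
  rw [← MulAut.conj_apply, conj_eq_commutatorElement_mul]
  exact mul_mem (mem_sup_right (commutator_mem_commutator hg hx)) (mem_sup_left (mem_zpowers x))

theorem commutator_le_of_closure_eq_top {s : Set G} (hs : closure s = ⊤) {N : Subgroup G}
    [N.Normal] (h : ∀ a ∈ s, ∀ b ∈ s, ⁅a, b⁆ ∈ N) : commutator G ≤ N := by
  rw [← Normal.quotient_commutative_iff_commutator_le, ← center_eq_top_iff, eq_top_iff]
  have hgen : closure (QuotientGroup.mk' N '' s) = ⊤ := by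
    rw [← MonoidHom.map_closure, hs, map_top_of_surjective _ (QuotientGroup.mk'_surjective N)]
  rw [← centralizer_univ, ← coe_top, ← hgen, centralizer_closure, closure_le]
  rintro _ ⟨a, ha, rfl⟩
  rw [SetLike.mem_coe, mem_centralizer_iff]
  rintro _ ⟨b, hb, rfl⟩
  rw [← commutatorElement_eq_one_iff_mul_comm, ← map_commutatorElement]
  exact (QuotientGroup.eq_one_iff _).2 (h b hb a ha)

theorem commutator_closure_pair_le {x y : G} {N : Subgroup G}
    (hN : ∀ g ∈ closure {x, y}, g * ⁅x, y⁆ * g⁻¹ ∈ N) :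
    ⁅closure {x, y}, closure {x, y}⁆ ≤ N := by
  set H := closure {x, y}
  let x' : H := ⟨x, subset_closure (by simp)⟩
  let y' : H := ⟨y, subset_closure (by simp)⟩
  have hgen : closure {x', y'} = ⊤ := by
    apply map_injective H.subtype_injective
    rw [MonoidHom.map_closure, ← MonoidHom.range_eq_map, range_subtype, Set.image_pair]
    rfl
  have hxy : ⁅x', y'⁆ ∈ (N.subgroupOf H).normalCore := fun g => hN g g.2
  have hcomm : commutator H ≤ (N.subgroupOf H).normalCore := by
    apply commutator_le_of_closure_eq_top hgen
    rintro _ (rfl | rfl) _ (rfl | rfl)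
    · simp
    · exact hxy
    · rw [← commutatorElement_inv]
      exact inv_mem hxy
    · simp
  rw [← map_subtype_commutator, map_le_iff_le_comap]
  exact hcomm.trans (normalCore_le _)

theorem commute_of_commutator_closure_pair_eq_bot {x y : G}
    (h : ⁅closure {x, y}, closure {x, y}⁆ = ⊥) : Commute x y := by
  rw [← commutatorElement_eq_one_iff_commute, ← mem_bot, ← h]
  exact commutator_mem_commutator (subset_closure (by simp)) (subset_closure (by simp))

theorem le_frattini_iff {K : Subgroup G} :
    K ≤ frattini G ↔ ∀ M : Subgroup G, IsCoatom M → K ≤ M :=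
  le_iInf₂_iff

theorem isCyclic_of_zpowers_sup_frattini_eq_top [Finite G] {x : G}
    (h : zpowers x ⊔ frattini G = ⊤) : IsCyclic G :=
  isCyclic_iff_exists_zpowers_eq_top.2 ⟨x, frattini_nongenerating h⟩

theorem commutator_sup_le (X B : Subgroup G) [B.Normal] :
    ⁅X ⊔ B, (⊤ : Subgroup G)⁆ ≤ ⁅X, (⊤ : Subgroup G)⁆ ⊔ B := by
  rw [commutator_le]
  intro g hg y hy
  obtain ⟨x, hx, b, hb, rfl⟩ := mem_sup_of_normal_right.1 hg
  rw [commutatorElement_mul_left_eq_conj_mul]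
  have hby : ⁅b, y⁆ ∈ B := commutator_le_left B ⊤ (commutator_mem_commutator hb hy)
  exact mul_mem (mem_sup_right (Normal.conj_mem inferInstance _ hby x))
    (mem_sup_left (commutator_mem_commutator hx hy))

section Nilpotent

variable [Group.IsNilpotent G]

theorem normal_of_isCoatom_of_isNilpotent {M : Subgroup G} (hM : IsCoatom M) : M.Normal :=
  NormalizerCondition.normal_of_coatom M Group.normalizerCondition_of_isNilpotent hM

theorem commutator_le_frattini : commutator G ≤ frattini G := by
  refine le_frattini_iff.2 fun M hM => ?_
  have := normal_of_isCoatom_of_isNilpotent hM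
  obtain ⟨g, -, hg⟩ := SetLike.exists_of_lt hM.lt_top
  refine Normal.commutator_le_of_self_sup_commutative_eq_top (H := zpowers g) ?_ inferInstance
  exact hM.2 _ (left_lt_sup.2 fun h => hg (h (mem_zpowers g)))

theorem zpowers_sup_commutator_lt [Finite G] {H : Subgroup G} {w : G} (hw : w ∈ H)
    (hH : ⁅H, H⁆ ≠ ⊥) : zpowers w ⊔ ⁅H, H⁆ < H := by
  refine (sup_le ((zpowers_le).2 hw) H.commutator_le_self).lt_of_ne fun h => hH ?_
  have htop : zpowers (⟨w, hw⟩ : H) ⊔ commutator H = ⊤ := by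
    apply map_injective H.subtype_injective
    rw [Subgroup.map_sup, map_subtype_commutator, MonoidHom.map_zpowers, ← MonoidHom.range_eq_map,
      range_subtype]
    exact h
  have : IsCyclic H := isCyclic_of_zpowers_sup_frattini_eq_top <|
    top_unique (htop.ge.trans (sup_le_sup_left commutator_le_frattini _))
  rw [commutator_self_eq_bot_iff]
  infer_instance

/- A pair with nonabelian closure is reduced to pairs in the proper subgroups `⟨w⟩ [H, H]`, where
`w ∈ H = ⟨x, y⟩`. -/
theorem closure_pair_induction [Finite G] {Q : G → G → Prop} (commute : ∀ x y, Commute x y → Q x y)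
    (step : ∀ x y, (∀ w ∈ Subgroup.closure {x, y},
      ∀ a ∈ zpowers w ⊔ ⁅Subgroup.closure {x, y}, Subgroup.closure {x, y}⁆,
      ∀ b ∈ zpowers w ⊔ ⁅Subgroup.closure {x, y}, Subgroup.closure {x, y}⁆, Q a b) → Q x y)
    (x y : G) : Q x y := by
  induction hH : Subgroup.closure {x, y} using WellFoundedLT.induction generalizing x y with
  | ind H ih =>
    by_cases hab : ⁅Subgroup.closure {x, y}, Subgroup.closure {x, y}⁆ = ⊥
    · exact commute x y (commute_of_commutator_closure_pair_eq_bot hab)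
    · refine step x y fun w hw a ha b hb => ih _ ?_ a b rfl
      exact hH ▸ (closure_pair_le ha hb).trans_lt (zpowers_sup_commutator_lt hw hab)

theorem le_of_le_commutator_sup {X B : Subgroup G} [B.Normal]
    (h : X ≤ ⁅X, (⊤ : Subgroup G)⁆ ⊔ B) : X ≤ B := by
  have hseries : ∀ n, X ≤ (⊤ : Subgroup G).lowerCentralSeries n ⊔ B := by
    intro n
    induction n with
    | zero => simp
    | succ n ih =>
      exact h.trans
        (sup_le ((commutator_mono ih le_rfl).trans (commutator_sup_le _ _)) le_sup_right)
  obtain ⟨n, hn⟩ :=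
    Subgroup.nilpotent_iff_lowerCentralSeries.1 (inferInstance : Group.IsNilpotent G)
  simpa [hn] using hseries n

end Nilpotent

section CyclicQuotient

variable [Finite G] {N : Subgroup G} [N.Normal]

theorem isCyclic_quotient_of_isCyclic_quotient_frattini_sup [IsCyclic (G ⧸ frattini G ⊔ N)] :
    IsCyclic (G ⧸ N) := by
  obtain ⟨g, hg⟩ := IsCyclic.exists_generator (α := G ⧸ frattini G ⊔ N)
  obtain ⟨x, rfl⟩ := QuotientGroup.mk_surjective g
  have hgen : zpowers x ⊔ N = ⊤ := by
    refine frattini_nongenerating (eq_top_iff.2 fun y _ => ?_)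
    obtain ⟨k, hk⟩ := hg y
    have hmem : (x ^ k)⁻¹ * y ∈ frattini G ⊔ N := QuotientGroup.eq.1 hk
    rw [sup_assoc, sup_comm N, ← mul_inv_cancel_left (x ^ k) y]
    exact mul_mem (mem_sup_left (zpow_mem (mem_zpowers x) k)) (mem_sup_right hmem)
  refine isCyclic_iff_exists_zpowers_eq_top.2 ⟨QuotientGroup.mk' N x, ?_⟩
  rw [← MonoidHom.map_zpowers, ← map_top_of_surjective _ (QuotientGroup.mk'_surjective N), ← hgen,
    map_eq_map_iff, QuotientGroup.ker_mk', sup_assoc, sup_idem]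

theorem relIndex_le_of_isCyclic_quotient [IsCyclic (G ⧸ N)] {K : Subgroup G} {q : ℕ} (hq : 0 < q)
    (h : ∀ y ∈ K, y ^ q ∈ N) : N.relIndex K ≤ q := by
  classical
  have := Fintype.ofFinite (G ⧸ N)
  have hcard : N.relIndex K = Nat.card (K.map (QuotientGroup.mk' N)) := by
    rw [← relIndex_bot_left, ← relIndex_comap, MonoidHom.comap_bot, QuotientGroup.ker_mk']
  refine le_trans ?_ (IsCyclic.card_pow_eq_one_le (α := G ⧸ N) hq)
  rw [hcard, ← Nat.card_eq_finsetCard]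
  refine Nat.card_mono (Finset.finite_toSet _) ?_
  rintro _ ⟨y, hy, rfl⟩
  simpa [← QuotientGroup.mk_pow] using h y hy

end CyclicQuotient

section PGroup

variable {p : ℕ} [Fact p.Prime] [Finite G] (hG : IsPGroup p G)
include hG

theorem index_eq_of_isCoatom {M : Subgroup G} (hM : IsCoatom M) : M.index = p := by
  have hp : p.Prime := Fact.out
  obtain ⟨n, hn⟩ := IsPGroup.iff_card.1 (hG.to_subgroup M)
  obtain ⟨m, hm⟩ := IsPGroup.iff_card.1 hG
  have hlt : n < m := by
    rw [← Nat.pow_lt_pow_iff_right hp.one_lt, ← hn, ← hm]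
    exact M.card_le_card_group.lt_of_ne (mt M.eq_top_of_card_eq hM.1)
  obtain ⟨K, hK, hMK⟩ := Sylow.exists_subgroup_card_pow_succ (hm ▸ pow_dvd_pow p hlt) hn
  have hne : M ≠ K := by
    rintro rfl
    exact n.succ_ne_self (Nat.pow_right_injective hp.two_le (hK.symm.trans hn))
  have htop : K = ⊤ := hM.2 K (hMK.lt_of_ne hne)
  rw [htop, card_top, ← M.card_mul_index, hn, pow_succ] at hK
  exact Nat.eq_of_mul_eq_mul_left (pow_pos hp.pos n) hK

theorem pow_mem_frattini (x : G) : x ^ p ∈ frattini G := by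
  have := hG.isNilpotent
  rw [← zpowers_le, le_frattini_iff]
  intro M hM
  have := normal_of_isCoatom_of_isNilpotent hM
  rw [zpowers_le, ← index_eq_of_isCoatom hG hM]
  exact M.pow_index_mem x

theorem sq_le_index_frattini_sup {N : Subgroup G} [N.Normal] (hN : ¬ IsCyclic (G ⧸ N)) :
    p ^ 2 ≤ (frattini G ⊔ N).index := by
  have hp : p.Prime := Fact.out
  obtain ⟨n, hn⟩ := hG.index (frattini G ⊔ N)
  rw [hn]
  refine Nat.pow_le_pow_right hp.pos ?_
  by_contra! hlt
  have hdvd : Nat.card (G ⧸ frattini G ⊔ N) ∣ p := by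
    rw [← index_eq_card, hn]
    exact (pow_dvd_pow p (Nat.le_of_lt_succ hlt)).trans (pow_one p).dvd
  have := isCyclic_of_card_dvd_prime hdvd
  exact hN isCyclic_quotient_of_isCyclic_quotient_frattini_sup

theorem le_relIndex_of_lt {H K : Subgroup G} (h : H < K) : p ≤ H.relIndex K := by
  obtain ⟨n, hn⟩ := (hG.to_subgroup K).index (H.subgroupOf K)
  have hn0 : n ≠ 0 := by
    rintro rfl
    exact h.not_ge (relIndex_eq_one.1 hn)
  rw [relIndex, hn]
  exact Nat.le_self_pow hn0 p

end PGroup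

end GroupTheory

section IterCommutator

open Subgroup

variable {P : Type} [Group P]

instance iterCommutator_normal (A : Subgroup P) [A.Normal] (k : ℕ) :
    (iterCommutator A k).Normal := by
  induction k with
  | zero => assumption
  | succ k ih => exact commutator_normal _ _

theorem iterCommutator_succ_le_self (A : Subgroup P) [A.Normal] (k : ℕ) :
    iterCommutator A (k + 1) ≤ iterCommutator A k :=
  commutator_le_left _ _

theorem iterCommutator_le (A : Subgroup P) [A.Normal] (k : ℕ) : iterCommutator A k ≤ A :=
  antitone_nat_of_succ_le (iterCommutator_succ_le_self A) k.zero_le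

variable {p m : ℕ} [Fact p.Prime] [Finite P] (hP : IsPGroup p P) {A B : Subgroup P} [A.Normal]
  [B.Normal] (hBA : B ≤ A) (hm : p ^ m ≤ (⁅A, (⊤ : Subgroup P)⁆ ⊔ B).relIndex A)
include hP hBA hm

theorem pow_le_relIndex_iterCommutator_sup {k : ℕ} (hk : ¬ iterCommutator A (k + 1) ≤ B) :
    p ^ (m + k) ≤ (iterCommutator A (k + 1) ⊔ B).relIndex A := by
  have := hP.isNilpotent
  induction k with
  | zero => exact hm
  | succ k ih =>
    have hle := iterCommutator_succ_le_self A (k + 1)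
    have hB : ¬ iterCommutator A (k + 1) ≤ B := fun h => hk (hle.trans h)
    have hlt : iterCommutator A (k + 2) ⊔ B < iterCommutator A (k + 1) ⊔ B :=
      (sup_le_sup_right hle B).lt_of_ne fun h =>
        hB (le_of_le_commutator_sup (le_sup_left.trans h.ge))
    calc p ^ (m + (k + 1)) = p * p ^ (m + k) := by rw [← add_assoc, pow_succ']
      _ ≤ _ := Nat.mul_le_mul (le_relIndex_of_lt hP hlt) (ih hB)
      _ = _ := relIndex_mul_relIndex _ _ _ hlt.le (sup_le (iterCommutator_le A _) hBA)

theorem iterCommutator_succ_le_of_relIndex_le {k : ℕ} (hk : B.relIndex A ≤ p ^ (m + k)) :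
    iterCommutator A (k + 1) ≤ B := by
  have hp : p.Prime := Fact.out
  by_contra h
  have hpow := pow_le_relIndex_iterCommutator_sup hP hBA hm h
  have hlt : B < iterCommutator A (k + 1) ⊔ B := right_lt_sup.2 h
  have hmul := relIndex_mul_relIndex _ _ _ hlt.le (sup_le (iterCommutator_le A _) hBA)
  have : p ^ (m + k + 1) ≤ p ^ (m + k) := by
    rw [pow_succ']
    exact (Nat.mul_le_mul (le_relIndex_of_lt hP hlt) hpow).trans (hmul.trans_le hk)
  exact (Nat.pow_lt_pow_succ hp.one_lt).not_ge this

end IterCommutator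

section Mho

open Subgroup
open scoped commutatorElement

variable {P : Type} [Group P] {q : ℕ} {H K : Subgroup P}

theorem mhoOne_mono (h : H ≤ K) : MhoOne q H ≤ MhoOne q K := by
  refine closure_mono ?_
  rintro _ ⟨x, hx, rfl⟩
  exact ⟨x, h hx, rfl⟩

theorem pow_mem_mhoOne {x : P} (hx : x ∈ H) : x ^ q ∈ MhoOne q H :=
  subset_closure ⟨x, hx, rfl⟩

theorem mhoOne_le_iff : MhoOne q H ≤ K ↔ ∀ x ∈ H, x ^ q ∈ K := by
  refine (closure_le K).trans ⟨fun h x hx => h ⟨x, hx, rfl⟩, ?_⟩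
  rintro h _ ⟨x, hx, rfl⟩
  exact h x hx

instance mhoOne_normal [H.Normal] : (MhoOne q H).Normal := by
  refine closure_normal_of_forall_conj_mem ?_
  rintro _ ⟨x, hx, rfl⟩ g
  exact ⟨g * x * g⁻¹, Normal.conj_mem inferInstance x hx g, conj_pow.symm⟩

theorem mhoSubgroup_eq_mhoOne (p i : ℕ) : MhoSubgroup p P i = MhoOne (p ^ i) ⊤ := by
  simp [MhoSubgroup, MhoOne]

instance mhoSubgroup_normal (p i : ℕ) : (MhoSubgroup p P i).Normal := by
  rw [mhoSubgroup_eq_mhoOne]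
  infer_instance

theorem mhoSubgroup_antitone (p : ℕ) : Antitone (MhoSubgroup p P) := by
  refine antitone_nat_of_succ_le fun i => ?_
  rw [mhoSubgroup_eq_mhoOne, mhoSubgroup_eq_mhoOne, mhoOne_le_iff]
  intro x _
  rw [pow_succ', pow_mul]
  exact pow_mem_mhoOne (mem_top _)

theorem omegaSubgroup_monotone (p : ℕ) : Monotone (OmegaSubgroup p P) := by
  refine monotone_nat_of_le_succ fun i => closure_mono fun x (hx : x ^ p ^ i = 1) => ?_
  rw [Set.mem_ofPred_eq, pow_succ, pow_mul, hx, one_pow]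

instance omegaSubgroup_normal (p i : ℕ) : (OmegaSubgroup p P i).Normal := by
  refine closure_normal_of_forall_conj_mem fun x (hx : x ^ p ^ i = 1) g => ?_
  rw [Set.mem_ofPred_eq, conj_pow, hx, mul_one, mul_inv_cancel]

theorem mem_mhoOne_of_forall_mul {z : P}
    (h : ∀ x ∈ H, ∀ y ∈ H, ∃ t ∈ H, x ^ q * y ^ q = t ^ q) (hz : z ∈ MhoOne q H) :
    ∃ t ∈ H, z = t ^ q := by
  induction hz using closure_induction with
  | mem _ hx => exact hx
  | one => exact ⟨1, one_mem H, (one_pow q).symm⟩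
  | mul _ _ _ _ ha hb =>
    obtain ⟨s, hs, rfl⟩ := ha
    obtain ⟨t, ht, rfl⟩ := hb
    exact h s hs t ht
  | inv _ _ ha =>
    obtain ⟨s, hs, rfl⟩ := ha
    exact ⟨s⁻¹, inv_mem hs, (inv_pow s q).symm⟩

theorem pow_eq_one_of_mem_commutator_closure_pair {x y c : P}
    (hmul : ∀ a ∈ ⁅closure {x, y}, closure {x, y}⁆, ∀ b ∈ ⁅closure {x, y}, closure {x, y}⁆,
      a ^ q = 1 → b ^ q = 1 → (a * b) ^ q = 1)
    (hxy : ⁅x, y⁆ ^ q = 1) (hc : c ∈ ⁅closure {x, y}, closure {x, y}⁆) : c ^ q = 1 := by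
  let N : Subgroup P :=
    { carrier := {c | c ∈ ⁅closure {x, y}, closure {x, y}⁆ ∧ c ^ q = 1}
      one_mem' := ⟨one_mem _, one_pow q⟩
      mul_mem' := fun ha hb => ⟨mul_mem ha.1 hb.1, hmul _ ha.1 _ hb.1 ha.2 hb.2⟩
      inv_mem' := fun ha => ⟨inv_mem ha.1, by rw [inv_pow, ha.2, inv_one]⟩ }
  have hN : ⁅closure {x, y}, closure {x, y}⁆ ≤ N := by
    refine commutator_closure_pair_le fun g hg => ⟨conj_mem_commutator_self hg ?_, ?_⟩
    · exact commutator_mem_commutator (subset_closure (by simp)) (subset_closure (by simp))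
    · rw [conj_pow, hxy, mul_one, mul_inv_cancel]
  exact (hN hc).2

end Mho

namespace IsRegularPGroup

open Subgroup
open scoped commutatorElement

variable {P : Type} [Group P] {q : ℕ}

theorem pow_mul_pow_of_forall_commutator (hq : IsRegularPGroup q P) {x y : P}
    (h : ∀ c ∈ ⁅closure {x, y}, closure {x, y}⁆, c ^ q = 1) : x ^ q * y ^ q = (x * y) ^ q := by
  obtain ⟨z, hz, hxy⟩ := hq x y
  have hz1 : z = 1 := mem_bot.1 (mhoOne_le_iff.2 (fun c hc => mem_bot.2 (h c hc)) hz)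
  rw [hxy, hz1, mul_one]

variable [Finite P] [Group.IsNilpotent P]

theorem mul_pow_eq_one (hq : IsRegularPGroup q P) (x y : P) (hx : x ^ q = 1) (hy : y ^ q = 1) :
    (x * y) ^ q = 1 := by
  induction x, y using closure_pair_induction with
  | commute x y hxy => rw [hxy.mul_pow, hx, hy, one_mul]
  | step x y ih =>
    have hxH : x ∈ closure {x, y} := subset_closure (by simp)
    have hyH : y ∈ closure {x, y} := subset_closure (by simp)
    have hxy : ⁅x, y⁆ ^ q = 1 := by
      rw [commutatorElement_def, mul_assoc, mul_assoc, ← mul_assoc y, ← conj_inv]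
      refine ih x hxH x (mem_sup_left (mem_zpowers x)) _
        (inv_mem (conj_mem_zpowers_sup_commutator hxH hyH)) hx ?_
      rw [inv_pow, conj_pow, hx, mul_one, mul_inv_cancel, inv_one]
    have hcomm : ∀ c ∈ ⁅closure {x, y}, closure {x, y}⁆, c ^ q = 1 := fun c =>
      pow_eq_one_of_mem_commutator_closure_pair
        (fun a ha b hb => ih x hxH a (mem_sup_right ha) b (mem_sup_right hb)) hxy
    rw [← hq.pow_mul_pow_of_forall_commutator hcomm, hx, hy, one_mul]

theorem pow_mul_pow_of_commutatorElement (hq : IsRegularPGroup q P) {x y : P}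
    (hxy : ⁅x, y⁆ ^ q = 1) : x ^ q * y ^ q = (x * y) ^ q :=
  hq.pow_mul_pow_of_forall_commutator fun _ =>
    pow_eq_one_of_mem_commutator_closure_pair (fun a _ b _ => hq.mul_pow_eq_one a b) hxy

theorem inv_mul_pow_eq_one (hq : IsRegularPGroup q P) (x y : P) (h : x ^ q = y ^ q) :
    (x⁻¹ * y) ^ q = 1 := by
  induction x, y using closure_pair_induction with
  | commute x y hxy => rw [hxy.inv_left.mul_pow, ← h, inv_pow, inv_mul_cancel]
  | step x y ih =>
    have hxH : x ∈ closure {x, y} := subset_closure (by simp)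
    have hyH : y ∈ closure {x, y} := subset_closure (by simp)
    have hxy : ⁅x⁻¹, y⁆ ^ q = 1 := by
      have hconj : x ^ q = (y * x * y⁻¹) ^ q := by
        rw [conj_pow, h, (Commute.self_pow y q).eq, mul_inv_cancel_right]
      have := ih x hxH x (mem_sup_left (mem_zpowers x)) _
        (conj_mem_zpowers_sup_commutator hxH hyH) hconj
      rwa [commutatorElement_def, inv_inv, mul_assoc, mul_assoc, ← mul_assoc y]
    rw [← hq.pow_mul_pow_of_commutatorElement hxy, ← h, inv_pow, inv_mul_cancel]

theorem pow_eq_pow_iff (hq : IsRegularPGroup q P) {x y : P} :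
    x ^ q = y ^ q ↔ (x⁻¹ * y) ^ q = 1 := by
  refine ⟨hq.inv_mul_pow_eq_one x y, fun h => ?_⟩
  have hcomm : ⁅x, x⁻¹ * y⁆ ^ q = 1 := by
    rw [commutatorElement_def]
    refine hq.mul_pow_eq_one _ _ ?_ ?_
    · rw [conj_pow, h, mul_one, mul_inv_cancel]
    · rw [inv_pow, h, inv_one]
  simpa [h] using hq.pow_mul_pow_of_commutatorElement hcomm

theorem exists_pow_mul_pow_eq_pow (hq : IsRegularPGroup q P) (x y : P) :
    ∃ t ∈ closure {x, y}, x ^ q * y ^ q = t ^ q := by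
  induction x, y using closure_pair_induction with
  | commute x y hxy =>
    exact ⟨x * y, mul_mem (subset_closure (by simp)) (subset_closure (by simp)),
      (hxy.mul_pow q).symm⟩
  | step x y ih =>
    have hxyH : x * y ∈ closure {x, y} :=
      mul_mem (subset_closure (by simp)) (subset_closure (by simp))
    obtain ⟨z, hz, hxy⟩ := hq x y
    obtain ⟨s, hs, rfl⟩ := mem_mhoOne_of_forall_mul (fun a ha b hb =>
      (ih _ hxyH a (mem_sup_right ha) b (mem_sup_right hb)).imp
        fun t ht => ⟨closure_pair_le ha hb ht.1, ht.2⟩) hz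
    obtain ⟨t, ht, hst⟩ :=
      ih _ hxyH _ (mem_sup_left (mem_zpowers _)) s (mem_sup_right hs)
    exact ⟨t, closure_pair_le hxyH (commutator_le_self _ hs) ht, hxy.trans hst⟩

theorem mem_mhoOne_iff (hq : IsRegularPGroup q P) {H : Subgroup P} {z : P} :
    z ∈ MhoOne q H ↔ ∃ t ∈ H, z = t ^ q := by
  refine ⟨mem_mhoOne_of_forall_mul fun x hx y hy => ?_, ?_⟩
  · exact (hq.exists_pow_mul_pow_eq_pow x y).imp
      fun t ht => ⟨closure_pair_le hx hy ht.1, ht.2⟩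
  · rintro ⟨t, ht, rfl⟩
    exact pow_mem_mhoOne ht

theorem commutator_mhoOne_le (hq : IsRegularPGroup q P) (H : Subgroup P) :
    ⁅MhoOne q H, H⁆ ≤ MhoOne q ⁅H, H⁆ := by
  rw [commutator_le]
  intro g hg b hb
  obtain ⟨x, hx, rfl⟩ := hq.mem_mhoOne_iff.1 hg
  obtain ⟨z, hz, hxb⟩ := hq x (b * x⁻¹ * b⁻¹)
  have hle : closure {x, b * x⁻¹ * b⁻¹} ≤ H :=
    closure_pair_le hx (mul_mem (mul_mem hb (inv_mem hx)) (inv_mem hb))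
  have hcomm : ⁅x ^ q, b⁆ = ⁅x, b⁆ ^ q * z := by
    calc ⁅x ^ q, b⁆ = x ^ q * (b * x⁻¹ * b⁻¹) ^ q := by
          rw [conj_pow, inv_pow, commutatorElement_def]
          group
      _ = (x * (b * x⁻¹ * b⁻¹)) ^ q * z := hxb
      _ = ⁅x, b⁆ ^ q * z := by simp only [commutatorElement_def, mul_assoc]
  rw [hcomm]
  exact mul_mem (pow_mem_mhoOne (commutator_mem_commutator hx hb))
    (mhoOne_mono (commutator_mono hle hle) hz)

theorem exists_pow_mul_pow_eq (hq : IsRegularPGroup q P) (x y : P) :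
    ∃ z ∈ ⁅closure {x, y}, closure {x, y}⁆, x ^ q * y ^ q = (x * y) ^ q * z ^ q := by
  obtain ⟨w, hw, hxy⟩ := hq x y
  obtain ⟨z, hz, rfl⟩ := hq.mem_mhoOne_iff.1 hw
  exact ⟨z, hz, hxy⟩

theorem exists_pow_pow_mul_pow_pow_eq {r : ℕ} (hq : IsRegularPGroup q P)
    (hr : IsRegularPGroup r P) {H : Subgroup P} {x y : P} (hx : x ∈ H) (hy : y ∈ H) :
    ∃ z ∈ ⁅H, H⁆, (x ^ q) ^ r * (y ^ q) ^ r = (x ^ q * y ^ q) ^ r * z ^ (q * r) := by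
  obtain ⟨e, he, hxy⟩ := hr.exists_pow_mul_pow_eq (x ^ q) (y ^ q)
  have hle : ⁅closure {x ^ q, y ^ q}, closure {x ^ q, y ^ q}⁆ ≤ MhoOne q ⁅H, H⁆ :=
    (commutator_mono (closure_pair_le (pow_mem_mhoOne hx) (pow_mem_mhoOne hy))
      (closure_pair_le (pow_mem hx q) (pow_mem hy q))).trans (hq.commutator_mhoOne_le H)
  obtain ⟨z, hz, rfl⟩ := hq.mem_mhoOne_iff.1 (hle he)
  exact ⟨z, hz, by rw [hxy, pow_mul]⟩

theorem mul {r : ℕ} (hq : IsRegularPGroup q P) (hr : IsRegularPGroup r P) :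
    IsRegularPGroup (q * r) P := by
  intro x y
  set H := closure {x, y}
  have hx : x ∈ H := subset_closure (by simp)
  have hy : y ∈ H := subset_closure (by simp)
  obtain ⟨c, hc, hxy⟩ := hq.exists_pow_mul_pow_eq x y
  obtain ⟨d, hd, hxyd⟩ := hq.exists_pow_pow_mul_pow_pow_eq hr hx hy
  obtain ⟨e, he, hxyce⟩ :=
    hq.exists_pow_pow_mul_pow_pow_eq hr (mul_mem hx hy) (commutator_le_self H hc)
  refine ⟨c ^ (q * r) * (e ^ (q * r))⁻¹ * d ^ (q * r), ?_, ?_⟩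
  · exact mul_mem (mul_mem (pow_mem_mhoOne hc) (inv_mem (pow_mem_mhoOne he))) (pow_mem_mhoOne hd)
  · calc x ^ (q * r) * y ^ (q * r) = ((x * y) ^ q * c ^ q) ^ r * d ^ (q * r) := by
          rw [pow_mul x, pow_mul y, hxyd, hxy]
      _ = ((x * y) ^ q) ^ r * (c ^ q) ^ r * (e ^ (q * r))⁻¹ * d ^ (q * r) := by
          rw [hxyce, mul_inv_cancel_right]
      _ = _ := by rw [← pow_mul, ← pow_mul]; group

theorem pow {p : ℕ} (hreg : IsRegularPGroup p P) (i : ℕ) : IsRegularPGroup (p ^ i) P := by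
  induction i with
  | zero => exact fun x y => ⟨1, one_mem _, by simp⟩
  | succ i ih =>
    rw [pow_succ]
    exact ih.mul hreg

variable {p i : ℕ} (hreg : IsRegularPGroup p P)
include hreg

theorem mem_omegaSubgroup_iff {x : P} : x ∈ OmegaSubgroup p P i ↔ x ^ p ^ i = 1 := by
  refine ⟨fun hx => ?_, fun hx => subset_closure hx⟩
  induction hx using closure_induction with
  | mem _ hx => exact hx
  | one => exact one_pow _
  | mul x y _ _ hx hy => exact (hreg.pow i).mul_pow_eq_one x y hx hy
  | inv x _ hx => rw [inv_pow, hx, inv_one]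

theorem card_mhoOne_pow (H : Subgroup P) :
    Nat.card (MhoOne (p ^ i) H) = (OmegaSubgroup p P i).relIndex H := by
  let f : H → P := fun x => (x : P) ^ p ^ i
  have hrange : (MhoOne (p ^ i) H : Set P) = Set.range f := by
    ext z
    simp [f, (hreg.pow i).mem_mhoOne_iff, eq_comm]
  have hker : ∀ x y : H,
      Setoid.ker f x y ↔ QuotientGroup.leftRel ((OmegaSubgroup p P i).subgroupOf H) x y := by
    intro x y
    rw [QuotientGroup.leftRel_apply, mem_subgroupOf, hreg.mem_omegaSubgroup_iff]
    exact (hreg.pow i).pow_eq_pow_iff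
  exact Nat.card_congr <| (Equiv.setCongr hrange).trans <|
    (Setoid.quotientKerEquivRange f).symm.trans (Quotient.congrRight hker)

theorem relIndex_mhoOne_top (H : Subgroup P) :
    (MhoOne (p ^ i) H).relIndex (MhoOne (p ^ i) ⊤) = (H ⊔ OmegaSubgroup p P i).index := by
  have hcard : Nat.card (MhoOne (p ^ i) H) * (MhoOne (p ^ i) H).relIndex (MhoOne (p ^ i) ⊤) =
      Nat.card (MhoOne (p ^ i) (⊤ : Subgroup P)) := by
    rw [← relIndex_bot_left, ← relIndex_bot_left]
    exact relIndex_mul_relIndex _ _ _ bot_le (mhoOne_mono le_top)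
  refine Nat.eq_of_mul_eq_mul_left (Nat.card_pos (α := MhoOne (p ^ i) H)) (hcard.trans ?_)
  rw [hreg.card_mhoOne_pow, hreg.card_mhoOne_pow, relIndex_top_right, ← relIndex_sup_right,
    relIndex_mul_index le_sup_right]

theorem relIndex_mhoSubgroup_succ :
    (MhoSubgroup p P (i + 1)).relIndex (MhoSubgroup p P i) =
      (OmegaSubgroup p P i).relIndex (OmegaSubgroup p P (i + 1)) := by
  have hcard (j : ℕ) : Nat.card (MhoSubgroup p P j) = (OmegaSubgroup p P j).index := by
    rw [mhoSubgroup_eq_mhoOne, hreg.card_mhoOne_pow, relIndex_top_right]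
  have hmul := relIndex_mul_relIndex _ _ _ bot_le (mhoSubgroup_antitone p (P := P) i.le_succ)
  rw [relIndex_bot_left, relIndex_bot_left, hcard, hcard,
    ← relIndex_mul_index (omegaSubgroup_monotone p (P := P) i.le_succ), mul_comm] at hmul
  exact Nat.eq_of_mul_eq_mul_right (Nat.pos_of_ne_zero index_ne_zero_of_finite) hmul

end IsRegularPGroup

section OmegaInv

open Subgroup

variable {P : Type} [Group P]

theorem exists_lt_le_omegaInv_of_lt_muInv {p i j : ℕ} (h : i < muInv p P j) :
    ∃ k, i < k ∧ j ≤ omegaInv p P k := by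
  by_contra! hlt
  refine h.not_ge ?_
  calc muInv p P j ≤ Nat.card (Set.Icc 1 i) :=
        Nat.card_mono (Set.finite_Icc 1 i) fun k (hk : 1 ≤ k ∧ j ≤ omegaInv p P k) =>
          ⟨hk.1, not_lt.1 fun hik => (hlt k hik).not_ge hk.2⟩
    _ = i := by simp

variable {p : ℕ} [Fact p.Prime] [Finite P] (hP : IsPGroup p P)
include hP

theorem relIndex_omegaSubgroup (j : ℕ) :
    (OmegaSubgroup p P (j - 1)).relIndex (OmegaSubgroup p P j) = p ^ omegaInv p P j := by
  obtain ⟨n, hn⟩ := (hP.to_subgroup (OmegaSubgroup p P j)).index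
    ((OmegaSubgroup p P (j - 1)).subgroupOf (OmegaSubgroup p P j))
  rw [omegaInv, relIndex, hn, (Fact.out : p.Prime).factorization_pow, Finsupp.single_eq_same]

variable (hreg : IsRegularPGroup p P)
include hreg

theorem not_isCyclic_quotient_omegaSubgroup {i j : ℕ} (hij : i < j) (hj : 2 ≤ omegaInv p P j) :
    ¬ IsCyclic (P ⧸ OmegaSubgroup p P i) := by
  intro hcyc
  have := hP.isNilpotent
  have hp : p.Prime := Fact.out
  have hle : OmegaSubgroup p P i ≤ OmegaSubgroup p P (j - 1) :=
    omegaSubgroup_monotone p (Nat.le_sub_one_of_lt hij)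
  have : IsCyclic (P ⧸ OmegaSubgroup p P (j - 1)) :=
    isCyclic_of_surjective (QuotientGroup.map _ _ (MonoidHom.id P) hle)
      (QuotientGroup.map_surjective_of_surjective _ _ _ QuotientGroup.mk_surjective hle)
  have hpow : ∀ y ∈ OmegaSubgroup p P j, y ^ p ∈ OmegaSubgroup p P (j - 1) := by
    intro y hy
    rw [hreg.mem_omegaSubgroup_iff] at hy ⊢
    rw [← pow_mul, ← pow_succ', Nat.sub_add_cancel (Nat.one_le_of_lt hij), hy]
  have hlep : p ^ omegaInv p P j ≤ p ^ 1 := by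
    rw [← relIndex_omegaSubgroup hP, pow_one]
    exact relIndex_le_of_isCyclic_quotient hp.pos hpow
  exact absurd (hj.trans ((Nat.pow_le_pow_iff_right hp.one_lt).1 hlep)) (by decide)

theorem commutator_mhoSubgroup_sup_le (i : ℕ) :
    ⁅MhoSubgroup p P i, (⊤ : Subgroup P)⁆ ⊔ MhoSubgroup p P (i + 1) ≤
      MhoOne (p ^ i) (frattini P) := by
  have := hP.isNilpotent
  rw [mhoSubgroup_eq_mhoOne, mhoSubgroup_eq_mhoOne]
  refine sup_le ?_ (mhoOne_le_iff.2 fun x _ => ?_)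
  · exact ((hreg.pow i).commutator_mhoOne_le ⊤).trans (mhoOne_mono commutator_le_frattini)
  · rw [pow_succ', pow_mul]
    exact pow_mem_mhoOne (pow_mem_frattini hP x)

theorem sq_le_relIndex_commutator_mhoSubgroup_sup {i : ℕ}
    (hcyc : ¬ IsCyclic (P ⧸ OmegaSubgroup p P i)) :
    p ^ 2 ≤ (⁅MhoSubgroup p P i, (⊤ : Subgroup P)⁆ ⊔ MhoSubgroup p P (i + 1)).relIndex
      (MhoSubgroup p P i) := by
  have := hP.isNilpotent
  calc p ^ 2 ≤ (frattini P ⊔ OmegaSubgroup p P i).index := sq_le_index_frattini_sup hP hcyc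
    _ = (MhoOne (p ^ i) (frattini P)).relIndex (MhoSubgroup p P i) := by
      rw [mhoSubgroup_eq_mhoOne, hreg.relIndex_mhoOne_top]
    _ ≤ _ := relIndex_le_of_le_left (commutator_mhoSubgroup_sup_le hP hreg i)
      index_ne_zero_of_finite

end OmegaInv

theorem iterated_commutator_of_mho_le_general
    (p : ℕ) (hp : p.Prime) (P : Type) [Group P] [Finite P]
    (hpgrp : IsPGroup p P) (hreg : IsRegularPGroup p P)
    (i : ℕ) (hi : i < muInv p P 2) :
    iterCommutator (MhoSubgroup p P i) (omegaInv p P (i + 1) - 1) ≤ MhoSubgroup p P (i + 1) := by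
  have := Fact.mk hp
  have := hpgrp.isNilpotent
  obtain ⟨j, hij, hj⟩ := exists_lt_le_omegaInv_of_lt_muInv hi
  have hsq := sq_le_relIndex_commutator_mhoSubgroup_sup hpgrp hreg
    (not_isCyclic_quotient_omegaSubgroup hpgrp hreg hij hj)
  have hindex : (MhoSubgroup p P (i + 1)).relIndex (MhoSubgroup p P i) =
      p ^ omegaInv p P (i + 1) :=
    hreg.relIndex_mhoSubgroup_succ.trans (relIndex_omegaSubgroup hpgrp (i + 1))
  have hω : 2 ≤ omegaInv p P (i + 1) := by
    rw [← Nat.pow_le_pow_iff_right hp.one_lt, ← hindex]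
    exact hsq.trans (Subgroup.relIndex_le_of_le_left le_sup_right
      Subgroup.index_ne_zero_of_finite)
  obtain ⟨k, hk⟩ := Nat.exists_eq_add_of_le hω
  rw [show omegaInv p P (i + 1) - 1 = k + 1 by omega]
  exact iterCommutator_succ_le_of_relIndex_le hpgrp (mhoSubgroup_antitone p i.le_succ) hsq
    (hindex.trans_le (by rw [hk]))

/-- Let `P` be a finite regular `p`-group with `ω_1(P) ≥ 2` and
`μ_1(P) = μ_2(P) ≥ 2`.  Then for every `1 ≤ i ≤ μ_1(P) - 1`, the left-normed iterated
commutator `[℧_i(P), P, ..., P]` with `P` repeated `ω_{i+1}(P) - 1` times is contained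
in `℧_{i+1}(P)`. -/
theorem iterated_commutator_of_mho_le
    (p : ℕ) (hp : p.Prime) (P : Type) [Group P] [Finite P]
    (hpgrp : IsPGroup p P)
    (hreg : IsRegularPGroup p P)
    (hω : 2 ≤ omegaInv p P 1)
    (hμeq : muInv p P 1 = muInv p P 2)
    (hμ2 : 2 ≤ muInv p P 1)
    (i : ℕ) (hi1 : 1 ≤ i) (hi2 : i ≤ muInv p P 1 - 1) :
    iterCommutator (MhoSubgroup p P i) (omegaInv p P (i + 1) - 1) ≤ MhoSubgroup p P (i + 1) := by
  exact iterated_commutator_of_mho_le_general p hp P hpgrp hreg i (by omega)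
end

section
/- Let p be a prime and f a positive integer with p ≥ f + 1, let A be an elementary abelian p-group of order p^{f+1} with basis (x_1, ..., x_{f+1}), and let α be the automorphism of A fixing x_{f+1} and sending x_i to x_i x_{i+1} for 1 ≤ i ≤ f. Let n ≥ f + 2, let g generate a cyclic group of order p^{n-f}, and let P = A ⋊ ⟨g⟩ be the semidirect product in which g acts on A by α. Then for every a ∈ A and every integer k, (g^k a)^{p^2} = g^{k p^2}. -/
/-- A tuple `(g 0, ..., g (r-1))` of non-identity elements of `P` is a uniqueness basis
if every element of `P` is uniquely the ordered product `g 0 ^ k 0 * ... * g (r-1) ^ k (r-1)`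
with `0 ≤ k i < orderOf (g i)`. -/
def IsUniquenessBasis {P : Type} [Group P] {r : ℕ} (g : Fin r → P) : Prop :=
  (∀ i, g i ≠ 1) ∧
    ∀ x : P, ∃! k : (i : Fin r) → Fin (orderOf (g i)),
      x = (((List.finRange r).map fun i => g i ^ ((k i : ℕ))).prod)

/-!
Write `β` for the automorphism by which `(g ^ k)⁻¹` acts on `A`. Moving all powers of `g` to the
left, `(g ^ k * a) ^ q = g ^ (k * q) * N a`, where `N = 1 + β + ⋯ + β ^ (q - 1)` in the
endomorphism ring of the additive group of `A`. This ring is killed by `p`, so for `q = p ^ r` the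
norm is `N = (β - 1) ^ (q - 1)`. Since `α - 1` sends each basis element to the next one and the
last one to zero, `(α - 1) ^ (f + 1) = 0`, and then also `(β - 1) ^ (f + 1) = 0` because `β` is a
power of `α`. So `N = 0` as soon as `f + 1 < q`.
-/

section GeometricSum

open Finset Polynomial

theorem geom_sum_X_eq_X_sub_one_pow (R : Type*) [CommRing R] (p : ℕ) [hp : Fact p.Prime]
    [CharP R p] (r : ℕ) : ∑ i ∈ range (p ^ r), (X : R[X]) ^ i = (X - 1) ^ (p ^ r - 1) := by
  have hX : (X - 1 : R[X]).Monic := by simpa only [C_1] using monic_X_sub_C (1 : R)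
  have hq : p ^ r ≠ 0 := pow_ne_zero r hp.out.ne_zero
  rw [← hX.isRegular.right.eq_iff]
  simp only [geom_sum_mul, pow_sub_one_mul hq, sub_pow_char_pow, one_pow]

theorem geom_sum_eq_sub_one_pow {R : Type*} [Ring R] {p : ℕ} (hp : p.Prime) (hR : (p : R) = 0)
    (x : R) (r : ℕ) : ∑ i ∈ range (p ^ r), x ^ i = (x - 1) ^ (p ^ r - 1) := by
  have : Fact p.Prime := ⟨hp⟩
  -- `R` may be trivial, so its characteristic `q` is only known to divide `p`.
  obtain ⟨q, _⟩ := CharP.exists R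
  let _ := ZMod.algebra' R q ((CharP.cast_eq_zero_iff R q p).1 hR)
  simpa using congrArg (aeval x) (geom_sum_X_eq_X_sub_one_pow (ZMod p) p r)

end GeometricSum

section Unipotent

variable {R : Type*} [Ring R] {m : ℕ}

theorem pow_sub_one_pow_eq_zero {x : R} (hx : (x - 1) ^ m = 0) (k : ℕ) : (x ^ k - 1) ^ m = 0 := by
  have hcomm : Commute (x - 1) (∑ i ∈ Finset.range k, x ^ i) :=
    .sum_right _ _ _ fun i _ ↦ ((Commute.refl x).sub_left (.one_left x)).pow_right i
  rw [← mul_geom_sum, hcomm.mul_pow, hx, zero_mul]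

variable {G : Type*} [Group G] {ρ : G →* R} {g : G}

theorem map_inv_sub_one_pow_eq_zero (hg : (ρ g - 1) ^ m = 0) : (ρ g⁻¹ - 1) ^ m = 0 := by
  have hcomm : Commute (ρ g⁻¹) (1 - ρ g) :=
    .sub_right (.one_right _) ((Commute.refl g).inv_left.map ρ)
  have hfactor : ρ g⁻¹ - 1 = ρ g⁻¹ * (1 - ρ g) := by
    rw [mul_sub, mul_one, ← map_mul, inv_mul_cancel, map_one]
  rw [hfactor, hcomm.mul_pow, ← neg_sub, neg_pow, hg, mul_zero, mul_zero]

theorem map_zpow_sub_one_pow_eq_zero (hg : (ρ g - 1) ^ m = 0) (k : ℤ) :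
    (ρ (g ^ k) - 1) ^ m = 0 := by
  have hnat (n : ℕ) : (ρ (g ^ n) - 1) ^ m = 0 := by
    rw [map_pow]
    exact pow_sub_one_pow_eq_zero hg n
  obtain ⟨n, rfl | rfl⟩ := k.eq_nat_or_neg
  · simpa only [zpow_natCast] using hnat n
  · simpa only [zpow_neg, zpow_natCast] using map_inv_sub_one_pow_eq_zero (hnat n)

end Unipotent

section Shift

variable {R V : Type*} [Semiring R] [AddCommMonoid V] [Module R V] {T : Module.End R V} {f : ℕ}
  {v : Fin (f + 1) → V}

theorem pow_sub_apply_eq_zero_of_shift (hlast : T (v (Fin.last f)) = 0)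
    (hshift : ∀ i : Fin f, T (v i.castSucc) = v i.succ) (i : Fin (f + 1)) :
    (T ^ (f + 1 - i)) (v i) = 0 := by
  induction i using Fin.reverseInduction with
  | last => simpa using hlast
  | cast i ih =>
    have hexp : f + 1 - (i.castSucc : ℕ) = f + 1 - (i.succ : ℕ) + 1 := by
      simp only [Fin.val_castSucc, Fin.val_succ]
      lia
    rw [hexp, pow_succ, Module.End.mul_apply, hshift, ih]

theorem pow_eq_zero_of_shift (hv : Submodule.span R (Set.range v) = ⊤)
    (hlast : T (v (Fin.last f)) = 0) (hshift : ∀ i : Fin f, T (v i.castSucc) = v i.succ) :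
    T ^ (f + 1) = 0 := by
  refine LinearMap.ext_on_range hv fun i ↦ ?_
  rw [← Nat.add_sub_cancel' i.is_lt.le, pow_add, Module.End.mul_apply,
    pow_sub_apply_eq_zero_of_shift hlast hshift, map_zero, LinearMap.zero_apply]

end Shift

theorem IsUniquenessBasis.closure_range_eq_top {P : Type} [Group P] {r : ℕ} {g : Fin r → P}
    (hg : IsUniquenessBasis g) : Subgroup.closure (Set.range g) = ⊤ := by
  refine (Subgroup.eq_top_iff' _).2 fun y ↦ ?_
  obtain ⟨k, rfl, -⟩ := hg.2 y
  refine Subgroup.list_prod_mem _ (List.forall_mem_map.2 fun i _ ↦ ?_)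
  exact Subgroup.pow_mem _ (Subgroup.subset_closure (Set.mem_range_self i)) _

section CommGroup

variable {A : Type*} [CommGroup A]

theorem pow_eq_one_of_closure_eq_top {s : Set A} (hs : Subgroup.closure s = ⊤) {n : ℕ}
    (hn : ∀ y ∈ s, y ^ n = 1) (a : A) : a ^ n = 1 :=
  DFunLike.congr_fun (MonoidHom.eq_of_eqOn_dense hs (f := powMonoidHom n) (g := 1) hn) a

theorem span_int_range_ofMul_eq_top {ι : Type*} {x : ι → A}
    (hx : Subgroup.closure (Set.range x) = ⊤) :
    Submodule.span ℤ (Set.range fun i ↦ Additive.ofMul (x i)) = ⊤ := by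
  rw [← Submodule.toAddSubgroup_inj, Submodule.span_int_eq_addSubgroupClosure]
  have h := Subgroup.toAddSubgroup_closure (Set.range x)
  rw [hx] at h
  exact h.symm

end CommGroup

section Automorphism

open Representation

variable {A : Type*} [CommGroup A] {α : MulAut A}

theorem natCast_moduleEnd_additive_eq_zero {n : ℕ} (hA : ∀ a : A, a ^ n = 1) :
    (n : Module.End ℤ (Additive A)) = 0 :=
  LinearMap.ext fun a ↦ hA a.toMul

theorem ofMulDistribMulAction_sub_one_pow_eq_zero {f : ℕ} {x : Fin (f + 1) → A}
    (hx : Subgroup.closure (Set.range x) = ⊤) (hfix : α (x (Fin.last f)) = x (Fin.last f))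
    (hstep : ∀ i : Fin f, α (x i.castSucc) = x i.castSucc * x i.succ) :
    (ofMulDistribMulAction (MulAut A) A α - 1) ^ (f + 1) = 0 := by
  refine pow_eq_zero_of_shift (span_int_range_ofMul_eq_top hx) ?_ fun i ↦ ?_
  · simp [hfix]
  · simp [hstep]

theorem prod_range_pow_apply_eq_one {p r m : ℕ} (hp : p.Prime) (hA : ∀ a : A, a ^ p = 1)
    (hα : (ofMulDistribMulAction (MulAut A) A α - 1) ^ m = 0) (hm : m < p ^ r) (a : A) :
    ∏ i ∈ Finset.range (p ^ r), (α ^ i) a = 1 := by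
  have hnorm : ∑ i ∈ Finset.range (p ^ r), ofMulDistribMulAction (MulAut A) A α ^ i = 0 := by
    rw [geom_sum_eq_sub_one_pow hp (natCast_moduleEnd_additive_eq_zero hA)]
    exact pow_eq_zero_of_le (Nat.le_sub_one_of_lt hm) hα
  simpa [← map_pow, ← ofMul_prod] using LinearMap.congr_fun hnorm (Additive.ofMul a)

end Automorphism

section SemidirectProduct

open SemidirectProduct Representation

variable {A C : Type*} [CommGroup A] [Group C] {φ : C →* MulAut A}

theorem inr_mul_inl_pow (c : C) (a : A) (n : ℕ) :
    (inr c * inl a : A ⋊[φ] C) ^ n =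
      inr c ^ n * inl (∏ i ∈ Finset.range n, (φ c⁻¹ ^ i) a) := by
  induction n with
  | zero => simp
  | succ n ih =>
    have hmove (b : A) : (inl b * inr c : A ⋊[φ] C) = inr c * inl (φ c⁻¹ b) := by
      simp only [map_inv, inl_aut_inv, mul_assoc, mul_inv_cancel_left]
    rw [pow_succ, ih, mul_assoc, ← mul_assoc (inl _), hmove, mul_assoc, ← map_mul, ← mul_assoc,
      ← pow_succ, Finset.prod_range_succ', map_prod]
    simp [pow_succ']

theorem inr_mul_inl_pow_prime_pow {p r m : ℕ} (hp : p.Prime) (hA : ∀ a : A, a ^ p = 1) {c : C}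
    (hc : (ofMulDistribMulAction (MulAut A) A (φ c) - 1) ^ m = 0) (hm : m < p ^ r) (a : A) :
    (inr c * inl a : A ⋊[φ] C) ^ p ^ r = inr c ^ p ^ r := by
  have hinv : (ofMulDistribMulAction (MulAut A) A (φ c⁻¹) - 1) ^ m = 0 := by
    rw [map_inv]
    exact map_inv_sub_one_pow_eq_zero hc
  rw [inr_mul_inl_pow, prod_range_pow_apply_eq_one hp hA hinv hm, map_one, mul_one]

theorem semidirect_power_p_squared_general {p f r : ℕ} (hp : p.Prime) (hr : f + 1 < p ^ r)
    {x : Fin (f + 1) → A} (hx : Subgroup.closure (Set.range x) = ⊤) (hpow : ∀ i, x i ^ p = 1)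
    {g : C} (hfix : φ g (x (Fin.last f)) = x (Fin.last f))
    (hstep : ∀ i : Fin f, φ g (x i.castSucc) = x i.castSucc * x i.succ) (a : A) (k : ℤ) :
    (inr g ^ k * inl a : A ⋊[φ] C) ^ p ^ r = inr g ^ (k * (p : ℤ) ^ r) := by
  have hA : ∀ a : A, a ^ p = 1 := pow_eq_one_of_closure_eq_top hx (Set.forall_mem_range.2 hpow)
  have hunipotent : (ofMulDistribMulAction (MulAut A) A (φ (g ^ k)) - 1) ^ (f + 1) = 0 := by
    rw [map_zpow]
    exact map_zpow_sub_one_pow_eq_zero (ofMulDistribMulAction_sub_one_pow_eq_zero hx hfix hstep) k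
  rw [← map_zpow, inr_mul_inl_pow_prime_pow hp hA hunipotent hr, map_zpow, zpow_mul, ← Nat.cast_pow,
    zpow_natCast]

end SemidirectProduct

/-- Let `p` be a prime and `f ≥ 1` with `p ≥ f + 1`.  Let `A` be an
elementary abelian `p`-group of order `p ^ (f+1)` with basis `(x_1, ..., x_{f+1})`, and let
`α` be the automorphism of `A` fixing `x_{f+1}` and sending `x_i ↦ x_i * x_{i+1}` for
`1 ≤ i ≤ f`.  Let `n ≥ f + 2`, let `g` generate a cyclic group of order `p ^ (n-f)`
(here `Multiplicative (ZMod (p^(n-f)))` with generator `ofAdd 1`), and let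
`P = A ⋊ ⟨g⟩` be the semidirect product in which `g` acts by `α`.  Then for every
`a ∈ A` and `k : ℤ`, `(g^k * a) ^ (p^2) = g ^ (k * p^2)`. -/
theorem semidirect_power_p_squared
    (p f n : ℕ) (hp : p.Prime) (hf : 1 ≤ f) (hpf : f + 1 ≤ p) (hn : f + 2 ≤ n)
    (A : Type) [CommGroup A] [Finite A]
    (hcard : Nat.card A = p ^ (f + 1))
    (x : Fin (f + 1) → A)
    (hords : ∀ i, orderOf (x i) = p)
    (hbasis : IsUniquenessBasis x)
    (α : MulAut A)
    (hfix : α (x (Fin.last f)) = x (Fin.last f))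
    (hstep : ∀ i : Fin f, α (x i.castSucc) = x i.castSucc * x i.succ)
    (φ : Multiplicative (ZMod (p ^ (n - f))) →* MulAut A)
    (hφ : φ (Multiplicative.ofAdd 1) = α)
    (a : A) (k : ℤ) :
    ((SemidirectProduct.inr (Multiplicative.ofAdd (1 : ZMod (p ^ (n - f)))) :
          A ⋊[φ] Multiplicative (ZMod (p ^ (n - f)))) ^ k *
        SemidirectProduct.inl a) ^ (p ^ 2) =
      (SemidirectProduct.inr (Multiplicative.ofAdd (1 : ZMod (p ^ (n - f)))) :
          A ⋊[φ] Multiplicative (ZMod (p ^ (n - f)))) ^ (k * (p : ℤ) ^ 2) := by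
  subst hφ
  exact semidirect_power_p_squared_general hp (hpf.trans_lt (lt_self_pow₀ hp.one_lt one_lt_two))
    hbasis.closure_range_eq_top (fun i ↦ hords i ▸ pow_orderOf_eq_one (x i)) hfix hstep a k
end

section
/- Let p be a prime and f a positive integer with p ≥ f + 1. Then for every integer n ≥ f + 2 there exists a finite p-group of order p^n with coexponent f whose nilpotency class is exactly f + 1. -/
/-!
Let `C = ⟨t⟩` be cyclic of order `p ^ e` with `e = n - f ≥ 2`, and let `t` act on
`V = 𝔽_p[x] / (x ^ (f + 1))` as multiplication by `1 + x`; this is legitimate because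
`(1 + x) ^ p = 1 + x ^ p = 1`, as `f + 1 ≤ p`. Commutation with `t` is multiplication by `x` on `V`,
so the `j`-th term of the lower central series of `V ⋊ C` is `x ^ j V` for `j ≥ 1`, and `V ⋊ C` has
class `f + 1` and order `p ^ (f + 1 + e)`, one factor `p` too many.

Both `x ^ f` and `t ^ p ^ (e - 1)` are central of order `p`. Killing their product removes this
factor. The subgroup killed meets `V` and `C` trivially, so `x ^ f` survives, keeping the class, and
`t` keeps its order `p ^ e`. This is the exponent: a `p`-th power in `V ⋊ C` acts trivially on `V`,
hence its own `p ^ (e - 1)`-th power is computed componentwise.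
-/

open scoped commutatorElement
open SemidirectProduct Subgroup

theorem normal_zpowers_of_mem_center {G : Type*} [Group G] {z : G} (hz : z ∈ center G) :
    (zpowers z).Normal where
  conj_mem y hy g := by rwa [mem_center_iff.1 (zpowers_le.2 hz hy) g, mul_inv_cancel_right]

theorem map_pow_eq_one_of_generator {G H : Type*} [Group G] [Group H] {t : G}
    (ht : ∀ g, g ∈ zpowers t) {f : G →* H} {m : ℕ} (hm : f t ^ m = 1) (g : G) : f g ^ m = 1 := by
  obtain ⟨i, rfl⟩ := ht g
  rw [map_zpow, ← zpow_natCast, zpow_comm, zpow_natCast, hm, one_zpow]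

section Quotient

variable {G : Type*} [Group G] (Z : Subgroup G) [Z.Normal]

theorem lowerCentralSeries_quotient_eq_bot_iff (j : ℕ) :
    (⊤ : Subgroup (G ⧸ Z)).lowerCentralSeries j = ⊥ ↔
      (⊤ : Subgroup G).lowerCentralSeries j ≤ Z := by
  rw [← map_top_of_surjective _ (QuotientGroup.mk'_surjective Z), ← map_lowerCentralSeries,
    Subgroup.map_eq_bot_iff, QuotientGroup.ker_mk']

variable {Z}

theorem orderOf_quotient_mk_of_disjoint {g : G} (hg : Disjoint (zpowers g) Z) :
    orderOf (g : G ⧸ Z) = orderOf g := by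
  refine orderOf_eq_orderOf_iff.2 fun k => ?_
  rw [← QuotientGroup.mk_pow, QuotientGroup.eq_one_iff]
  exact ⟨disjoint_def.1 hg (npow_mem_zpowers g k), fun h => h ▸ one_mem Z⟩

theorem exponent_quotient_eq_orderOf {g : G} (hg : Disjoint (zpowers g) Z)
    (hexp : ∀ h : G, h ^ orderOf g = 1) : Monoid.exponent (G ⧸ Z) = orderOf g := by
  refine Nat.dvd_antisymm (Monoid.exponent_dvd_of_forall_pow_eq_one fun q => ?_) ?_
  · obtain ⟨h, rfl⟩ := QuotientGroup.mk_surjective q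
    rw [← QuotientGroup.mk_pow, hexp, QuotientGroup.mk_one]
  · rw [← orderOf_quotient_mk_of_disjoint hg]
    exact Monoid.order_dvd_exponent _

end Quotient

section SemidirectProduct

variable {N G : Type*} [Group N] [Group G] {φ : G →* MulAut N} {n : N} {g : G}

theorem semidirectProduct_mk_zpow (h : φ g n = n) (i : ℤ) :
    (⟨n, g⟩ : N ⋊[φ] G) ^ i = ⟨n ^ i, g ^ i⟩ := by
  have hcomm : Commute (inl n : N ⋊[φ] G) (inr g) := by ext <;> simp [h]
  rw [mk_eq_inl_mul_inr, hcomm.mul_zpow, ← map_zpow, ← map_zpow, ← mk_eq_inl_mul_inr]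

theorem orderOf_semidirectProduct_mk (h : φ g n = n) :
    orderOf (⟨n, g⟩ : N ⋊[φ] G) = (orderOf n).lcm (orderOf g) := by
  refine (orderOf_eq_orderOf_iff.2 fun k => ?_).trans (Prod.orderOf (n, g))
  rw [← zpow_natCast, semidirectProduct_mk_zpow h, SemidirectProduct.ext_iff, Prod.ext_iff]
  simp

theorem disjoint_zpowers_mk_range_inl (h : φ g n = n) (hdvd : orderOf n ∣ orderOf g) :
    Disjoint (zpowers (⟨n, g⟩ : N ⋊[φ] G)) inl.range := by
  refine disjoint_def.2 ?_
  rintro _ ⟨i, rfl⟩ ⟨m, hm⟩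
  simp only [semidirectProduct_mk_zpow h] at hm ⊢
  have hg : g ^ i = 1 := (congrArg right hm).symm
  have hn : n ^ i = 1 := orderOf_dvd_iff_zpow_eq_one.1
    ((Int.natCast_dvd_natCast.2 hdvd).trans (orderOf_dvd_iff_zpow_eq_one.2 hg))
  rw [hn, hg]; rfl

theorem disjoint_zpowers_mk_range_inr (h : φ g n = n) (hdvd : orderOf g ∣ orderOf n) :
    Disjoint (zpowers (⟨n, g⟩ : N ⋊[φ] G)) inr.range := by
  refine disjoint_def.2 ?_
  rintro _ ⟨i, rfl⟩ ⟨m, hm⟩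
  simp only [semidirectProduct_mk_zpow h] at hm ⊢
  have hn : n ^ i = 1 := (congrArg left hm).symm
  have hg : g ^ i = 1 := orderOf_dvd_iff_zpow_eq_one.1
    ((Int.natCast_dvd_natCast.2 hdvd).trans (orderOf_dvd_iff_zpow_eq_one.2 hn))
  rw [hn, hg]; rfl

theorem semidirectProduct_pow_mul_eq_one {a b : ℕ} (hφ : ∀ g, φ g ^ a = 1) (hN : ∀ n : N, n ^ b = 1)
    (hG : ∀ g : G, g ^ (a * b) = 1) (x : N ⋊[φ] G) : x ^ (a * b) = 1 := by
  have hright : (x ^ a).right = x.right ^ a := map_pow rightHom x a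
  have hfix : φ (x ^ a).right (x ^ a).left = (x ^ a).left := by
    rw [hright, map_pow, hφ, MulAut.one_apply]
  rw [pow_mul, ← zpow_natCast, semidirectProduct_mk_zpow hfix, zpow_natCast, zpow_natCast, hN,
    hright, ← pow_mul, hG]
  rfl

end SemidirectProduct

section CommSemidirectProduct

variable {N G : Type*} [CommGroup N] [CommGroup G] {φ : G →* MulAut N}

theorem semidirectProduct_commutator (x y : N ⋊[φ] G) :
    ⁅x, y⁆ = inl ((φ x.right y.left / y.left) / (φ y.right x.left / x.left)) := by
  rw [commutatorElement_def, mul_inv_eq_iff_eq_mul, mul_inv_eq_iff_eq_mul]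
  ext
  · simp only [mul_left, mul_right, left_inl, right_inl, one_mul, map_one, MulAut.one_apply]
    rw [div_div_div_eq, mul_assoc, div_mul_cancel, mul_comm]
  · simp [-map_div, mul_comm]

theorem semidirectProduct_mk_mem_center {n : N} {g : G} (hn : ∀ h, φ h n = n) (hg : φ g = 1) :
    (⟨n, g⟩ : N ⋊[φ] G) ∈ center (N ⋊[φ] G) := by
  refine mem_center_iff.2 fun x => commutatorElement_eq_one_iff_mul_comm.1 ?_
  simp [semidirectProduct_commutator, hn, hg]

theorem lowerCentralSeries_succ_le_map_inl {K : ℕ → Subgroup N} (hK₀ : K 0 = ⊤)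
    (hK : ∀ j, ∀ n ∈ K j, ∀ g, φ g n / n ∈ K (j + 1)) (j : ℕ) :
    (⊤ : Subgroup (N ⋊[φ] G)).lowerCentralSeries (j + 1) ≤ (K (j + 1)).map inl := by
  induction j with
  | zero =>
    have hK₁ (n : N) (g : G) : φ g n / n ∈ K 1 := hK 0 n (by simp [hK₀]) g
    refine commutator_le.2 fun x _ y _ => ?_
    rw [semidirectProduct_commutator]
    exact mem_map_of_mem inl (div_mem (hK₁ _ _) (hK₁ _ _))
  | succ j ih =>
    refine commutator_le.2 fun x hx y _ => ?_
    obtain ⟨n, hn, rfl⟩ := ih hx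
    rw [semidirectProduct_commutator]
    have hone : φ (inl n : N ⋊[φ] G).right y.left / y.left ∈ K (j + 1 + 1) := by simp
    exact mem_map_of_mem inl (div_mem hone (hK _ n hn _))

theorem inl_mem_lowerCentralSeries {a : ℕ → N} {g : G} (ha : ∀ j, a (j + 1) = φ g (a j) / a j)
    (j : ℕ) : inl (a j) ∈ (⊤ : Subgroup (N ⋊[φ] G)).lowerCentralSeries j := by
  induction j with
  | zero => exact mem_top _
  | succ j ih =>
    have hcomm : inl (a (j + 1)) = ⁅(inr g : N ⋊[φ] G), (inl (a j) : N ⋊[φ] G)⁆ := by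
      simp [semidirectProduct_commutator, ha]
    rw [hcomm, Subgroup.lowerCentralSeries_succ, commutator_comm]
    exact commutator_mem_commutator (mem_top _) ih

end CommSemidirectProduct

section Amalgam

variable {N G : Type*} [CommGroup N] [CommGroup G]

/-- The quotient of `N ⋊[φ] G` by the relation `n * g = 1`. It is meant for `n` fixed by `G`, `g`
acting trivially and `n`, `g` of equal order: it then amalgamates the central cyclic subgroups
generated by `n⁻¹` and `g`. -/
abbrev SemidirectAmalgam (φ : G →* MulAut N) (n : N) (g : G) : Type _ :=
  (N ⋊[φ] G) ⧸ normalClosure {(⟨n, g⟩ : N ⋊[φ] G)}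

variable {φ : G →* MulAut N} {n : N} {g : G}

theorem normalClosure_mk_eq_zpowers (hn : ∀ h, φ h n = n) (hg : φ g = 1) :
    normalClosure {(⟨n, g⟩ : N ⋊[φ] G)} = zpowers ⟨n, g⟩ := by
  have := normal_zpowers_of_mem_center (semidirectProduct_mk_mem_center hn hg)
  exact le_antisymm (normalClosure_le_normal (by simp))
    (zpowers_le.2 (subset_normalClosure rfl))

theorem natCard_semidirectAmalgam_mul (hn : ∀ h, φ h n = n) (hg : φ g = 1)
    (hord : orderOf n = orderOf g) :
    Nat.card (SemidirectAmalgam φ n g) * orderOf g = Nat.card N * Nat.card G := by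
  have hcard : Nat.card (normalClosure {(⟨n, g⟩ : N ⋊[φ] G)}) = orderOf g := by
    rw [normalClosure_mk_eq_zpowers hn hg, Nat.card_zpowers, orderOf_semidirectProduct_mk (hn g),
      hord, Nat.lcm_self]
  rw [← SemidirectProduct.card (φ := φ), card_eq_card_quotient_mul_card_subgroup
    (normalClosure {(⟨n, g⟩ : N ⋊[φ] G)}), hcard]

theorem exponent_semidirectAmalgam (hn : ∀ h, φ h n = n) (hg : φ g = 1)
    (hord : orderOf n = orderOf g) {t : G} (ht : ∀ x : N ⋊[φ] G, x ^ orderOf t = 1) :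
    Monoid.exponent (SemidirectAmalgam φ n g) = orderOf t := by
  have ht' : orderOf (inr t : N ⋊[φ] G) = orderOf t := orderOf_injective inr inr_injective t
  have hdisj : Disjoint (zpowers (inr t)) (normalClosure {(⟨n, g⟩ : N ⋊[φ] G)}) := by
    rw [normalClosure_mk_eq_zpowers hn hg]
    exact (disjoint_zpowers_mk_range_inr (hn g) hord.symm.dvd).symm.mono_left
      (zpowers_le.2 (MonoidHom.mem_range.2 ⟨t, rfl⟩))
  rw [← ht'] at ht ⊢
  exact exponent_quotient_eq_orderOf hdisj ht

theorem lowerCentralSeries_semidirectAmalgam_ne_bot (hn : ∀ h, φ h n = n) (hg : φ g = 1)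
    (hord : orderOf n = orderOf g) {m : N} (hm : m ≠ 1) {j : ℕ}
    (hmem : inl m ∈ (⊤ : Subgroup (N ⋊[φ] G)).lowerCentralSeries j) :
    (⊤ : Subgroup (SemidirectAmalgam φ n g)).lowerCentralSeries j ≠ ⊥ := by
  rw [Ne, lowerCentralSeries_quotient_eq_bot_iff, normalClosure_mk_eq_zpowers hn hg]
  intro hle
  have hone : (inl m : N ⋊[φ] G) = 1 :=
    disjoint_def.1 (disjoint_zpowers_mk_range_inl (hn g) hord.dvd) (hle hmem) ⟨m, rfl⟩
  exact hm (inl_injective (hone.trans (map_one inl).symm))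

end Amalgam

section Scaling

variable {R C : Type*} [CommRing R] [CommGroup C] (χ : C →* Rˣ)

/-- The action of `C` on the additive group of `R` in which `c` multiplies by `χ c`. The additive
group is written multiplicatively, so that semidirect products can be formed. -/
def scalingAction : C →* MulAut (Multiplicative R) :=
  (MulAutMultiplicative R).symm.toMonoidHom.comp ((DistribMulAction.toAddAut Rˣ R).comp χ)

theorem scalingAction_ofAdd (c : C) (r : R) :
    scalingAction χ c (.ofAdd r) = .ofAdd ((χ c : R) * r) := rfl

theorem scalingAction_div (c : C) (r : R) :
    scalingAction χ c (.ofAdd r) / .ofAdd r = .ofAdd (((χ c : R) - 1) * r) := by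
  rw [scalingAction_ofAdd, ← ofAdd_sub, sub_one_mul]

theorem scalingAction_eq_one {χ : C →* Rˣ} {c : C} (hc : χ c = 1) : scalingAction χ c = 1 := by
  rw [scalingAction, MonoidHom.comp_apply, MonoidHom.comp_apply, hc, map_one, map_one]

variable {χ} {t : C} {x : R}

theorem sub_one_mem_of_generator (ht : ∀ c, c ∈ zpowers t) {I : Ideal R} (hI : (χ t : R) - 1 ∈ I)
    (c : C) : (χ c : R) - 1 ∈ I := by
  let ψ : C →* (R ⧸ I)ˣ := (Units.map (Ideal.Quotient.mk I).toMonoidHom).comp χ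
  have hψt : ψ t = 1 := Units.ext (Ideal.Quotient.eq.2 hI)
  have hψ : ψ = 1 := (MonoidHom.eq_iff_eq_on_generator ht ψ 1).2 hψt
  exact Ideal.Quotient.eq.1 (congrArg Units.val (DFunLike.congr_fun hψ c))

theorem dvd_sub_one_of_generator (ht : ∀ c, c ∈ zpowers t) (hχ : (χ t : R) = 1 + x) (c : C) :
    x ∣ (χ c : R) - 1 :=
  Ideal.mem_span_singleton.1 <| sub_one_mem_of_generator ht
    (by rw [hχ, add_sub_cancel_left]; exact Ideal.mem_span_singleton_self x) c

theorem scalingAction_ofAdd_eq_self (ht : ∀ c, c ∈ zpowers t) (hχ : (χ t : R) = 1 + x) {r : R}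
    (hr : x * r = 0) (c : C) : scalingAction χ c (.ofAdd r) = .ofAdd r := by
  obtain ⟨y, hy⟩ := dvd_sub_one_of_generator ht hχ c
  rw [← div_eq_one, scalingAction_div, hy, mul_right_comm, hr, zero_mul, ofAdd_zero]

theorem lowerCentralSeries_scaling_eq_bot (ht : ∀ c, c ∈ zpowers t) (hχ : (χ t : R) = 1 + x)
    {j : ℕ} (hx : x ^ (j + 1) = 0) :
    (⊤ : Subgroup (Multiplicative R ⋊[scalingAction χ] C)).lowerCentralSeries (j + 1) = ⊥ := by
  let K (i : ℕ) : Subgroup (Multiplicative R) := (Ideal.span {x ^ i}).toAddSubgroup.toSubgroup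
  have hK₀ : K 0 = ⊤ := by simp [K]
  have hK (i : ℕ) (r : Multiplicative R) (hr : r ∈ K i) (c : C) :
      scalingAction χ c r / r ∈ K (i + 1) := by
    have hr' : x ^ i ∣ r.toAdd := Ideal.mem_span_singleton (α := R).1 hr
    have hdvd : x ^ (i + 1) ∣ ((χ c : R) - 1) * r.toAdd :=
      pow_succ' x i ▸ mul_dvd_mul (dvd_sub_one_of_generator ht hχ c) hr'
    rw [← ofAdd_toAdd r, scalingAction_div]
    exact Ideal.mem_span_singleton (α := R).2 hdvd
  have hKj : K (j + 1) = ⊥ := by simp [K, hx]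
  simpa [hKj] using lowerCentralSeries_succ_le_map_inl hK₀ hK j

theorem inl_pow_mem_lowerCentralSeries (hχ : (χ t : R) = 1 + x) (j : ℕ) :
    inl (Multiplicative.ofAdd (x ^ j)) ∈
      (⊤ : Subgroup (Multiplicative R ⋊[scalingAction χ] C)).lowerCentralSeries j :=
  inl_mem_lowerCentralSeries (a := fun i => Multiplicative.ofAdd (x ^ i))
    (fun i => by rw [scalingAction_div, hχ, add_sub_cancel_left, pow_succ']) j

end Scaling

section CharP

variable {R C : Type*} [CommRing R] [CommGroup C] {p : ℕ} [CharP R p] {x : R}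

theorem scaling_pow_eq_one {χ : C →* Rˣ} {k : ℕ} (hχ : ∀ c, χ c ^ p = 1)
    (hC : ∀ c : C, c ^ p ^ (k + 2) = 1) (g : Multiplicative R ⋊[scalingAction χ] C) :
    g ^ p ^ (k + 2) = 1 := by
  have hR (r : Multiplicative R) : r ^ p ^ (k + 1) = 1 := by
    change (p ^ (k + 1)) • r.toAdd = 0
    rw [nsmul_eq_mul, Nat.cast_pow, CharP.cast_eq_zero, zero_pow k.succ_ne_zero, zero_mul]
  have hφ (c : C) : scalingAction χ c ^ p = 1 := by
    rw [← map_pow, scalingAction_eq_one (by rw [map_pow, hχ])]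
  rw [pow_succ'] at hC ⊢
  exact semidirectProduct_pow_mul_eq_one hφ hR hC g

variable [Fact p.Prime]

theorem orderOf_ofAdd_eq_char {r : R} (hr : r ≠ 0) : orderOf (Multiplicative.ofAdd r) = p :=
  orderOf_eq_prime (by rw [← ofAdd_nsmul, nsmul_eq_mul, CharP.cast_eq_zero, zero_mul, ofAdd_zero])
    (by simpa)

theorem exists_unit_pow_char_eq_one (hx : x ^ p = 0) : ∃ u : Rˣ, (u : R) = 1 + x ∧ u ^ p = 1 := by
  obtain ⟨u, hu⟩ := IsNilpotent.isUnit_one_add ⟨p, hx⟩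
  refine ⟨u, hu, Units.ext ?_⟩
  rw [Units.val_pow_eq_pow_val, hu, add_pow_char, one_pow, hx, add_zero, Units.val_one]

theorem exists_character_eq_one_add {t : C} (ht : ∀ c, c ∈ zpowers t) (hp : p ∣ orderOf t)
    (hx : x ^ p = 0) : ∃ χ : C →* Rˣ, (χ t : R) = 1 + x ∧ ∀ c, χ c ^ p = 1 := by
  obtain ⟨u, hu, hup⟩ := exists_unit_pow_char_eq_one hx
  let χ := monoidHomOfForallMemZpowers ht ((orderOf_dvd_of_pow_eq_one hup).trans hp)
  have hχt : χ t = u := monoidHomOfForallMemZpowers_apply_gen ht _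
  exact ⟨χ, hχt ▸ hu, map_pow_eq_one_of_generator ht (hχt ▸ hup)⟩

end CharP

theorem orderOf_pow_prime_pow {G : Type*} [Monoid G] {t : G} {p k : ℕ} (hp : p.Prime)
    (ht : orderOf t = p ^ (k + 1)) : orderOf (t ^ p ^ k) = p := by
  have hpk : p ^ k ≠ 0 := pow_ne_zero k hp.ne_zero
  rw [pow_succ] at ht
  rw [orderOf_pow_of_dvd hpk (ht ▸ dvd_mul_right _ _), ht, Nat.mul_div_cancel_left p hpk.bot_lt]

universe u v

theorem exists_group_with_class_succ_of_nilpotent {R : Type u} {C : Type v} [CommRing R]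
    [CommGroup C] {p : ℕ} [Fact p.Prime] [CharP R p] {x : R} {f k : ℕ} {t : C} (hfp : f + 1 ≤ p)
    (hx : x ^ (f + 1) = 0) (hxf : x ^ f ≠ 0) (ht : ∀ c, c ∈ zpowers t)
    (hord : orderOf t = p ^ (k + 2)) :
    ∃ (P : Type max u v) (_ : Group P),
      Nat.card P * p = Nat.card R * p ^ (k + 2) ∧
      Monoid.exponent P = p ^ (k + 2) ∧
      (⊤ : Subgroup P).lowerCentralSeries (f + 1) = ⊥ ∧
      (⊤ : Subgroup P).lowerCentralSeries f ≠ ⊥ := by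
  have hC : Nat.card C = p ^ (k + 2) := (orderOf_eq_card_of_forall_mem_zpowers ht).symm.trans hord
  have hpt : p ∣ orderOf t := hord ▸ dvd_pow_self p (Nat.succ_ne_zero _)
  obtain ⟨χ, hχt, hχ⟩ := exists_character_eq_one_add ht hpt (pow_eq_zero_of_le hfp hx)
  let n : Multiplicative R := .ofAdd (x ^ f)
  let g : C := t ^ p ^ (k + 1)
  have hn : ∀ c, scalingAction χ c n = n :=
    scalingAction_ofAdd_eq_self ht hχt (by rw [← pow_succ', hx])
  have hg : scalingAction χ g = 1 :=
    scalingAction_eq_one (by rw [map_pow, pow_succ', pow_mul, hχ, one_pow])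
  have hgp : orderOf g = p := orderOf_pow_prime_pow Fact.out hord
  have hng : orderOf n = orderOf g := (orderOf_ofAdd_eq_char hxf).trans hgp.symm
  have hexp (y : Multiplicative R ⋊[scalingAction χ] C) : y ^ orderOf t = 1 :=
    hord ▸ scaling_pow_eq_one hχ (fun c => hC ▸ pow_card_eq_one') y
  refine ⟨SemidirectAmalgam (scalingAction χ) n g, inferInstance, ?_, ?_, ?_, ?_⟩
  · have hcard := natCard_semidirectAmalgam_mul hn hg hng
    rwa [hgp, hC] at hcard
  · rw [exponent_semidirectAmalgam hn hg hng hexp, hord]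
  · rw [lowerCentralSeries_quotient_eq_bot_iff, lowerCentralSeries_scaling_eq_bot ht hχt hx]
    exact bot_le
  · exact lowerCentralSeries_semidirectAmalgam_ne_bot hn hg hng (m := n) hxf
      (inl_pow_mem_lowerCentralSeries hχt f)

section TruncatedPolynomial
open Polynomial

/-- The truncated polynomial ring `K[X] / (X ^ (f + 1))`. -/
abbrev TruncatedPolynomial (K : Type*) [CommRing K] (f : ℕ) : Type _ :=
  AdjoinRoot (X ^ (f + 1) : K[X])

namespace TruncatedPolynomial

variable (K : Type*) [CommRing K] (f : ℕ)

/-- The power basis `1, X, …, X ^ f`. -/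
noncomputable def powerBasis : PowerBasis K (TruncatedPolynomial K f) :=
  AdjoinRoot.powerBasis' (monic_X_pow (f + 1))

variable [Nontrivial K]

theorem natCard : Nat.card (TruncatedPolynomial K f) = Nat.card K ^ (f + 1) := by
  have hdim : (powerBasis K f).dim = f + 1 := natDegree_X_pow (f + 1)
  rw [Nat.card_congr (powerBasis K f).basis.equivFun.toEquiv, Nat.card_fun, Nat.card_fin, hdim]

variable {K f} in
theorem root_pow_eq_zero_iff {j : ℕ} :
    (AdjoinRoot.root _ : TruncatedPolynomial K f) ^ j = 0 ↔ f < j := by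
  rw [← AdjoinRoot.mk_X, ← map_pow, AdjoinRoot.mk_eq_zero]
  refine ⟨fun h => ?_, pow_dvd_pow X⟩
  by_contra! hj
  exact one_ne_zero ((coeff_X_pow_self j).symm.trans (X_pow_dvd_iff.1 h j (Nat.lt_succ_of_le hj)))

theorem charP (p : ℕ) [CharP K p] : CharP (TruncatedPolynomial K f) p := by
  have := Module.Free.of_basis (powerBasis K f).basis
  have : Nontrivial (TruncatedPolynomial K f) :=
    ⟨_, _, root_pow_eq_zero_iff.not.2 f.lt_irrefl⟩
  exact charP_of_injective_algebraMap (FaithfulSMul.algebraMap_injective K _) p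

end TruncatedPolynomial
end TruncatedPolynomial

/-- Let `p` be a prime and `f ≥ 1` with `p ≥ f + 1`.  Then for every
`n ≥ f + 2` there exists a finite group of order `p ^ n` with coexponent `f`
(i.e. exponent `p ^ e` with `n - e = f`) whose nilpotency class is exactly `f + 1`
(the lower central series reaches `⊥` at step `f + 1` but not at step `f`). -/
theorem exists_group_of_coexponent_with_class_succ
    (p f : ℕ) (hp : p.Prime) (hf : 1 ≤ f) (hpf : f + 1 ≤ p)
    (n : ℕ) (hn : f + 2 ≤ n) :
    ∃ (P : Type) (inst : Group P),
      letI := inst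
      Finite P ∧
      Nat.card P = p ^ n ∧
      (∃ e : ℕ, Monoid.exponent P = p ^ e ∧ n - e = f) ∧
      (⊤ : Subgroup P).lowerCentralSeries (f + 1) = ⊥ ∧
      (⊤ : Subgroup P).lowerCentralSeries f ≠ ⊥ := by
  have : Fact p.Prime := ⟨hp⟩
  obtain ⟨k, rfl⟩ := Nat.exists_eq_add_of_le hn
  have := TruncatedPolynomial.charP (ZMod p) f p
  let x : TruncatedPolynomial (ZMod p) f := AdjoinRoot.root _
  have hx : x ^ (f + 1) = 0 := TruncatedPolynomial.root_pow_eq_zero_iff.2 f.lt_succ_self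
  have hxf : x ^ f ≠ 0 := TruncatedPolynomial.root_pow_eq_zero_iff.not.2 f.lt_irrefl
  obtain ⟨t, ht⟩ := IsCyclic.exists_generator (α := Multiplicative (ZMod (p ^ (k + 2))))
  have hord : orderOf t = p ^ (k + 2) :=
    (orderOf_eq_card_of_forall_mem_zpowers ht).trans (Nat.card_zmod _)
  obtain ⟨P, inst, hmul, hexp, hbot, hne⟩ :=
    exists_group_with_class_succ_of_nilpotent hpf hx hxf ht hord
  have hcard : Nat.card P = p ^ (f + 2 + k) := by
    refine Nat.eq_of_mul_eq_mul_right hp.pos ?_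
    rw [hmul, TruncatedPolynomial.natCard, Nat.card_zmod]
    ring
  have hfin : Finite P := Nat.finite_of_card_ne_zero (hcard ▸ pow_ne_zero _ hp.ne_zero)
  exact ⟨P, inst, hfin, hcard, ⟨k + 2, hexp, by omega⟩, hbot, hne⟩
end

section
/- Fix an integer f ≥ 3. For every prime p with p > f + 1, the number of isomorphism classes of Lie rings of order p^n which are nilpotent of nilpotency class less than p and whose underlying abelian group has coexponent f is independent of n for n ≥ 3f; that is, for all n, n' ≥ 3f these counts are equal. -/
/-- The lower central series of a Lie ring, as additive subgroups:
`lieLCS L 0 = L` and `lieLCS L (k+1) = [lieLCS L k, L]`. -/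
def lieLCS (L : Type) [LieRing L] : ℕ → AddSubgroup L
  | 0 => ⊤
  | (k + 1) => AddSubgroup.closure {x : L | ∃ y ∈ lieLCS L k, ∃ z : L, x = ⁅y, z⁆}

/-- A Lie ring is nilpotent if its lower central series reaches `⊥`. -/
def IsNilpotentLieRing (L : Type) [LieRing L] : Prop :=
  ∃ c : ℕ, lieLCS L c = ⊥

/-- The nilpotency class of a Lie ring: the least `c` with `lieLCS L c = ⊥`. -/
noncomputable def lieNilClass (L : Type) [LieRing L] : ℕ :=
  sInf {c : ℕ | lieLCS L c = ⊥}

/-- The addition extracted from a Lie ring structure. -/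
def addOfLieRing (G : Type) (s : LieRing G) : Add G := by letI := s; infer_instance

/-- The bracket extracted from a Lie ring structure. -/
def bracketOfLieRing (G : Type) (s : LieRing G) : Bracket G G := by letI := s; infer_instance

/-- The number of isomorphism classes of Lie rings with `N` elements whose Lie ring
structure satisfies the predicate `Q`; isomorphisms are additive bijections preserving
the bracket. -/
noncomputable def lieClassCount (N : ℕ) (Q : LieRing (Fin N) → Prop) : ℕ :=
  Nat.card (Quot fun s t : {s : LieRing (Fin N) // Q s} =>
    ∃ e : @AddEquiv (Fin N) (Fin N) (addOfLieRing _ s.1) (addOfLieRing _ t.1),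
      ∀ x y : Fin N,
        e (@Bracket.bracket _ _ (bracketOfLieRing _ s.1) x y) =
          @Bracket.bracket _ _ (bracketOfLieRing _ t.1) (e x) (e y))

/-- The number of isomorphism classes of Lie rings of order `p ^ n` which are nilpotent of
nilpotency class less than `p` and whose underlying abelian group has coexponent `f`. -/
noncomputable def PsiLie (p n f : ℕ) : ℕ :=
  lieClassCount (p ^ n) fun s =>
    letI := s
    IsNilpotentLieRing (Fin (p ^ n)) ∧ lieNilClass (Fin (p ^ n)) < p ∧
      ∃ e : ℕ, AddMonoid.exponent (Fin (p ^ n)) = p ^ e ∧ n - e = f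

/-!
Let `L` have order `p ^ n` and exponent `p ^ e`, where `n = e + f` and `e ≥ 2 * f`, and put
`q = p ^ f`, `r = p ^ (e - f)`. Additively `L ≃ ℤ/rq × A` with `qA = 0`. As the bracket is
alternating, at least one of its two arguments may be taken in `A`, so the bracket is
`q`-torsion and is the same thing as a map `L/qL × L/qL → L[q]`. Both `L/qL` and `L[q]` are
isomorphic to `ℤ/q × A`, and because `q ∣ r` the inclusion-induced map `L[q] → L/qL` and the
multiplication by `r : L/qL → L[q]` do not depend on `e` under these isomorphisms. Hence a Lie ring
of exponent `p ^ e` and one of exponent `p ^ e'` can be compared through these data: each Lie ring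
of one kind has a partner of the other kind, and for `e = e'` an isomorphism of the data lifts to
an isomorphism of Lie rings.
-/

section ModTorsion

variable {L L' L'' : Type*} [AddCommGroup L] [AddCommGroup L'] [AddCommGroup L'']
  {q r r' r'' : ℕ}

/-- The quotient `L / qL`. -/
abbrev ModNsmul (L : Type*) [AddCommGroup L] (q : ℕ) : Type _ :=
  L ⧸ (nsmulAddMonoidHom q : L →+ L).range

/-- The `q`-torsion `L[q]`. -/
abbrev NsmulTorsion (L : Type*) [AddCommGroup L] (q : ℕ) : AddSubgroup L :=
  (nsmulAddMonoidHom q : L →+ L).ker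

/-- Isomorphisms `L / qL ≃ L' / qL'` and `L[q] ≃ L'[q]` which are compatible with the maps
`L[q] → L / qL` induced by the inclusion, and with the maps `L / qL → L[q]` given by multiplication
by `r` on `L` and by `r'` on `L'`. That multiplication by `r` takes values in `L[q]` is part of the
condition `exists_torsionEquiv_nsmul`. -/
structure ModTorsionEquiv (q r r' : ℕ) (L L' : Type*) [AddCommGroup L] [AddCommGroup L'] where
  modEquiv : ModNsmul L q ≃+ ModNsmul L' q
  torsionEquiv : NsmulTorsion L q ≃+ NsmulTorsion L' q
  modEquiv_torsion (t : NsmulTorsion L q) : modEquiv (t : L) = (torsionEquiv t : L')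
  exists_torsionEquiv_nsmul {x : L} {x' : L'} (h : modEquiv x = x') :
    ∃ t : NsmulTorsion L q, (t : L) = r • x ∧ (torsionEquiv t : L') = r' • x'

namespace ModTorsionEquiv

/-- `x'` represents the image in `L' / qL'` of the class of `x`. -/
def MapsMod (E : ModTorsionEquiv q r r' L L') (x : L) (x' : L') : Prop :=
  E.modEquiv x = (x' : ModNsmul L' q)

/-- `y` is a `q`-torsion element with image `y'`. -/
def MapsTorsion (E : ModTorsionEquiv q r r' L L') (y : L) (y' : L') : Prop :=
  ∃ t : NsmulTorsion L q, (t : L) = y ∧ (E.torsionEquiv t : L') = y'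

variable {E : ModTorsionEquiv q r r' L L'}

theorem MapsTorsion.mapsMod {y : L} {y' : L'} (h : E.MapsTorsion y y') : E.MapsMod y y' := by
  obtain ⟨t, rfl, rfl⟩ := h
  exact E.modEquiv_torsion t

theorem MapsMod.nsmul {x : L} {x' : L'} (h : E.MapsMod x x') :
    E.MapsTorsion (r • x) (r' • x') :=
  E.exists_torsionEquiv_nsmul h

theorem MapsMod.add {x y : L} {x' y' : L'} (hx : E.MapsMod x x') (hy : E.MapsMod y y') :
    E.MapsMod (x + y) (x' + y') := by
  rw [MapsMod, QuotientAddGroup.mk_add, map_add, hx, hy, QuotientAddGroup.mk_add]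

theorem MapsMod.zsmul {x : L} {x' : L'} (h : E.MapsMod x x') (k : ℤ) :
    E.MapsMod (k • x) (k • x') := by
  rw [MapsMod, QuotientAddGroup.mk_zsmul, map_zsmul, h, QuotientAddGroup.mk_zsmul]

theorem MapsTorsion.zero : E.MapsTorsion 0 0 :=
  ⟨0, rfl, by rw [map_zero, AddSubgroup.coe_zero]⟩

theorem MapsTorsion.add {x y : L} {x' y' : L'} (hx : E.MapsTorsion x x')
    (hy : E.MapsTorsion y y') : E.MapsTorsion (x + y) (x' + y') := by
  obtain ⟨s, rfl, rfl⟩ := hx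
  obtain ⟨t, rfl, rfl⟩ := hy
  exact ⟨s + t, rfl, by rw [map_add, AddSubgroup.coe_add]⟩

theorem MapsTorsion.neg {x : L} {x' : L'} (hx : E.MapsTorsion x x') :
    E.MapsTorsion (-x) (-x') := by
  obtain ⟨t, rfl, rfl⟩ := hx
  exact ⟨-t, rfl, by rw [map_neg, AddSubgroup.coe_neg]⟩

theorem MapsTorsion.right_unique {y : L} {y₁ y₂ : L'} (h₁ : E.MapsTorsion y y₁)
    (h₂ : E.MapsTorsion y y₂) : y₁ = y₂ := by
  obtain ⟨t, rfl, rfl⟩ := h₁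
  obtain ⟨t', ht, rfl⟩ := h₂
  rw [Subtype.ext ht]

theorem MapsTorsion.eq_zero {y : L} (h : E.MapsTorsion y 0) : y = 0 := by
  obtain ⟨t, rfl, ht⟩ := h
  rw [ZeroMemClass.coe_eq_zero, EmbeddingLike.map_eq_zero_iff] at ht
  rw [ht, AddSubgroup.coe_zero]

theorem MapsTorsion.nsmul_eq_zero {y : L} {y' : L'} (h : E.MapsTorsion y y') : q • y = 0 := by
  obtain ⟨t, rfl, -⟩ := h
  exact t.2

variable (E)

theorem exists_mapsMod (x : L) : ∃ x' : L', E.MapsMod x x' := by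
  obtain ⟨x', hx'⟩ := QuotientAddGroup.mk_surjective (E.modEquiv x)
  exact ⟨x', hx'.symm⟩

theorem exists_mapsTorsion {y : L} (hy : q • y = 0) : ∃ y' : L', E.MapsTorsion y y' :=
  ⟨E.torsionEquiv ⟨y, hy⟩, ⟨y, hy⟩, rfl, rfl⟩

theorem nsmul_nsmul_eq_zero (E : ModTorsionEquiv q r r' L L') (x : L) : q • r • x = 0 :=
  have ⟨_, h⟩ := E.exists_mapsMod x
  h.nsmul.nsmul_eq_zero

/-- The inverse isomorphisms. -/
def symm : ModTorsionEquiv q r' r L' L where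
  modEquiv := E.modEquiv.symm
  torsionEquiv := E.torsionEquiv.symm
  modEquiv_torsion t := by
    rw [AddEquiv.symm_apply_eq, E.modEquiv_torsion, AddEquiv.apply_symm_apply]
  exists_torsionEquiv_nsmul h := by
    obtain ⟨t, ht, ht'⟩ := E.exists_torsionEquiv_nsmul (E.modEquiv.symm_apply_eq.1 h).symm
    exact ⟨E.torsionEquiv t, ht', by rw [AddEquiv.symm_apply_apply, ht]⟩

/-- Composition of isomorphisms. -/
def trans (F : ModTorsionEquiv q r' r'' L' L'') : ModTorsionEquiv q r r'' L L'' where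
  modEquiv := E.modEquiv.trans F.modEquiv
  torsionEquiv := E.torsionEquiv.trans F.torsionEquiv
  modEquiv_torsion t := by
    rw [AddEquiv.trans_apply, E.modEquiv_torsion, F.modEquiv_torsion, AddEquiv.trans_apply]
  exists_torsionEquiv_nsmul {x _} h := by
    obtain ⟨x', hx'⟩ := E.exists_mapsMod x
    obtain ⟨t, ht, ht'⟩ := hx'.nsmul
    rw [AddEquiv.trans_apply, hx'] at h
    obtain ⟨t', ht₁, ht₂⟩ := F.exists_torsionEquiv_nsmul h
    obtain rfl : E.torsionEquiv t = t' := Subtype.ext (ht'.trans ht₁.symm)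
    exact ⟨t, ht, ht₂⟩

variable {E}

theorem mapsMod_symm {x : L} {x' : L'} : E.symm.MapsMod x' x ↔ E.MapsMod x x' :=
  E.modEquiv.symm_apply_eq.trans eq_comm

theorem exists_mapsMod_of_trans {F : ModTorsionEquiv q r' r'' L' L''} {x : L} {x'' : L''}
    (h : (E.trans F).MapsMod x x'') : ∃ x', E.MapsMod x x' ∧ F.MapsMod x' x'' := by
  obtain ⟨x', hx'⟩ := E.exists_mapsMod x
  exact ⟨x', hx', (congrArg F.modEquiv hx').symm.trans h⟩

theorem MapsTorsion.symm {y : L} {y' : L'} (h : E.MapsTorsion y y') : E.symm.MapsTorsion y' y := by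
  obtain ⟨t, rfl, rfl⟩ := h
  exact ⟨E.torsionEquiv t, rfl, congrArg _ (E.torsionEquiv.symm_apply_apply t)⟩

theorem MapsTorsion.trans {F : ModTorsionEquiv q r' r'' L' L''} {y : L} {y' : L'} {y'' : L''}
    (h : E.MapsTorsion y y') (h' : F.MapsTorsion y' y'') : (E.trans F).MapsTorsion y y'' := by
  obtain ⟨t, rfl, rfl⟩ := h
  obtain ⟨t', ht, rfl⟩ := h'
  obtain rfl := Subtype.ext ht
  exact ⟨t, rfl, rfl⟩

/-- The isomorphisms induced by an isomorphism of groups killed by `q * r`. -/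
def ofAddEquiv (e : L ≃+ L') (h : ∀ x : L, q • r • x = 0) : ModTorsionEquiv q r r L L' where
  modEquiv := QuotientAddGroup.congr _ _ e <| by
    ext x'
    simp [AddSubgroup.mem_map, e.surjective.exists]
  torsionEquiv := (e.addSubgroupMap _).trans <| AddEquiv.addSubgroupCongr <| by
    ext x'
    exact AddSubgroup.mem_map_equiv.trans (by simp [AddMonoidHom.mem_ker, ← map_nsmul])
  modEquiv_torsion _ := rfl
  exists_torsionEquiv_nsmul {x x'} hx := by
    refine ⟨⟨r • x, h x⟩, rfl, ?_⟩
    obtain ⟨z, hz⟩ := QuotientAddGroup.eq.1 hx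
    obtain rfl : x' = e x + q • z := by
      rw [← sub_eq_iff_eq_add', sub_eq_neg_add]
      exact hz.symm
    have hz' : r • q • z = 0 := by
      obtain ⟨w, rfl⟩ := e.surjective z
      rw [smul_comm, ← map_nsmul, ← map_nsmul, h, map_zero]
    change e (r • x) = _
    rw [smul_add, hz', add_zero, map_nsmul]

theorem mapsTorsion_ofAddEquiv (e : L ≃+ L') (h : ∀ x : L, q • r • x = 0) {y : L}
    (hy : q • y = 0) : (ofAddEquiv e h).MapsTorsion y (e y) :=
  ⟨⟨y, hy⟩, rfl, rfl⟩

end ModTorsionEquiv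

end ModTorsion

section ZModMul

/-- The homomorphism `ℤ / q → ℤ / rq` induced by multiplication by `r`. -/
def zmodMul (r q : ℕ) : ZMod q →+ ZMod (r * q) :=
  ZMod.lift q ⟨zmultiplesHom (ZMod (r * q)) r, by
    rw [zmultiplesHom_apply, natCast_zsmul, nsmul_eq_mul, mul_comm, ← Nat.cast_mul,
      ZMod.natCast_self]⟩

/-- The reduction `ℤ / rq → ℤ / q`. -/
def zmodReduce (r q : ℕ) : ZMod (r * q) →+* ZMod q :=
  ZMod.castHom (dvd_mul_left q r) (ZMod q)

variable {r q : ℕ}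

theorem zmodReduce_surjective : Function.Surjective (zmodReduce r q) :=
  ZMod.castHom_surjective _

theorem zmodMul_intCast (k : ℤ) : zmodMul r q k = ((r * k : ℤ) : ZMod (r * q)) := by
  rw [zmodMul, ZMod.lift_coe]
  simp [mul_comm]

theorem zmodMul_injective (hr : r ≠ 0) : Function.Injective (zmodMul r q) := by
  rw [injective_iff_map_eq_zero]
  intro a ha
  obtain ⟨k, rfl⟩ := ZMod.intCast_surjective a
  rw [zmodMul_intCast, ZMod.intCast_zmod_eq_zero_iff_dvd, Nat.cast_mul] at ha
  exact (ZMod.intCast_zmod_eq_zero_iff_dvd _ _).2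
    (Int.dvd_of_mul_dvd_mul_left (Nat.cast_ne_zero.2 hr) ha)

theorem exists_zmodMul_eq (hq : q ≠ 0) {x : ZMod (r * q)} (hx : q • x = 0) :
    ∃ a, zmodMul r q a = x := by
  obtain ⟨m, rfl⟩ := ZMod.intCast_surjective x
  rw [nsmul_eq_mul, ← Int.cast_natCast, ← Int.cast_mul, ZMod.intCast_zmod_eq_zero_iff_dvd,
    Nat.cast_mul, mul_comm (q : ℤ)] at hx
  obtain ⟨k, rfl⟩ := (mul_dvd_mul_iff_right (Nat.cast_ne_zero.2 hq)).1 hx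
  exact ⟨k, zmodMul_intCast k⟩

theorem zmodMul_zmodReduce (x : ZMod (r * q)) :
    zmodMul r q (zmodReduce r q x) = r • x := by
  obtain ⟨k, rfl⟩ := ZMod.intCast_surjective x
  rw [map_intCast, zmodMul_intCast, nsmul_eq_mul, Int.cast_mul, Int.cast_natCast]

theorem zmodReduce_zmodMul (hqr : q ∣ r) (a : ZMod q) :
    zmodReduce r q (zmodMul r q a) = 0 := by
  obtain ⟨k, rfl⟩ := ZMod.intCast_surjective a
  rw [zmodMul_intCast, map_intCast, ZMod.intCast_zmod_eq_zero_iff_dvd]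
  exact (Int.natCast_dvd_natCast.2 hqr).mul_right k

theorem exists_nsmul_eq_of_zmodReduce_eq_zero {x : ZMod (r * q)}
    (hx : zmodReduce r q x = 0) : ∃ z, q • z = x := by
  obtain ⟨m, rfl⟩ := ZMod.intCast_surjective x
  rw [map_intCast, ZMod.intCast_zmod_eq_zero_iff_dvd] at hx
  obtain ⟨k, rfl⟩ := hx
  exact ⟨k, by rw [nsmul_eq_mul, Int.cast_mul, Int.cast_natCast]⟩

end ZModMul

section Model

variable {q r r' : ℕ} {L L' M N A : Type*} [AddCommGroup L] [AddCommGroup L'] [AddCommGroup M]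
  [AddCommGroup N] [AddCommGroup A]

/-- Groups `M` and `N` playing the roles of `L / qL` and `L[q]`. -/
structure ModTorsionModel (q : ℕ) (L M N : Type*) [AddCommGroup L] [AddCommGroup M]
    [AddCommGroup N] where
  proj : L →+ M
  incl : N →+ L
  proj_surjective : Function.Surjective proj
  ker_proj : proj.ker = (nsmulAddMonoidHom q : L →+ L).range
  incl_injective : Function.Injective incl
  range_incl : incl.range = NsmulTorsion L q

namespace ModTorsionModel

/-- The identification of `L / qL` with its model. -/
noncomputable def modEquiv (F : ModTorsionModel q L M N) : ModNsmul L q ≃+ M :=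
  (QuotientAddGroup.quotientAddEquivOfEq F.ker_proj.symm).trans
    (QuotientAddGroup.quotientKerEquivOfSurjective F.proj F.proj_surjective)

/-- The identification of the model of `L[q]` with `L[q]`. -/
noncomputable def torsionEquiv (F : ModTorsionModel q L M N) : N ≃+ NsmulTorsion L q :=
  (AddMonoidHom.ofInjective F.incl_injective).trans (AddEquiv.addSubgroupCongr F.range_incl)

theorem modEquiv_mk (F : ModTorsionModel q L M N) (x : L) : F.modEquiv (x : L) = F.proj x :=
  rfl

theorem coe_torsionEquiv (F : ModTorsionModel q L M N) (t : N) :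
    (F.torsionEquiv t : L) = F.incl t :=
  rfl

/-- The isomorphisms between `L` and `L'` given by a common model. -/
noncomputable def modTorsionEquiv (F : ModTorsionModel q L M N) (F' : ModTorsionModel q L' M N)
    (h : ∀ t, F.proj (F.incl t) = F'.proj (F'.incl t))
    (h' : ∀ x x', F.proj x = F'.proj x' → ∃ t, F.incl t = r • x ∧ F'.incl t = r' • x') :
    ModTorsionEquiv q r r' L L' where
  modEquiv := F.modEquiv.trans F'.modEquiv.symm
  torsionEquiv := F.torsionEquiv.symm.trans F'.torsionEquiv
  modEquiv_torsion s := by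
    obtain ⟨t, rfl⟩ := F.torsionEquiv.surjective s
    rw [AddEquiv.trans_apply, AddEquiv.symm_apply_eq, AddEquiv.trans_apply,
      AddEquiv.symm_apply_apply, modEquiv_mk, modEquiv_mk, coe_torsionEquiv, coe_torsionEquiv, h]
  exists_torsionEquiv_nsmul {x x'} hx := by
    rw [AddEquiv.trans_apply, AddEquiv.symm_apply_eq, modEquiv_mk, modEquiv_mk] at hx
    obtain ⟨t, ht, ht'⟩ := h' x x' hx
    exact ⟨F.torsionEquiv t, ht, by rw [AddEquiv.trans_apply, AddEquiv.symm_apply_apply, ← ht',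
      coe_torsionEquiv]⟩

/-- The model of `L ≃ ℤ / rq × A` in which `L / qL` and `L[q]` are both `ℤ / q × A`. -/
noncomputable def ofZModProd (hr : r ≠ 0) (hq : q ≠ 0) (hA : ∀ a : A, q • a = 0)
    (ε : L ≃+ ZMod (r * q) × A) : ModTorsionModel q L (ZMod q × A) (ZMod q × A) where
  proj := ((zmodReduce r q).toAddMonoidHom.prodMap (AddMonoidHom.id A)).comp ε.toAddMonoidHom
  incl := ε.symm.toAddMonoidHom.comp ((zmodMul r q).prodMap (AddMonoidHom.id A))
  proj_surjective :=
    (zmodReduce_surjective.prodMap Function.surjective_id).comp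
      ε.surjective
  ker_proj := by
    ext x
    refine ⟨fun hx => ?_, ?_⟩
    · obtain ⟨z, hz⟩ := exists_nsmul_eq_of_zmodReduce_eq_zero (congrArg Prod.fst hx)
      have hx₂ : (ε x).2 = 0 := congrArg Prod.snd hx
      exact ⟨ε.symm (z, 0), ε.injective (Prod.ext (by simp [hz]) (by simp [hx₂]))⟩
    · rintro ⟨z, rfl⟩
      exact Prod.ext (by simp) (by simp [hA])
  incl_injective := ε.symm.injective.comp
    ((zmodMul_injective hr).prodMap Function.injective_id)
  range_incl := by
    ext x
    refine ⟨?_, fun (hx : q • x = 0) => ?_⟩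
    · rintro ⟨⟨a, b⟩, rfl⟩
      have ha : q • zmodMul r q a = 0 := by rw [← map_nsmul]; simp
      exact ε.injective (Prod.ext (by simp [ha]) (by simp [hA]))
    · have hx₁ : q • (ε x).1 = 0 := by rw [← Prod.smul_fst, ← map_nsmul, hx]; simp
      obtain ⟨a, ha⟩ := exists_zmodMul_eq hq hx₁
      exact ⟨(a, (ε x).2), ε.injective (Prod.ext (by simp [ha]) (by simp))⟩

theorem ofZModProd_proj_incl (hr : r ≠ 0) (hq : q ≠ 0) (hqr : q ∣ r) (hA : ∀ a : A, q • a = 0)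
    (ε : L ≃+ ZMod (r * q) × A) (t : ZMod q × A) :
    (ofZModProd hr hq hA ε).proj ((ofZModProd hr hq hA ε).incl t) = (0, t.2) := by
  simp [ofZModProd, Prod.map_def, zmodReduce_zmodMul hqr]

theorem ofZModProd_incl_proj_fst (hr : r ≠ 0) (hq : q ≠ 0) (hqr : q ∣ r)
    (hA : ∀ a : A, q • a = 0) (ε : L ≃+ ZMod (r * q) × A) (x : L) :
    (ofZModProd hr hq hA ε).incl (((ofZModProd hr hq hA ε).proj x).1, 0) = r • x := by
  obtain ⟨s, rfl⟩ := hqr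
  have hA' (a : A) : (q * s) • a = 0 := by rw [mul_comm, mul_nsmul', hA, nsmul_zero]
  apply ε.injective
  ext <;> simp [ofZModProd, zmodMul_zmodReduce, hA']

end ModTorsionModel

/-- If `q` divides `r` and `r'`, then `L/qL` and `L[q]` of groups `L` of the form `ℤ / rq × A` and
`ℤ / r'q × A` are compatibly isomorphic. -/
noncomputable def ModTorsionEquiv.ofZModProd (hr : r ≠ 0) (hr' : r' ≠ 0) (hq : q ≠ 0)
    (hqr : q ∣ r) (hqr' : q ∣ r') (hA : ∀ a : A, q • a = 0) (ε : L ≃+ ZMod (r * q) × A)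
    (ε' : L' ≃+ ZMod (r' * q) × A) : ModTorsionEquiv q r r' L L' :=
  (ModTorsionModel.ofZModProd hr hq hA ε).modTorsionEquiv
    (ModTorsionModel.ofZModProd hr' hq hA ε')
    (fun t => by
      rw [ModTorsionModel.ofZModProd_proj_incl hr hq hqr,
        ModTorsionModel.ofZModProd_proj_incl hr' hq hqr'])
    (fun x x' h => ⟨_, ModTorsionModel.ofZModProd_incl_proj_fst hr hq hqr hA ε x, by
      rw [h, ModTorsionModel.ofZModProd_incl_proj_fst hr' hq hqr']⟩)

end Model

section LieRing

variable {L L' L'' M M' : Type*} [LieRing L] [LieRing L'] [LieRing L''] [LieRing M] [LieRing M']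
  {q r r' r'' : ℕ}

theorem lie_eq_lie_of_mk_eq_mk (h : ∀ x y : L, q • ⁅x, y⁆ = 0) {x x₁ y y₁ : L}
    (hx : (x : ModNsmul L q) = x₁) (hy : (y : ModNsmul L q) = y₁) : ⁅x, y⁆ = ⁅x₁, y₁⁆ := by
  obtain ⟨z, hz : q • z = -x + x₁⟩ := QuotientAddGroup.eq.1 hx
  obtain ⟨w, hw : q • w = -y + y₁⟩ := QuotientAddGroup.eq.1 hy
  obtain rfl : x₁ = x + q • z := by rw [hz, add_neg_cancel_left]
  obtain rfl : y₁ = y + q • w := by rw [hw, add_neg_cancel_left]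
  simp only [add_lie, lie_add, nsmul_lie, lie_nsmul, h, add_zero]

/-- A `ModTorsionEquiv` which is compatible with the brackets, these being regarded as maps
`L / qL × L / qL → L[q]`. -/
structure LieModTorsionEquiv (q r r' : ℕ) (L L' : Type*) [LieRing L] [LieRing L'] extends
    ModTorsionEquiv q r r' L L' where
  mapsTorsion_lie {x y : L} {x' y' : L'} (hx : toModTorsionEquiv.MapsMod x x')
    (hy : toModTorsionEquiv.MapsMod y y') : toModTorsionEquiv.MapsTorsion ⁅x, y⁆ ⁅x', y'⁆

namespace LieModTorsionEquiv

theorem nsmul_lie_eq_zero (E : LieModTorsionEquiv q r r' L L') (x y : L) : q • ⁅x, y⁆ = 0 :=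
  have ⟨_, hx⟩ := E.exists_mapsMod x
  have ⟨_, hy⟩ := E.exists_mapsMod y
  (E.mapsTorsion_lie hx hy).nsmul_eq_zero

/-- The inverse isomorphisms. -/
def symm (E : LieModTorsionEquiv q r r' L L') : LieModTorsionEquiv q r' r L' L where
  toModTorsionEquiv := E.toModTorsionEquiv.symm
  mapsTorsion_lie hx hy := (E.mapsTorsion_lie (ModTorsionEquiv.mapsMod_symm.1 hx)
    (ModTorsionEquiv.mapsMod_symm.1 hy)).symm

/-- Composition of isomorphisms. -/
def trans (E : LieModTorsionEquiv q r r' L L') (F : LieModTorsionEquiv q r' r'' L' L'') :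
    LieModTorsionEquiv q r r'' L L'' where
  toModTorsionEquiv := E.toModTorsionEquiv.trans F.toModTorsionEquiv
  mapsTorsion_lie hx hy := by
    obtain ⟨x', hx₁, hx₂⟩ := ModTorsionEquiv.exists_mapsMod_of_trans hx
    obtain ⟨y', hy₁, hy₂⟩ := ModTorsionEquiv.exists_mapsMod_of_trans hy
    exact (E.mapsTorsion_lie hx₁ hy₁).trans (F.mapsTorsion_lie hx₂ hy₂)

/-- The isomorphisms induced by an isomorphism of Lie rings. -/
def ofLieEquiv (g : L ≃ₗ⁅ℤ⁆ L') (h : ∀ x : L, q • r • x = 0) (hlie : ∀ x y : L, q • ⁅x, y⁆ = 0) :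
    LieModTorsionEquiv q r r L L' where
  toModTorsionEquiv := .ofAddEquiv g.toLinearEquiv.toAddEquiv h
  mapsTorsion_lie {x y x' y'} hx hy := by
    have hlie' (u v : L') : q • ⁅u, v⁆ = 0 := by
      rw [← g.apply_symm_apply u, ← g.apply_symm_apply v, ← LieEquiv.map_lie, ← map_nsmul, hlie,
        map_zero]
    rw [← lie_eq_lie_of_mk_eq_mk hlie' hx hy]
    convert ModTorsionEquiv.mapsTorsion_ofAddEquiv g.toLinearEquiv.toAddEquiv h (hlie x y)
    exact (LieEquiv.map_lie g x y).symm

/-- Transport of an isomorphism of Lie rings `L ≃ M` along comparisons of `L` with `L'` and of `M`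
with `M'`. -/
def conj (E : LieModTorsionEquiv q r r' L L') (F : LieModTorsionEquiv q r r' M M')
    (g : L ≃ₗ⁅ℤ⁆ M) : LieModTorsionEquiv q r' r' L' M' :=
  E.symm.trans ((ofLieEquiv g E.nsmul_nsmul_eq_zero E.nsmul_lie_eq_zero).trans F)

end LieModTorsionEquiv

theorem ModTorsionEquiv.exists_lieRing {L' : Type*} [I : AddCommGroup L']
    (E : ModTorsionEquiv q r r' L L') (hlie : ∀ x y : L, q • ⁅x, y⁆ = 0) :
    ∃ s : LieRing L', s.toAddCommGroup = I ∧ Nonempty (LieModTorsionEquiv q r r' L L') := by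
  choose lift hlift using fun x' => E.symm.exists_mapsMod x'
  choose br hbr using fun x' y' => E.exists_mapsTorsion (hlie (lift x') (lift y'))
  have mapsTorsion_br {x y : L} {x' y' : L'} (hx : E.MapsMod x x') (hy : E.MapsMod y y') :
      E.MapsTorsion ⁅x, y⁆ (br x' y') := by
    have hx₁ := (mapsMod_symm.2 hx).symm.trans (hlift x')
    have hy₁ := (mapsMod_symm.2 hy).symm.trans (hlift y')
    rw [lie_eq_lie_of_mk_eq_mk hlie hx₁ hy₁]
    exact hbr x' y'
  have hmaps (x' : L') : E.MapsMod (lift x') x' := mapsMod_symm.1 (hlift x')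
  let s : LieRing L' :=
    { I with
      bracket := br
      add_lie x y z := (mapsTorsion_br ((hmaps x).add (hmaps y)) (hmaps z)).right_unique <| by
        rw [add_lie]
        exact (hbr x z).add (hbr y z)
      lie_add x y z := (mapsTorsion_br (hmaps x) ((hmaps y).add (hmaps z))).right_unique <| by
        rw [lie_add]
        exact (hbr x y).add (hbr x z)
      lie_self x := (hbr x x).right_unique <| by
        rw [lie_self]
        exact .zero
      leibniz_lie x y z := (mapsTorsion_br (hmaps x) (hbr y z).mapsMod).right_unique <| by
        rw [leibniz_lie]
        exact (mapsTorsion_br (hbr x y).mapsMod (hmaps z)).add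
          (mapsTorsion_br (hmaps y) (hbr x z).mapsMod) }
  exact ⟨s, rfl, ⟨⟨E, mapsTorsion_br⟩⟩⟩

end LieRing

namespace LieModTorsionEquiv

variable {L L' : Type} [LieRing L] [LieRing L'] {q r r' : ℕ}

theorem exists_mapsTorsion_mem_lieLCS_succ (E : LieModTorsionEquiv q r r' L L') {c : ℕ}
    (h : ∀ x ∈ lieLCS L c, ∃ x' ∈ lieLCS L' c, E.MapsMod x x') :
    ∀ x ∈ lieLCS L (c + 1), ∃ x' ∈ lieLCS L' (c + 1), E.MapsTorsion x x' := by
  intro x hx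
  induction hx using AddSubgroup.closure_induction with
  | mem x hx =>
    obtain ⟨y, hy, z, rfl⟩ := hx
    obtain ⟨y', hy', hyy'⟩ := h y hy
    obtain ⟨z', hzz'⟩ := E.exists_mapsMod z
    exact ⟨⁅y', z'⁆, AddSubgroup.subset_closure ⟨y', hy', z', rfl⟩, E.mapsTorsion_lie hyy' hzz'⟩
  | zero => exact ⟨0, zero_mem _, .zero⟩
  | add x y _ _ ihx ihy =>
    obtain ⟨x', hx', hxx'⟩ := ihx
    obtain ⟨y', hy', hyy'⟩ := ihy
    exact ⟨x' + y', add_mem hx' hy', hxx'.add hyy'⟩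
  | neg x _ ih =>
    obtain ⟨x', hx', hxx'⟩ := ih
    exact ⟨-x', neg_mem hx', hxx'.neg⟩

theorem exists_mapsMod_mem_lieLCS (E : LieModTorsionEquiv q r r' L L') (c : ℕ) :
    ∀ x ∈ lieLCS L c, ∃ x' ∈ lieLCS L' c, E.MapsMod x x' := by
  induction c with
  | zero =>
    intro x _
    obtain ⟨x', hx'⟩ := E.exists_mapsMod x
    exact ⟨x', AddSubgroup.mem_top x', hx'⟩
  | succ c ih =>
    intro x hx
    obtain ⟨x', hx', hxx'⟩ := E.exists_mapsTorsion_mem_lieLCS_succ ih x hx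
    exact ⟨x', hx', hxx'.mapsMod⟩

theorem lieLCS_succ_eq_bot (E : LieModTorsionEquiv q r r' L L') {c : ℕ}
    (h : lieLCS L' (c + 1) = ⊥) : lieLCS L (c + 1) = ⊥ := by
  rw [eq_bot_iff]
  intro x hx
  obtain ⟨x', hx', hxx'⟩ :=
    E.exists_mapsTorsion_mem_lieLCS_succ (E.exists_mapsMod_mem_lieLCS c) x hx
  rw [h, AddSubgroup.mem_bot] at hx'
  rw [hx'] at hxx'
  exact hxx'.eq_zero

variable [Nontrivial L] [Nontrivial L']

theorem lieLCS_eq_bot_iff (E : LieModTorsionEquiv q r r' L L') (c : ℕ) :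
    lieLCS L c = ⊥ ↔ lieLCS L' c = ⊥ := by
  cases c with
  | zero => exact iff_of_false top_ne_bot top_ne_bot
  | succ c => exact ⟨E.symm.lieLCS_succ_eq_bot, E.lieLCS_succ_eq_bot⟩

theorem isNilpotentLieRing_iff (E : LieModTorsionEquiv q r r' L L') :
    IsNilpotentLieRing L ↔ IsNilpotentLieRing L' :=
  exists_congr E.lieLCS_eq_bot_iff

theorem lieNilClass_eq (E : LieModTorsionEquiv q r r' L L') : lieNilClass L = lieNilClass L' := by
  simp only [lieNilClass, E.lieLCS_eq_bot_iff]

end LieModTorsionEquiv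

section Lifting

variable {L L' A : Type*} [AddCommGroup L] [AddCommGroup L'] [AddCommGroup A] {q r m k : ℕ}

theorem injective_of_injOn_torsion {g : L →+ L'} (hg : ∀ x, q • x = 0 → g x = 0 → x = 0)
    (hk : ∀ x : L, q ^ k • x = 0) : Function.Injective g := by
  suffices h : ∀ (i : ℕ) (x : L), q ^ i • x = 0 → g x = 0 → x = 0 from
    (injective_iff_map_eq_zero g).2 fun x => h k x (hk x)
  intro i
  induction i with
  | zero => intro x hx _; rwa [pow_zero, one_nsmul] at hx
  | succ i ih =>
    intro x hx hgx
    refine hg x (ih (q • x) ?_ ?_) hgx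
    · rwa [← mul_nsmul', ← pow_succ]
    · rw [map_nsmul, hgx, nsmul_zero]

theorem surjective_of_forall_exists_add_nsmul {g : L →+ L'}
    (hg : ∀ x', ∃ x z', x' = g x + q • z') (hk : ∀ x' : L', q ^ k • x' = 0) :
    Function.Surjective g := by
  suffices h : ∀ (i : ℕ) (x' : L'), ∃ x z', x' = g x + q ^ i • z' by
    intro x'
    obtain ⟨x, z', rfl⟩ := h k x'
    exact ⟨x, by rw [hk, add_zero]⟩
  intro i
  induction i with
  | zero => intro x'; exact ⟨0, x', by rw [map_zero, zero_add, pow_zero, one_nsmul]⟩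
  | succ i ih =>
    intro x'
    obtain ⟨x, y', rfl⟩ := ih x'
    obtain ⟨y, z', rfl⟩ := hg y'
    exact ⟨x + q ^ i • y, z', by
      rw [nsmul_add, map_add, map_nsmul, pow_succ, mul_nsmul', add_assoc]⟩

theorem exists_eq_zsmul_add_of_equiv_zmod_prod (ε : L ≃+ ZMod m × A) (x : L) :
    ∃ (k : ℤ) (a : A), x = k • ε.symm (1, 0) + ε.symm (0, a) := by
  obtain ⟨k, hk⟩ := ZMod.intCast_surjective (ε x).1
  exact ⟨k, (ε x).2, ε.injective (Prod.ext (by simp [hk]) (by simp))⟩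

theorem nsmul_symm_inr_eq_zero (hA : ∀ a : A, q • a = 0) (ε : L ≃+ ZMod m × A) (a : A) :
    q • ε.symm (0, a) = 0 := by
  rw [← map_nsmul, Prod.smul_mk, nsmul_zero, hA, ← Prod.zero_eq_mk, map_zero]

theorem exists_eq_nsmul_zsmul_add_of_nsmul_eq_zero (hq : q ≠ 0) (hA : ∀ a : A, q • a = 0)
    (ε : L ≃+ ZMod (r * q) × A) {y : L} (hy : q • y = 0) :
    ∃ (i : ℤ) (a : A), y = r • i • ε.symm (1, 0) + ε.symm (0, a) := by
  obtain ⟨k, a, rfl⟩ := exists_eq_zsmul_add_of_equiv_zmod_prod ε y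
  rw [nsmul_add, nsmul_symm_inr_eq_zero hA, add_zero] at hy
  have hk : ((q * k : ℤ) : ZMod (r * q)) = 0 := by
    simpa using congrArg (fun x => (ε x).1) hy
  rw [ZMod.intCast_zmod_eq_zero_iff_dvd, Nat.cast_mul, mul_comm (q : ℤ)] at hk
  obtain ⟨i, rfl⟩ := (mul_dvd_mul_iff_right (Nat.cast_ne_zero.2 hq)).1 hk
  exact ⟨i, a, by rw [mul_smul, natCast_zsmul]⟩

namespace ModTorsionEquiv

theorem exists_addMonoidHom_symm_inl_inr (E : ModTorsionEquiv q r r L L')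
    (hA : ∀ a : A, q • a = 0) (ε : L ≃+ ZMod (r * q) × A) :
    ∃ g : L →+ L', E.MapsMod (ε.symm (1, 0)) (g (ε.symm (1, 0))) ∧
      ∀ a, E.MapsTorsion (ε.symm (0, a)) (g (ε.symm (0, a))) := by
  obtain ⟨x', hx'⟩ := E.exists_mapsMod (ε.symm (1, 0))
  have hx'₀ : zmultiplesHom L' x' (r * q : ℕ) = 0 := by
    rw [zmultiplesHom_apply, natCast_zsmul, mul_nsmul, E.symm.nsmul_nsmul_eq_zero]
  let φ : ZMod (r * q) →+ L' := ZMod.lift (r * q) ⟨zmultiplesHom L' x', hx'₀⟩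
  have hφ : φ 1 = x' := by
    simpa using ZMod.lift_coe (r * q) ⟨zmultiplesHom L' x', hx'₀⟩ 1
  let inr : A →+ NsmulTorsion L q :=
    (ε.symm.toAddMonoidHom.comp (AddMonoidHom.inr _ A)).codRestrict _
      (nsmul_symm_inr_eq_zero hA ε)
  let ψ : A →+ L' := (NsmulTorsion L' q).subtype.comp (E.torsionEquiv.toAddMonoidHom.comp inr)
  refine ⟨(φ.coprod ψ).comp ε.toAddMonoidHom, ?_, fun a => ⟨inr a, rfl, ?_⟩⟩
  · simpa [hφ] using hx'
  · simp [ψ]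

theorem exists_addMonoidHom (E : ModTorsionEquiv q r r L L') (hq : q ≠ 0)
    (hA : ∀ a : A, q • a = 0) (ε : L ≃+ ZMod (r * q) × A) :
    ∃ g : L →+ L', (∀ x, E.MapsMod x (g x)) ∧ ∀ y, q • y = 0 → E.MapsTorsion y (g y) := by
  obtain ⟨g, hg₁, hg₂⟩ := E.exists_addMonoidHom_symm_inl_inr hA ε
  refine ⟨g, fun x => ?_, fun y hy => ?_⟩
  · obtain ⟨k, a, rfl⟩ := exists_eq_zsmul_add_of_equiv_zmod_prod ε x
    rw [map_add, map_zsmul]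
    exact (hg₁.zsmul k).add (hg₂ a).mapsMod
  · obtain ⟨i, a, rfl⟩ := exists_eq_nsmul_zsmul_add_of_nsmul_eq_zero hq hA ε hy
    rw [map_add, map_nsmul, map_zsmul]
    exact (hg₁.zsmul i).nsmul.add (hg₂ a)

theorem bijective_of_mapsMod_of_mapsTorsion (E : ModTorsionEquiv q r r L L') (hr : r ∣ q ^ k)
    {g : L →+ L'} (hg : ∀ x, E.MapsMod x (g x)) (hg' : ∀ y, q • y = 0 → E.MapsTorsion y (g y)) :
    Function.Bijective g := by
  obtain ⟨s, hs⟩ := hr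
  have hk : q ^ (k + 1) = s * (r * q) := by rw [pow_succ, hs]; ring
  constructor
  · refine injective_of_injOn_torsion (q := q) (k := k + 1) (fun x hx hgx => ?_) fun x => ?_
    · exact (hgx ▸ hg' x hx).eq_zero
    · rw [hk, mul_nsmul', mul_nsmul, E.nsmul_nsmul_eq_zero, nsmul_zero]
  · refine surjective_of_forall_exists_add_nsmul (q := q) (k := k + 1) (fun x' => ?_) fun x' => ?_
    · obtain ⟨x, hx⟩ := E.symm.exists_mapsMod x'
      obtain ⟨z', hz' : q • z' = -g x + x'⟩ :=
        QuotientAddGroup.eq.1 ((hg x).symm.trans (mapsMod_symm.1 hx))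
      exact ⟨x, z', by rw [hz', add_neg_cancel_left]⟩
    · rw [hk, mul_nsmul', mul_nsmul, E.symm.nsmul_nsmul_eq_zero, nsmul_zero]

end ModTorsionEquiv

end Lifting

section LieIsomorphic

variable {L L' A : Type*} [LieRing L] [LieRing L'] [AddCommGroup A] {q r m k : ℕ}

/-- Isomorphism of Lie rings, as a proposition. -/
def LieIsomorphic (L L' : Type*) [LieRing L] [LieRing L'] : Prop :=
  Nonempty (L ≃ₗ⁅ℤ⁆ L')

theorem lieIsomorphic_iff_exists_addEquiv :
    LieIsomorphic L L' ↔ ∃ g : L ≃+ L', ∀ x y, g ⁅x, y⁆ = ⁅g x, g y⁆ := by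
  constructor
  · rintro ⟨g⟩
    exact ⟨g.toLinearEquiv.toAddEquiv, g.map_lie⟩
  · rintro ⟨g, hg⟩
    exact ⟨{ g.toIntLinearEquiv with map_lie' := hg _ _ }⟩

theorem LieModTorsionEquiv.lieIsomorphic (E : LieModTorsionEquiv q r r L L') (hq : q ≠ 0)
    (hr : r ∣ q ^ k) (hA : ∀ a : A, q • a = 0) (ε : L ≃+ ZMod (r * q) × A) :
    LieIsomorphic L L' := by
  obtain ⟨g, hg, hg'⟩ := E.exists_addMonoidHom hq hA ε
  have hbij := E.bijective_of_mapsMod_of_mapsTorsion hr hg hg'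
  refine lieIsomorphic_iff_exists_addEquiv.2 ⟨.ofBijective g hbij, fun x y => ?_⟩
  exact (hg' _ (E.nsmul_lie_eq_zero x y)).right_unique (E.mapsTorsion_lie (hg x) (hg y))

/-- Since `⁅u, u⁆ = 0`, a bracket in which neither argument lies in `A` vanishes. -/
theorem nsmul_lie_eq_zero_of_equiv_zmod_prod (hA : ∀ a : A, q • a = 0) (ε : L ≃+ ZMod m × A)
    (x y : L) : q • ⁅x, y⁆ = 0 := by
  obtain ⟨k, a, rfl⟩ := exists_eq_zsmul_add_of_equiv_zmod_prod ε x
  obtain ⟨l, b, rfl⟩ := exists_eq_zsmul_add_of_equiv_zmod_prod ε y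
  have lie_left (z : L) : q • ⁅ε.symm (0, a), z⁆ = 0 := by
    rw [← nsmul_lie, nsmul_symm_inr_eq_zero hA, zero_lie]
  have lie_right (z : L) : q • ⁅z, ε.symm (0, b)⁆ = 0 := by
    rw [← lie_nsmul, nsmul_symm_inr_eq_zero hA, lie_zero]
  simp only [add_lie, lie_add, zsmul_lie, lie_zsmul, lie_self, smul_zero, zero_add, nsmul_add,
    smul_comm q, lie_left, lie_right]

end LieIsomorphic

section Decomposition

variable {p e f : ℕ}

theorem exists_eq_prime_pow_of_exponent_pi_zmod {ι : Type*} [Finite ι] {m : ι → ℕ}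
    (hp : p.Prime) (he : e ≠ 0) (h : AddMonoid.exponent (∀ i, ZMod (m i)) = p ^ e) :
    ∃ i, m i = p ^ e := by
  cases nonempty_fintype ι
  obtain ⟨e, rfl⟩ := Nat.exists_eq_succ_of_ne_zero he
  simp only [AddMonoid.exponent_pi, ZMod.exponent] at h
  obtain ⟨i, hi⟩ : ∃ i, ¬ m i ∣ p ^ e := by
    by_contra! hdvd
    have hlcm := h ▸ Finset.lcm_dvd fun i _ => hdvd i
    exact e.not_succ_le_self ((Nat.pow_dvd_pow_iff_le_right hp.one_lt).1 hlcm)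
  exact ⟨i, Nat.eq_prime_pow_of_dvd_least_prime_pow hp hi (h ▸ Finset.dvd_lcm (Finset.mem_univ i))⟩

theorem exists_equiv_zmod_prod_of_exponent_eq_prime_pow {G : Type*} [AddCommGroup G] [Finite G]
    (hp : p.Prime) (he : e ≠ 0) (hG : AddMonoid.exponent G = p ^ e) :
    ∃ (A : Type) (_ : AddCommGroup A), Nonempty (G ≃+ ZMod (p ^ e) × A) := by
  classical
  obtain ⟨ι, _, m, -, ⟨ε⟩⟩ := AddCommGroup.equiv_directSum_zmod_of_finite' G
  replace ε := ε.trans (DirectSum.addEquivProd _)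
  rw [AddMonoid.exponent_eq_of_addEquiv ε] at hG
  obtain ⟨i, hi⟩ := exists_eq_prime_pow_of_exponent_pi_zmod hp he hG
  let split : (∀ j, ZMod (m j)) ≃+ ZMod (m i) × (∀ j : {j // j ≠ i}, ZMod (m j)) :=
    { Equiv.piSplitAt i fun j => ZMod (m j) with map_add' := fun _ _ => rfl }
  exact ⟨_, inferInstance, ⟨hi ▸ ε.trans split⟩⟩

theorem exists_equiv_zmod_prod_of_card_of_exponent {G : Type*} [AddCommGroup G] (hp : p.Prime)
    (he : e ≠ 0) (hcard : Nat.card G = p ^ (e + f)) (hexp : AddMonoid.exponent G = p ^ e) :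
    ∃ (A : Type) (_ : AddCommGroup A), Nat.card A = p ^ f ∧ Nonempty (G ≃+ ZMod (p ^ e) × A) := by
  have : Finite G := Nat.finite_of_card_ne_zero (hcard ▸ pow_ne_zero _ hp.ne_zero)
  obtain ⟨A, _, ⟨ε⟩⟩ := exists_equiv_zmod_prod_of_exponent_eq_prime_pow hp he hexp
  refine ⟨A, _, ?_, ⟨ε⟩⟩
  rw [Nat.card_congr ε.toEquiv, Nat.card_prod, Nat.card_zmod, pow_add] at hcard
  exact Nat.eq_of_mul_eq_mul_left (pow_pos hp.pos e) hcard

theorem exponent_zmod_prod {A : Type*} [AddCommGroup A] {m q : ℕ} (hA : ∀ a : A, q • a = 0)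
    (hq : q ∣ m) : AddMonoid.exponent (ZMod m × A) = m := by
  rw [AddMonoid.exponent_prod, ZMod.exponent]
  exact Nat.lcm_eq_left ((AddMonoid.exponent_dvd_of_forall_nsmul_eq_zero hA).trans hq)

theorem exists_addCommGroup_addEquiv {X G : Type*} [AddCommGroup G] [Finite X] [Finite G]
    (h : Nat.card X = Nat.card G) : ∃ _ : AddCommGroup X, Nonempty (X ≃+ G) := by
  obtain ⟨φ⟩ := Finite.card_eq.1 h
  exact ⟨φ.addCommGroup, ⟨φ.addEquiv⟩⟩

end Decomposition

section Coexponent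

variable {p d d' f : ℕ} {L L' : Type*} [LieRing L]

theorem exists_lieRing_nonempty_lieModTorsionEquiv (hp : p.Prime) (hf : f ≠ 0) (hd : f ≤ d)
    (hd' : f ≤ d') (hL : Nat.card L = p ^ (d + f + f)) (hexp : AddMonoid.exponent L = p ^ (d + f))
    (hL' : Nat.card L' = p ^ (d' + f + f)) :
    ∃ _ : LieRing L', AddMonoid.exponent L' = p ^ (d' + f) ∧
      Nonempty (LieModTorsionEquiv (p ^ f) (p ^ d) (p ^ d') L L') := by
  obtain ⟨A, _, hAcard, ⟨ε⟩⟩ :=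
    exists_equiv_zmod_prod_of_card_of_exponent hp (by omega) hL hexp
  have hA (a : A) : p ^ f • a = 0 := hAcard ▸ card_nsmul_eq_zero'
  have hpow (i : ℕ) : p ^ i ≠ 0 := pow_ne_zero i hp.ne_zero
  rw [pow_add] at ε
  have : Finite L' := Nat.finite_of_card_ne_zero (hL' ▸ hpow _)
  have : Finite A := Nat.finite_of_card_ne_zero (hAcard ▸ hpow _)
  have : NeZero (p ^ d' * p ^ f) := ⟨mul_ne_zero (hpow _) (hpow _)⟩
  have hcard : Nat.card L' = Nat.card (ZMod (p ^ d' * p ^ f) × A) := by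
    rw [hL', Nat.card_prod, Nat.card_zmod, hAcard, pow_add, pow_add]
  obtain ⟨_, ⟨ε'⟩⟩ := exists_addCommGroup_addEquiv hcard
  have hexp' : AddMonoid.exponent L' = p ^ (d' + f) := by
    rw [AddMonoid.exponent_eq_of_addEquiv ε', exponent_zmod_prod hA (dvd_mul_left _ _), pow_add]
  let E : ModTorsionEquiv (p ^ f) (p ^ d) (p ^ d') L L' := .ofZModProd (hpow _) (hpow _) (hpow _)
    (pow_dvd_pow p hd) (pow_dvd_pow p hd') hA ε ε'
  obtain ⟨s, rfl, hE⟩ := E.exists_lieRing (nsmul_lie_eq_zero_of_equiv_zmod_prod hA ε)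
  exact ⟨s, hexp', hE⟩

theorem LieModTorsionEquiv.lieIsomorphic_of_card_of_exponent [LieRing L'] (hp : p.Prime)
    (hf : f ≠ 0) (hL : Nat.card L = p ^ (d + f + f)) (hexp : AddMonoid.exponent L = p ^ (d + f))
    (E : LieModTorsionEquiv (p ^ f) (p ^ d) (p ^ d) L L') : LieIsomorphic L L' := by
  obtain ⟨A, _, hAcard, ⟨ε⟩⟩ :=
    exists_equiv_zmod_prod_of_card_of_exponent hp (by omega) hL hexp
  have hA (a : A) : p ^ f • a = 0 := hAcard ▸ card_nsmul_eq_zero'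
  rw [pow_add] at ε
  have hdvd : p ^ d ∣ (p ^ f) ^ d := pow_dvd_pow_of_dvd (dvd_pow_self p hf) d
  exact E.lieIsomorphic (pow_ne_zero f hp.ne_zero) hdvd hA ε

theorem LieModTorsionEquiv.lieIsomorphic_iff {M M' : Type*} [LieRing M] [LieRing L'] [LieRing M']
    (hp : p.Prime) (hf : f ≠ 0) (E : LieModTorsionEquiv (p ^ f) (p ^ d) (p ^ d') L L')
    (F : LieModTorsionEquiv (p ^ f) (p ^ d) (p ^ d') M M')
    (hL : Nat.card L = p ^ (d + f + f)) (hexp : AddMonoid.exponent L = p ^ (d + f))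
    (hL' : Nat.card L' = p ^ (d' + f + f)) (hexp' : AddMonoid.exponent L' = p ^ (d' + f)) :
    LieIsomorphic L M ↔ LieIsomorphic L' M' := by
  constructor
  · rintro ⟨g⟩
    exact (E.conj F g).lieIsomorphic_of_card_of_exponent hp hf hL' hexp'
  · rintro ⟨g⟩
    exact (E.symm.conj F.symm g).lieIsomorphic_of_card_of_exponent hp hf hL hexp

end Coexponent

section Counting

theorem card_quot_eq_of_correspondence {X Y : Type*} {rX : X → X → Prop} {rY : Y → Y → Prop}
    (R : X → Y → Prop) (hX : ∀ x, rX x x) (hY : ∀ y, rY y y) (hl : ∀ x, ∃ y, R x y)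
    (hr : ∀ y, ∃ x, R x y) (h : ∀ x x' y y', R x y → R x' y' → (rX x x' ↔ rY y y')) :
    Nat.card (Quot rX) = Nat.card (Quot rY) := by
  choose F hF using hl
  choose G hG using hr
  refine Nat.card_congr
    { toFun := Quot.map F fun x x' => (h _ _ _ _ (hF x) (hF x')).1
      invFun := Quot.map G fun y y' => (h _ _ _ _ (hG y) (hG y')).2
      left_inv := ?_
      right_inv := ?_ }
  · rintro ⟨x⟩
    exact Quot.sound ((h _ _ _ _ (hG (F x)) (hF x)).2 (hY _))
  · rintro ⟨y⟩
    exact Quot.sound ((h _ _ _ _ (hF (G y)) (hG y)).1 (hX _))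

theorem lieClassCount_eq_of_correspondence {N N' : ℕ} {Q : LieRing (Fin N) → Prop}
    {Q' : LieRing (Fin N') → Prop} (R : LieRing (Fin N) → LieRing (Fin N') → Prop)
    (hl : ∀ s, Q s → ∃ t, Q' t ∧ R s t) (hr : ∀ t, Q' t → ∃ s, Q s ∧ R s t)
    (h : ∀ s s₁ t t₁, Q s → Q' t → R s t → R s₁ t₁ →
      (@LieIsomorphic _ _ s s₁ ↔ @LieIsomorphic _ _ t t₁)) :
    lieClassCount N Q = lieClassCount N' Q' := by
  refine card_quot_eq_of_correspondence (fun s t => R s.1 t.1)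
    (fun s => ⟨@AddEquiv.refl _ (addOfLieRing _ s.1), fun _ _ => rfl⟩)
    (fun t => ⟨@AddEquiv.refl _ (addOfLieRing _ t.1), fun _ _ => rfl⟩)
    (fun ⟨s, hs⟩ => ?_) (fun ⟨t, ht⟩ => ?_) fun s s₁ t t₁ hst hst₁ => ?_
  · obtain ⟨t, ht, hst⟩ := hl s hs
    exact ⟨⟨t, ht⟩, hst⟩
  · obtain ⟨s, hs, hst⟩ := hr t ht
    exact ⟨⟨s, hs⟩, hst⟩
  · exact (@lieIsomorphic_iff_exists_addEquiv _ _ s.1 s₁.1).symm.trans <|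
      (h _ _ _ _ s.2 t.2 hst hst₁).trans (@lieIsomorphic_iff_exists_addEquiv _ _ t.1 t₁.1)

end Counting

/-- The Lie rings counted by `PsiLie p (e + f) f`, apart from the condition on the order. -/
def IsNilpotentOfExponent (p e : ℕ) (L : Type) [LieRing L] : Prop :=
  IsNilpotentLieRing L ∧ lieNilClass L < p ∧ AddMonoid.exponent L = p ^ e

theorem psiLie_add_eq_lieClassCount (p e : ℕ) {f : ℕ} (hf : f ≠ 0) :
    PsiLie p (e + f) f = lieClassCount (p ^ (e + f)) fun s =>
      @IsNilpotentOfExponent p e (Fin (p ^ (e + f))) s := by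
  have hexp (m : ℕ) : (∃ e', m = p ^ e' ∧ e + f - e' = f) ↔ m = p ^ e := by
    constructor
    · rintro ⟨e', rfl, he'⟩
      obtain rfl : e' = e := by omega
      rfl
    · rintro rfl
      exact ⟨e, rfl, Nat.add_sub_cancel_left e f⟩
  simp only [PsiLie, IsNilpotentOfExponent, hexp]

theorem nontrivial_fin_prime_pow {p : ℕ} (hp : p.Prime) {n : ℕ} (hn : n ≠ 0) :
    Nontrivial (Fin (p ^ n)) :=
  Fin.nontrivial_iff_two_le.2 (hp.two_le.trans (Nat.le_self_pow hn p))

theorem IsNilpotentOfExponent.exists_partner {p d d' f : ℕ} (hp : p.Prime) (hf : f ≠ 0)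
    (hd : f ≤ d) (hd' : f ≤ d') {s : LieRing (Fin (p ^ (d + f + f)))}
    (hs : IsNilpotentOfExponent p (d + f) (Fin (p ^ (d + f + f)))) :
    ∃ t : LieRing (Fin (p ^ (d' + f + f))),
      IsNilpotentOfExponent p (d' + f) (Fin (p ^ (d' + f + f))) ∧
      Nonempty (LieModTorsionEquiv (p ^ f) (p ^ d) (p ^ d') (Fin (p ^ (d + f + f)))
        (Fin (p ^ (d' + f + f)))) := by
  obtain ⟨hnil, hclass, hexp⟩ := hs
  obtain ⟨t, hexp', ⟨E⟩⟩ := exists_lieRing_nonempty_lieModTorsionEquiv hp hf hd hd'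
    (Nat.card_fin _) hexp (Nat.card_fin (p ^ (d' + f + f)))
  have := nontrivial_fin_prime_pow hp (n := d + f + f) (by omega)
  have := nontrivial_fin_prime_pow hp (n := d' + f + f) (by omega)
  exact ⟨t, ⟨E.isNilpotentLieRing_iff.1 hnil, E.lieNilClass_eq ▸ hclass, hexp'⟩, ⟨E⟩⟩

theorem psi_lie_stable_general {f : ℕ} (hf : f ≠ 0) {p : ℕ} (hp : p.Prime) {n n' : ℕ}
    (hn : 3 * f ≤ n) (hn' : 3 * f ≤ n') : PsiLie p n f = PsiLie p n' f := by
  obtain ⟨d, hd, rfl⟩ : ∃ d, f ≤ d ∧ n = d + f + f := ⟨n - 2 * f, by omega, by omega⟩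
  obtain ⟨d', hd', rfl⟩ : ∃ d', f ≤ d' ∧ n' = d' + f + f := ⟨n' - 2 * f, by omega, by omega⟩
  rw [psiLie_add_eq_lieClassCount p _ hf, psiLie_add_eq_lieClassCount p _ hf]
  refine lieClassCount_eq_of_correspondence
    (fun s t => Nonempty (@LieModTorsionEquiv (p ^ f) (p ^ d) (p ^ d') _ _ s t))
    (fun s hs => hs.exists_partner hp hf hd hd') (fun t ht => ?_) ?_
  · obtain ⟨s, hs, ⟨E⟩⟩ := ht.exists_partner hp hf hd' hd
    exact ⟨s, hs, ⟨E.symm⟩⟩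
  · rintro s s₁ t t₁ hs ht ⟨E⟩ ⟨E₁⟩
    exact @LieModTorsionEquiv.lieIsomorphic_iff p d d' f _ _ s _ _ s₁ t t₁ hp hf E E₁
      (Nat.card_fin _) hs.2.2 (Nat.card_fin _) ht.2.2

/-- Fix `f ≥ 3`.  For every prime `p > f + 1`, the number of isomorphism
classes of Lie rings of order `p ^ n` which are nilpotent of class less than `p` and whose
underlying abelian group has coexponent `f` is independent of `n` for `n ≥ 3f`. -/
theorem psi_lie_stable (f : ℕ) (hf : 3 ≤ f) (p : ℕ) (hp : p.Prime) (hpf : p > f + 1)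
    (n n' : ℕ) (hn : 3 * f ≤ n) (hn' : 3 * f ≤ n') :
    PsiLie p n f = PsiLie p n' f :=
  psi_lie_stable_general (by omega) hp hn hn'
end

section
/- Let p be a prime, f a positive integer, and let U be a Lie ring satisfying: (P-1) U is nilpotent, has additive coexponent f, and μ_1(U) = μ_2(U) ≤ f; (P-2) |U| = p^{f + μ_1(U)}; (P-3) U possesses a central element of order p^{μ_1(U)}. Let z be a central element of U of order p^{μ_1(U)}, let n - f ≥ 2μ_1(U), let w be a generator of ℤ/p^{n-f}ℤ (regarded as an abelian Lie ring), and let θ : (ℤ/p^{n-f}ℤ)w → Der(U)_z be a Lie ring homomorphism. Then: (1) the subgroup ⟨p^{n-f-μ_1(U)} w - z⟩ is an ideal of U ⋊_θ (ℤ/p^{n-f}ℤ)w; (2) the quotient U(n-f, w, wθ, z) = (U ⋊_θ (ℤ/p^{n-f}ℤ)w)/⟨p^{n-f-μ_1(U)} w - z⟩ is a Lie ring of order p^n and additive coexponent f; (3) μ_2(U(n-f, w, wθ, z)) = μ_1(U) and Ω_{μ_1(U)}(U(n-f, w, wθ, z)) ≅ U; (4) if the derivation wθ is nilpotent then the Lie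 ring U(n-f, w, wθ, z) is nilpotent. -/
/-- `Ω_i(A) = {x : p^i • x = 0}` for an additive group `A`. -/
def aOmega (p : ℕ) (A : Type) [AddCommGroup A] (i : ℕ) : AddSubgroup A :=
  AddSubgroup.closure {x : A | p ^ i • x = 0}

/-- `ω_i(A)`, defined by `p ^ ω_i(A) = |Ω_i(A)/Ω_{i-1}(A)|`. -/
noncomputable def aOmegaInv (p : ℕ) (A : Type) [AddCommGroup A] (i : ℕ) : ℕ :=
  ((aOmega p A (i - 1)).relIndex (aOmega p A i)).factorization p

/-- `μ_j(A)` (for `j ≥ 1`): the type invariants of the abelian `p`-group `A`. -/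
noncomputable def aMuInv (p : ℕ) (A : Type) [AddCommGroup A] (j : ℕ) : ℕ :=
  Nat.card {i : ℕ // 1 ≤ i ∧ j ≤ aOmegaInv p A i}

attribute [local instance 100] LieRing.ofAssociativeRing

/-- The semidirect product `L ⋊_θ (ℤ/mℤ)` of a Lie ring `L` with the abelian Lie ring
`ℤ/mℤ`, along a Lie ring homomorphism `θ : ℤ/mℤ → Der(L)`; derivations act on the right,
so the bracket is `[(l₁,c₁),(l₂,c₂)] = ([l₁,l₂] + l₁(θ c₂) - l₂(θ c₁), [c₁,c₂])`. -/
@[ext] structure LieSD (L : Type) (m : ℕ) [LieRing L]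
    (θ : ZMod m →ₗ⁅ℤ⁆ LieDerivation ℤ L L) : Type where
  fst : L
  snd : ZMod m

namespace LieSD

variable {L : Type} {m : ℕ} [LieRing L] {θ : ZMod m →ₗ⁅ℤ⁆ LieDerivation ℤ L L}

def prodEquiv (θ : ZMod m →ₗ⁅ℤ⁆ LieDerivation ℤ L L) : LieSD L m θ ≃ L × ZMod m where
  toFun a := (a.fst, a.snd)
  invFun a := ⟨a.1, a.2⟩
  left_inv _ := rfl
  right_inv _ := rfl

instance : AddCommGroup (LieSD L m θ) := (prodEquiv θ).addCommGroup

@[simp] lemma add_fst (a b : LieSD L m θ) : (a + b).fst = a.fst + b.fst := rfl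
@[simp] lemma add_snd (a b : LieSD L m θ) : (a + b).snd = a.snd + b.snd := rfl
@[simp] lemma zero_fst : (0 : LieSD L m θ).fst = 0 := rfl
@[simp] lemma zero_snd : (0 : LieSD L m θ).snd = 0 := rfl
@[simp] lemma mk_fst (a : L) (b : ZMod m) : (LieSD.mk a b : LieSD L m θ).fst = a := rfl
@[simp] lemma mk_snd (a : L) (b : ZMod m) : (LieSD.mk a b : LieSD L m θ).snd = b := rfl

lemma theta_intCast (k : ℤ) : θ ((k : ZMod m)) = k • θ 1 := by
  have h : ((k : ZMod m)) = k • (1 : ZMod m) := by simp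
  rw [h, ← LieHom.coe_toLinearMap, map_zsmul]

lemma theta_comm (a b : ZMod m) (x : L) : θ a (θ b x) = θ b (θ a x) := by
  obtain ⟨j, rfl⟩ := ZMod.intCast_surjective a
  obtain ⟨k, rfl⟩ := ZMod.intCast_surjective b
  have dz : ∀ (k : ℤ) (y : L), θ 1 (k • y) = k • θ 1 y := fun k y =>
    map_zsmul (θ 1).toLinearMap k y
  rw [theta_intCast, theta_intCast]
  simp only [LieDerivation.smul_apply, dz]
  rw [smul_comm]

lemma theta_zero : θ (0 : ZMod m) = 0 := by
  rw [← LieHom.coe_toLinearMap]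
  exact map_zero _

instance : LieRing (LieSD L m θ) :=
  { (inferInstance : AddCommGroup (LieSD L m θ)) with
    bracket := fun a b =>
      ⟨⁅a.fst, b.fst⁆ + (θ b.snd) a.fst - (θ a.snd) b.fst, ⁅a.snd, b.snd⁆⟩
    add_lie := by
      intro x y z
      apply LieSD.ext <;> simp [add_lie, map_add] <;> abel
    lie_add := by
      intro x y z
      apply LieSD.ext <;> simp [lie_add, map_add] <;> abel
    lie_self := by
      intro x
      apply LieSD.ext <;> simp
    leibniz_lie := by
      rintro ⟨x1, x2⟩ ⟨y1, y2⟩ ⟨z1, z2⟩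
      apply LieSD.ext
      · show ⁅x1, ⁅y1, z1⁆ + θ z2 y1 - θ y2 z1⁆ + θ ⁅y2, z2⁆ x1 -
              θ x2 (⁅y1, z1⁆ + θ z2 y1 - θ y2 z1) =
            (⁅⁅x1, y1⁆ + θ y2 x1 - θ x2 y1, z1⁆ +
                θ z2 (⁅x1, y1⁆ + θ y2 x1 - θ x2 y1) - θ ⁅x2, y2⁆ z1) +
              (⁅y1, ⁅x1, z1⁆ + θ z2 x1 - θ x2 z1⁆ + θ ⁅x2, z2⁆ y1 -
                θ y2 (⁅x1, z1⁆ + θ z2 x1 - θ x2 z1))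
        have h1 : ⁅y2, z2⁆ = (0 : ZMod m) := by simp [Ring.lie_def, mul_comm]
        have h2 : ⁅x2, y2⁆ = (0 : ZMod m) := by simp [Ring.lie_def, mul_comm]
        have h3 : ⁅x2, z2⁆ = (0 : ZMod m) := by simp [Ring.lie_def, mul_comm]
        rw [h1, h2, h3, theta_zero]
        simp only [LieDerivation.coe_zero, Pi.zero_apply, add_zero, zero_sub, sub_zero,
          zero_add, lie_add, lie_sub, add_lie, sub_lie, map_add, map_sub,
          LieDerivation.apply_lie_eq_add]
        rw [theta_comm x2 z2 y1, theta_comm y2 x2 z1, theta_comm y2 z2 x1,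
          leibniz_lie x1 y1 z1, ← lie_skew ((θ z2) x1) y1]
        abel
      · show ⁅x2, ⁅y2, z2⁆⁆ = ⁅⁅x2, y2⁆, z2⁆ + ⁅y2, ⁅x2, z2⁆⁆
        exact leibniz_lie x2 y2 z2 }

end LieSD

/-!
The quotient `Q` is the amalgamated sum of `U` and the cyclic group `⟨w⟩` along
`⟨z⟩ = ⟨p^(n-f-m) • w⟩`, where `m = μ₁(U)`, so both groups embed in `Q`. The element `v` is central:
`θ` kills `z`, and since `n - f - m ≥ m` the derivation `p^(n-f-m) • wθ` is zero, `p^m` being the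
exponent of `U`. As `Q = U + ⟨w⟩` with `p^m U = 0`, the exponent of `Q` is the order of `w`, and an
element `u + k • w` killed by `p^m` has `p^(n-f-m) ∣ k`, so that `Ω_m(Q) = U`. Consequently
`ω_i(Q) = ω_i(U)` for `i ≤ m`, while for `i > m` both are at most `1` because `p^m Q ⊆ ⟨w⟩` is
cyclic; hence all the type invariants `μ_j` with `j ≥ 2` agree. Nilpotency comes from an Engel-type
criterion: a Lie algebra `R x + I` is nilpotent when the ideal `I` and the map `ad x` are.
-/

section TypeInvariants

variable {p m : ℕ} {A Q : Type} [AddCommGroup A] [AddCommGroup Q] {g : A →+ Q}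

lemma aOmega_eq_ker (p : ℕ) (A : Type) [AddCommGroup A] (i : ℕ) :
    aOmega p A i = (nsmulAddMonoidHom (p ^ i) : A →+ A).ker :=
  le_antisymm ((AddSubgroup.closure_le _).2 fun _ hx ↦ hx)
    fun _ hx ↦ AddSubgroup.subset_closure hx

lemma mem_aOmega {i : ℕ} {x : A} : x ∈ aOmega p A i ↔ p ^ i • x = 0 := by
  rw [aOmega_eq_ker]
  rfl

lemma aOmega_mono (p : ℕ) (A : Type) [AddCommGroup A] : Monotone (aOmega p A) :=
  fun i j hij x hx ↦ by
    rw [mem_aOmega] at hx ⊢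
    rw [← Nat.sub_add_cancel hij, pow_add, mul_nsmul', hx, nsmul_zero]

lemma aOmega_eq_comap (hg : Function.Injective g) (i : ℕ) :
    aOmega p A i = (aOmega p Q i).comap g := by
  ext x
  rw [AddSubgroup.mem_comap, mem_aOmega, mem_aOmega, ← map_nsmul, map_eq_zero_iff g hg]

lemma aOmegaInv_eq_of_aOmega_le_range (hg : Function.Injective g) {i : ℕ}
    (hi : aOmega p Q i ≤ g.range) : aOmegaInv p A i = aOmegaInv p Q i := by
  rw [aOmegaInv, aOmegaInv, aOmega_eq_comap hg, aOmega_eq_comap hg, AddSubgroup.relIndex_comap,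
    AddSubgroup.map_comap_eq_self hi]

/- `ω_{i+1}` counts the elements of `p^i Ω_{i+1}`, here a cyclic group of exponent dividing `p`. -/
lemma aOmegaInv_succ_le_one (hp : p.Prime) {t : A} {i : ℕ}
    (ht : ∀ x : A, p ^ i • x ∈ AddSubgroup.zmultiples t) : aOmegaInv p A (i + 1) ≤ 1 := by
  rw [aOmegaInv, Nat.add_sub_cancel, aOmega_eq_ker p A i, AddSubgroup.relIndex_ker]
  set M := (aOmega p A (i + 1)).map (nsmulAddMonoidHom (p ^ i))
  have hMt : M ≤ AddSubgroup.zmultiples t := by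
    rintro _ ⟨x, -, rfl⟩
    exact ht x
  have : IsAddCyclic M := AddSubgroup.isAddCyclic_of_le hMt
  have hdvd : Nat.card M ∣ p := by
    rw [← IsAddCyclic.exponent_eq_card, AddMonoid.exponent_dvd_iff_forall_nsmul_eq_zero]
    rintro ⟨_, x, hx, rfl⟩
    refine Subtype.ext ?_
    simpa [← mul_nsmul', ← pow_succ'] using mem_aOmega.1 hx
  calc (Nat.card M).factorization p ≤ p.factorization p :=
        (Nat.factorization_le_iff_dvd (ne_zero_of_dvd_ne_zero hp.ne_zero hdvd) hp.ne_zero).2 hdvd p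
    _ = 1 := hp.factorization_self

lemma aMuInv_eq_of_range_eq_aOmega (hp : p.Prime) (hg : Function.Injective g)
    (hrange : g.range = aOmega p Q m) {t : Q} (ht : ∀ q : Q, p ^ m • q ∈ AddSubgroup.zmultiples t)
    {j : ℕ} (hj : 2 ≤ j) : aMuInv p A j = aMuInv p Q j := by
  refine Nat.card_congr (Equiv.subtypeEquivRight fun i ↦ and_congr_right fun _ ↦ ?_)
  rcases le_or_gt i m with him | him
  · rw [aOmegaInv_eq_of_aOmega_le_range hg ((aOmega_mono p Q him).trans hrange.ge)]
  · obtain ⟨k, rfl⟩ := Nat.exists_eq_add_of_lt him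
    have hA : ∀ a : A, p ^ (m + k) • a ∈ AddSubgroup.zmultiples 0 := fun a ↦ by
      have ha : g a ∈ aOmega p Q (m + k) :=
        aOmega_mono p Q (Nat.le_add_right m k) (hrange ▸ ⟨a, rfl⟩)
      rw [mem_aOmega, ← map_nsmul, map_eq_zero_iff g hg] at ha
      simp [ha]
    have hQ : ∀ q : Q, p ^ (m + k) • q ∈ AddSubgroup.zmultiples t := fun q ↦ by
      rw [pow_add, mul_nsmul]
      exact nsmul_mem (ht q) _
    have := aOmegaInv_succ_le_one hp hA
    have := aOmegaInv_succ_le_one hp hQ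
    omega

end TypeInvariants

lemma nsmul_eq_zero_of_mem_range {A Q : Type*} [AddCommGroup A] [AddCommGroup Q] {f : A →+ Q}
    {n : ℕ} (hA : ∀ a : A, n • a = 0) : ∀ x ∈ f.range, n • x = 0 := by
  rintro _ ⟨a, rfl⟩
  rw [← map_nsmul, hA, map_zero]

lemma zmultiples_eq_top_of_addOrderOf_eq {k : ℕ} [NeZero k] {w : ZMod k} (hw : addOrderOf w = k) :
    AddSubgroup.zmultiples w = ⊤ :=
  AddSubgroup.eq_top_of_card_eq _ (by rw [Nat.card_zmultiples, hw, Nat.card_zmod])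

lemma addOrderOf_nsmul_of_addOrderOf_eq_mul {B : Type*} [AddMonoid B] {w : B} {d e : ℕ}
    (hd : d ≠ 0) (hw : addOrderOf w = e * d) : addOrderOf (d • w) = e := by
  rw [addOrderOf_nsmul_of_dvd hd (hw ▸ dvd_mul_left d e), hw,
    Nat.mul_div_cancel e (Nat.pos_of_ne_zero hd)]

section CyclicExtension

variable {Q : Type*} [AddCommGroup Q] {K : AddSubgroup Q} {t : Q}

lemma nsmul_mem_zmultiples_of_sup_eq_top (hKt : K ⊔ AddSubgroup.zmultiples t = ⊤) {n : ℕ}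
    (hK : ∀ x ∈ K, n • x = 0) (q : Q) : n • q ∈ AddSubgroup.zmultiples t := by
  obtain ⟨x, hx, y, hy, rfl⟩ := AddSubgroup.mem_sup.1 (hKt ▸ AddSubgroup.mem_top q)
  rw [nsmul_add, hK x hx, zero_add]
  exact nsmul_mem hy n

lemma exponent_eq_addOrderOf_of_sup_eq_top (hKt : K ⊔ AddSubgroup.zmultiples t = ⊤)
    (hK : ∀ x ∈ K, addOrderOf t • x = 0) : AddMonoid.exponent Q = addOrderOf t := by
  refine Nat.dvd_antisymm (AddMonoid.exponent_dvd_of_forall_nsmul_eq_zero fun q ↦ ?_)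
    (AddMonoid.addOrder_dvd_exponent t)
  obtain ⟨x, hx, _, ⟨k, rfl⟩, rfl⟩ := AddSubgroup.mem_sup.1 (hKt ▸ AddSubgroup.mem_top q)
  rw [nsmul_add, hK x hx, zero_add, smul_comm, addOrderOf_nsmul_eq_zero, smul_zero]

lemma aOmega_eq_of_sup_eq_top {Q : Type} [AddCommGroup Q] {K : AddSubgroup Q} {t : Q} {p m : ℕ}
    (hp : p ≠ 0) (hKt : K ⊔ AddSubgroup.zmultiples t = ⊤) (hK : ∀ x ∈ K, p ^ m • x = 0) {d : ℕ}
    (ht : addOrderOf t = p ^ m * d) (hdt : d • t ∈ K) : aOmega p Q m = K := by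
  refine le_antisymm (fun q hq ↦ ?_) fun x hx ↦ mem_aOmega.2 (hK x hx)
  obtain ⟨x, hx, _, ⟨k, rfl⟩, rfl⟩ := AddSubgroup.mem_sup.1 (hKt ▸ AddSubgroup.mem_top q)
  have hkt : ((p ^ m : ℕ) * k : ℤ) • t = 0 := by
    simpa [mem_aOmega, hK x hx, mul_smul, ← natCast_zsmul] using hq
  have hdk : (d : ℤ) ∣ k := by
    rw [← addOrderOf_dvd_iff_zsmul_eq_zero, ht, Nat.cast_mul] at hkt
    exact Int.dvd_of_mul_dvd_mul_left (by positivity) hkt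
  obtain ⟨c, rfl⟩ := hdk
  refine add_mem hx ?_
  simpa [mul_comm, mul_smul] using zsmul_mem hdt c

end CyclicExtension

/-- `φ` presents `Q` as the amalgamated sum of `A` and a cyclic group `B = ⟨w⟩`, in which `z : A` is
identified with the multiple `d • w` of the same order. -/
structure IsCyclicAmalgam {A B Q : Type*} [AddCommGroup A] [AddCommGroup B] [AddCommGroup Q]
    (φ : A × B →+ Q) (z : A) (w : B) (d : ℕ) : Prop where
  surjective : Function.Surjective φ
  ker_eq : φ.ker = AddSubgroup.zmultiples (-z, d • w)
  zmultiples_eq_top : AddSubgroup.zmultiples w = ⊤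
  addOrderOf_nsmul : addOrderOf (d • w) = addOrderOf z

namespace IsCyclicAmalgam

section AddCommGroup

variable {A B Q : Type*} [AddCommGroup A] [AddCommGroup B] [AddCommGroup Q]
  {φ : A × B →+ Q} {z : A} {w : B} {d : ℕ}

lemma nsmul_apply_inr (h : IsCyclicAmalgam φ z w d) : d • φ (0, w) = φ (z, 0) := by
  have hmem : φ (-z, d • w) = 0 := by
    rw [← AddMonoidHom.mem_ker, h.ker_eq]
    exact AddSubgroup.mem_zmultiples _
  rw [← sub_eq_zero, ← map_nsmul, ← map_sub]
  simpa using hmem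

lemma zsmul_eq_zero_iff (h : IsCyclicAmalgam φ z w d) (k : ℤ) :
    k • z = 0 ↔ k • d • w = 0 := by
  rw [← addOrderOf_dvd_iff_zsmul_eq_zero, ← h.addOrderOf_nsmul, addOrderOf_dvd_iff_zsmul_eq_zero]

lemma injective_inl (h : IsCyclicAmalgam φ z w d) :
    Function.Injective (φ.comp (AddMonoidHom.inl A B)) := by
  refine (injective_iff_map_eq_zero _).2 fun a ha ↦ ?_
  obtain ⟨k, hk⟩ : (a, 0) ∈ AddSubgroup.zmultiples (-z, d • w) := h.ker_eq ▸ ha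
  obtain ⟨rfl, hkw⟩ := Prod.ext_iff.1 hk
  simpa using (h.zsmul_eq_zero_iff k).2 hkw

lemma injective_inr (h : IsCyclicAmalgam φ z w d) :
    Function.Injective (φ.comp (AddMonoidHom.inr A B)) := by
  refine (injective_iff_map_eq_zero _).2 fun b hb ↦ ?_
  obtain ⟨k, hk⟩ : (0, b) ∈ AddSubgroup.zmultiples (-z, d • w) := h.ker_eq ▸ hb
  obtain ⟨hkz, rfl⟩ := Prod.ext_iff.1 hk
  exact (h.zsmul_eq_zero_iff k).1 (by simpa using hkz)

lemma addOrderOf_apply_inr (h : IsCyclicAmalgam φ z w d) :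
    addOrderOf (φ (0, w)) = addOrderOf w :=
  addOrderOf_injective (φ.comp (AddMonoidHom.inr A B)) h.injective_inr w

lemma addOrderOf_mul_card (h : IsCyclicAmalgam φ z w d) :
    addOrderOf z * Nat.card Q = Nat.card A * Nat.card B := by
  have hindex := φ.ker.card_mul_index
  rwa [AddSubgroup.index_ker, AddMonoidHom.range_eq_top.2 h.surjective, AddSubgroup.card_top,
    h.ker_eq, Nat.card_zmultiples, Prod.addOrderOf, addOrderOf_neg, h.addOrderOf_nsmul,
    Nat.lcm_self, Nat.card_prod] at hindex

lemma card_eq_pow (h : IsCyclicAmalgam φ z w d) {p k m N : ℕ} (hp : 0 < p)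
    (hz : addOrderOf z = p ^ m) (hA : Nat.card A = p ^ (k + m)) (hB : Nat.card B = p ^ N) :
    Nat.card Q = p ^ (k + N) := by
  refine Nat.eq_of_mul_eq_mul_left (Nat.pow_pos hp : 0 < p ^ m) ?_
  rw [← hz, h.addOrderOf_mul_card, hA, hB, hz]
  ring

lemma range_inl_sup_zmultiples (h : IsCyclicAmalgam φ z w d) :
    (φ.comp (AddMonoidHom.inl A B)).range ⊔ AddSubgroup.zmultiples (φ (0, w)) = ⊤ := by
  refine eq_top_iff.2 fun q _ ↦ ?_
  obtain ⟨⟨a, b⟩, rfl⟩ := h.surjective q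
  obtain ⟨k, rfl⟩ : b ∈ AddSubgroup.zmultiples w := h.zmultiples_eq_top ▸ AddSubgroup.mem_top b
  refine AddSubgroup.mem_sup.2 ⟨φ (a, 0), ⟨a, rfl⟩, k • φ (0, w), ⟨k, rfl⟩, ?_⟩
  rw [← map_zsmul, ← map_add]
  simp

lemma exponent_eq (h : IsCyclicAmalgam φ z w d) (hA : ∀ a : A, addOrderOf w • a = 0) :
    AddMonoid.exponent Q = addOrderOf w := by
  rw [← h.addOrderOf_apply_inr] at hA ⊢
  exact exponent_eq_addOrderOf_of_sup_eq_top h.range_inl_sup_zmultiples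
    (nsmul_eq_zero_of_mem_range hA)

end AddCommGroup

section PrimePower

variable {A Q : Type} {B : Type*} [AddCommGroup A] [AddCommGroup B] [AddCommGroup Q]
  {φ : A × B →+ Q} {z : A} {w : B} {d p m : ℕ}

lemma range_inl_eq_aOmega (h : IsCyclicAmalgam φ z w d) (hp : p ≠ 0)
    (hA : ∀ a : A, p ^ m • a = 0) (hw : addOrderOf w = p ^ m * d) :
    (φ.comp (AddMonoidHom.inl A B)).range = aOmega p Q m :=
  (aOmega_eq_of_sup_eq_top hp h.range_inl_sup_zmultiples (nsmul_eq_zero_of_mem_range hA)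
    (h.addOrderOf_apply_inr.trans hw) ⟨z, h.nsmul_apply_inr.symm⟩).symm

lemma aMuInv_eq (h : IsCyclicAmalgam φ z w d) (hp : p.Prime) (hA : ∀ a : A, p ^ m • a = 0)
    (hw : addOrderOf w = p ^ m * d) {j : ℕ} (hj : 2 ≤ j) : aMuInv p Q j = aMuInv p A j :=
  (aMuInv_eq_of_range_eq_aOmega hp h.injective_inl (h.range_inl_eq_aOmega hp.ne_zero hA hw)
    (nsmul_mem_zmultiples_of_sup_eq_top h.range_inl_sup_zmultiples
      (nsmul_eq_zero_of_mem_range hA)) hj).symm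

end PrimePower

end IsCyclicAmalgam

section Nilpotency

lemma lieLCS_eq_lowerCentralSeries (L : Type) [LieRing L] (k : ℕ) :
    lieLCS L k = (LieModule.lowerCentralSeries ℤ L L k).toSubmodule.toAddSubgroup := by
  induction k with
  | zero => simp [lieLCS]
  | succ k ih =>
    rw [LieModule.lowerCentralSeries_succ, LieSubmodule.lieIdeal_oper_eq_linear_span',
      Submodule.span_int_eq_addSubgroupClosure, lieLCS, ih]
    refine le_antisymm ?_ ?_ <;> refine (AddSubgroup.closure_le _).2 ?_
    · rintro _ ⟨y, hy, x, rfl⟩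
      rw [← lie_skew, SetLike.mem_coe, neg_mem_iff]
      exact AddSubgroup.subset_closure ⟨x, LieSubmodule.mem_top x, y, hy, rfl⟩
    · rintro _ ⟨x, -, y, hy, rfl⟩
      rw [← lie_skew, SetLike.mem_coe, neg_mem_iff]
      exact AddSubgroup.subset_closure ⟨y, hy, x, rfl⟩

lemma isNilpotentLieRing_iff {L : Type} [LieRing L] :
    IsNilpotentLieRing L ↔ LieRing.IsNilpotent L := by
  refine Iff.trans ?_ (LieModule.isNilpotent_iff ℤ L L).symm
  refine exists_congr fun k ↦ ?_
  rw [lieLCS_eq_lowerCentralSeries, ← LieSubmodule.toSubmodule_eq_bot,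
    ← Submodule.toAddSubgroup_inj, Submodule.bot_toAddSubgroup]

variable {R L : Type*} [CommRing R] [LieRing L] [LieAlgebra R L]

lemma lie_mem_of_span_sup_eq_top {I : LieIdeal R L} {x : L}
    (hxI : R ∙ x ⊔ I.toSubmodule = ⊤) (a b : L) : ⁅a, b⁆ ∈ I := by
  obtain ⟨r, u, hu, rfl⟩ := LieSubmodule.exists_smul_add_of_span_sup_eq_top hxI a
  obtain ⟨s, v, hv, rfl⟩ := LieSubmodule.exists_smul_add_of_span_sup_eq_top hxI b
  simpa using add_mem (I.smul_mem s (lie_mem_left R L I u x hu))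
    (add_mem (I.smul_mem r (I.lie_mem hv)) (I.lie_mem hv))

/- `L` acts nilpotently on `I`, so `I` lies in the upper central series of `L`; and `L / I`
is abelian. -/
lemma lieRing_isNilpotent_of_span_sup_eq_top {I : LieIdeal R L} [LieRing.IsNilpotent I] {x : L}
    (hxI : R ∙ x ⊔ I.toSubmodule = ⊤) (hx : IsNilpotent (LieAlgebra.ad R L x)) :
    LieRing.IsNilpotent L := by
  have hIx : IsNilpotent (LieModule.toEnd R L I x) := by
    obtain ⟨k, hk⟩ := hx
    refine ⟨k, LinearMap.ext fun y ↦ Subtype.ext ?_⟩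
    rw [LieSubmodule.coe_toEnd_pow, ← LieAlgebra.ad, hk]
    simp
  have hLI : LieModule.IsNilpotent L I :=
    LieSubmodule.isNilpotentOfIsNilpotentSpanSupEqTop hxI hIx ‹_›
  obtain ⟨k, hk⟩ := I.isNilpotent_iff_exists_self_le_ucs.1 hLI
  refine (LieModule.isNilpotent_iff_exists_ucs_eq_top R).2 ⟨k + 1, eq_top_iff.2 fun a _ ↦ ?_⟩
  rw [LieSubmodule.ucs_succ, LieSubmodule.mem_normalizer]
  exact fun b ↦ hk (lie_mem_of_span_sup_eq_top hxI b a)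

end Nilpotency

/-- The quotient map `L → L ⧸ I` as a homomorphism of Lie algebras; `LieSubmodule.Quotient.mk' I`
is the same map as a homomorphism of Lie modules over `L`. -/
def lieQuotientMk {R L : Type*} [CommRing R] [LieRing L] [LieAlgebra R L] (I : LieIdeal R L) :
    L →ₗ⁅R⁆ L ⧸ I where
  toLinearMap := (LieSubmodule.Quotient.mk' I).toLinearMap
  map_lie' {a b} := LieSubmodule.Quotient.mk_bracket I a b

lemma lieRing_isNilpotent_quotient {R L : Type*} [CommRing R] [LieRing L] [LieAlgebra R L]
    [LieRing.IsNilpotent L] (I : LieIdeal R L) : LieRing.IsNilpotent (L ⧸ I) :=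
  Function.Surjective.lieAlgebra_isNilpotent (f := lieQuotientMk I)
    (LieSubmodule.Quotient.surjective_mk' I)

lemma lie_mem_zmultiples_of_mem_center {L : Type*} [LieRing L] {v : L}
    (hv : v ∈ LieAlgebra.center ℤ L) {a : L} (ha : a ∈ AddSubgroup.zmultiples v) (b : L) :
    ⁅a, b⁆ ∈ AddSubgroup.zmultiples v ∧ ⁅b, a⁆ ∈ AddSubgroup.zmultiples v := by
  obtain ⟨k, rfl⟩ := ha
  have hba : ⁅b, k • v⁆ = 0 := (LieAlgebra.center ℤ L).smul_mem k hv b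
  have hab : ⁅k • v, b⁆ = 0 := by rw [← lie_skew, hba, neg_zero]
  exact ⟨hab ▸ zero_mem _, hba ▸ zero_mem _⟩

namespace LieSD

variable {L : Type} {m : ℕ} [LieRing L] {θ : ZMod m →ₗ⁅ℤ⁆ LieDerivation ℤ L L}

lemma lie_eq (a b : LieSD L m θ) :
    ⁅a, b⁆ = ⟨⁅a.fst, b.fst⁆ + θ b.snd a.fst - θ a.snd b.fst, 0⟩ :=
  LieSD.ext rfl <| (Ring.lie_def a.snd b.snd).trans <| by rw [mul_comm, sub_self]

lemma mk_mem_center {z : L} (hz : z ∈ LieAlgebra.center ℤ L) (hθz : ∀ c, θ c z = 0) {c : ZMod m}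
    (hc : θ c = 0) : (⟨z, c⟩ : LieSD L m θ) ∈ LieAlgebra.center ℤ (LieSD L m θ) := by
  intro b
  have hbz : ⁅b.fst, z⁆ = 0 := hz b.fst
  rw [lie_eq]
  exact LieSD.ext (by simp [hbz, hc, hθz]) rfl

lemma theta_nsmul_eq_zero {k : ℕ} (hL : ∀ x : L, k • x = 0) (c : ZMod m) : θ (k • c) = 0 := by
  ext x
  rw [map_nsmul]
  exact hL _

/-- The underlying additive group of a semidirect product. -/
def addEquivProd (θ : ZMod m →ₗ⁅ℤ⁆ LieDerivation ℤ L L) : LieSD L m θ ≃+ L × ZMod m where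
  toEquiv := prodEquiv θ
  map_add' _ _ := rfl

/-- The embedding of `L` into a semidirect product. -/
def inl (θ : ZMod m →ₗ⁅ℤ⁆ LieDerivation ℤ L L) : L →ₗ⁅ℤ⁆ LieSD L m θ where
  toLinearMap := ((addEquivProd θ).symm.toAddMonoidHom.comp
    (AddMonoidHom.inl L (ZMod m))).toIntLinearMap
  map_lie' {a b} := by
    change (⟨⁅a, b⁆, 0⟩ : LieSD L m θ) = ⁅(⟨a, 0⟩ : LieSD L m θ), (⟨b, 0⟩ : LieSD L m θ)⁆
    simp [lie_eq, theta_zero]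

@[simp] lemma inl_apply (x : L) : inl θ x = ⟨x, 0⟩ := rfl

/-- The projection of a semidirect product onto its cyclic factor, which has kernel `L`. -/
def sndHom (θ : ZMod m →ₗ⁅ℤ⁆ LieDerivation ℤ L L) : LieSD L m θ →ₗ⁅ℤ⁆ ZMod m where
  toLinearMap := ((AddMonoidHom.snd L (ZMod m)).comp
    (addEquivProd θ).toAddMonoidHom).toIntLinearMap
  map_lie' := rfl

lemma isNilpotent_ker_sndHom [LieRing.IsNilpotent L] (θ : ZMod m →ₗ⁅ℤ⁆ LieDerivation ℤ L L) :
    LieRing.IsNilpotent (sndHom θ).ker := by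
  have hsnd (a : (sndHom θ).ker) : a.1.snd = 0 := LieHom.mem_ker.1 a.2
  let fstHom : (sndHom θ).ker →ₗ⁅ℤ⁆ L :=
    { toFun a := a.1.fst
      map_add' _ _ := rfl
      map_smul' k a := map_zsmul ((AddMonoidHom.fst _ _).comp (addEquivProd θ).toAddMonoidHom) k a.1
      map_lie' {a b} := by simp [lie_eq, hsnd, theta_zero] }
  have hinj : Function.Injective fstHom := fun a b hab ↦
    Subtype.ext (LieSD.ext hab ((hsnd a).trans (hsnd b).symm))
  exact hinj.lieAlgebra_isNilpotent

lemma lie_mk_zero (c : ZMod m) (a : LieSD L m θ) :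
    ⁅(⟨0, c⟩ : LieSD L m θ), a⁆ = inl θ (-θ c a.fst) := by
  simp [lie_eq]

lemma ad_mk_zero_pow_succ (c : ZMod m) (k : ℕ) (a : LieSD L m θ) :
    (LieAlgebra.ad ℤ (LieSD L m θ) ⟨0, c⟩ ^ (k + 1)) a =
      inl θ (((-(θ c).toLinearMap : Module.End ℤ L) ^ (k + 1)) a.fst) := by
  induction k with
  | zero => simpa using lie_mk_zero c a
  | succ k ih =>
    rw [pow_succ', Module.End.mul_apply, ih, LieAlgebra.ad_apply, lie_mk_zero, pow_succ' _ (k + 1)]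
    rfl

lemma isNilpotent [LieRing.IsNilpotent L] {w : ZMod m} (hw : AddSubgroup.zmultiples w = ⊤)
    (hθ : IsNilpotent ((θ w).toLinearMap : Module.End ℤ L)) :
    LieRing.IsNilpotent (LieSD L m θ) := by
  have := isNilpotent_ker_sndHom θ
  refine lieRing_isNilpotent_of_span_sup_eq_top (R := ℤ) (I := (sndHom θ).ker) (x := ⟨0, w⟩) ?_ ?_
  · refine eq_top_iff.2 fun a _ ↦ ?_
    obtain ⟨k, hk⟩ : a.snd ∈ AddSubgroup.zmultiples w := hw ▸ AddSubgroup.mem_top _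
    have hker : a - k • ⟨0, w⟩ ∈ (sndHom θ).ker := by
      rw [LieHom.mem_ker, map_sub, map_zsmul, sub_eq_zero]
      exact hk.symm
    exact Submodule.mem_sup.2 ⟨_, Submodule.smul_mem _ k (Submodule.mem_span_singleton_self _),
      _, hker, add_sub_cancel _ _⟩
  · obtain ⟨k, hk⟩ := hθ.neg
    refine ⟨k + 1, LinearMap.ext fun a ↦ ?_⟩
    rw [ad_mk_zero_pow_succ, pow_succ, hk]
    exact map_zero (inl θ)

/-- The quotient map of a semidirect product `L ⋊ ℤ/mℤ`, on the underlying additive group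
`L × ℤ/mℤ`. -/
def quotientMap (I : LieIdeal ℤ (LieSD L m θ)) : L × ZMod m →+ LieSD L m θ ⧸ I :=
  (lieQuotientMk I).toLinearMap.toAddMonoidHom.comp (addEquivProd θ).symm.toAddMonoidHom

lemma quotientMap_inl_lie (I : LieIdeal ℤ (LieSD L m θ)) (x y : L) :
    quotientMap I (⁅x, y⁆, 0) = ⁅quotientMap I (x, 0), quotientMap I (y, 0)⁆ :=
  ((lieQuotientMk I).comp (inl θ)).map_lie x y

lemma isCyclicAmalgam_quotientMap {I : LieIdeal ℤ (LieSD L m θ)} {z : L} {w : ZMod m} {d : ℕ}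
    (hI : (I : Set (LieSD L m θ)) =
      (AddSubgroup.zmultiples ⟨-z, d • w⟩ : AddSubgroup (LieSD L m θ)))
    (hw : AddSubgroup.zmultiples w = ⊤) (hdw : addOrderOf (d • w) = addOrderOf z) :
    IsCyclicAmalgam (quotientMap I) z w d where
  surjective := (LieSubmodule.Quotient.surjective_mk' I).comp (addEquivProd θ).symm.surjective
  ker_eq := by
    ext a
    have hmem : (addEquivProd θ).symm a ∈ I ↔
        (addEquivProd θ).symm a ∈ AddSubgroup.zmultiples ((addEquivProd θ).symm (-z, d • w)) :=
      Set.ext_iff.1 hI _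
    refine ((LieSubmodule.Quotient.mk_eq_zero I).trans hmem).trans ?_
    simp_rw [AddSubgroup.mem_zmultiples_iff, ← map_zsmul, (addEquivProd θ).symm.injective.eq_iff]
  zmultiples_eq_top := hw
  addOrderOf_nsmul := hdw

end LieSD

/-- Let `U` be a Lie ring satisfying P-1 – P-3, `z` a central element of
order `p ^ μ₁(U)`, `n - f ≥ 2μ₁(U)`, `w` a generator of `ℤ/p^(n-f)ℤ` (an abelian Lie ring),
and `θ : (ℤ/p^(n-f)ℤ)w → Der(U)_z` a Lie ring homomorphism.  Then, writing
`v = p^(n-f-μ₁(U))·w - z` in the semidirect product `U ⋊_θ ℤ/p^(n-f)ℤ`: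
(1) the subgroup `⟨v⟩` is an ideal; (2) the quotient `U(n-f,w,wθ,z)` is a Lie ring of order
`p ^ n` with additive coexponent `f`; (3) `μ₂(U(n-f,w,wθ,z)) = μ₁(U)` and
`Ω_{μ₁(U)}(U(n-f,w,wθ,z)) ≅ U`; (4) if `wθ` is nilpotent then so is `U(n-f,w,wθ,z)`. -/
theorem lieSD_quotient_properties
    (p f n : ℕ) (hp : p.Prime) (hf : 1 ≤ f) (hfn : f ≤ n)
    (U : Type) [LieRing U] [Finite U]
    -- P-1 : `U` is nilpotent, has additive coexponent `f`, and `μ₁(U) = μ₂(U) ≤ f`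
    (hnil : IsNilpotentLieRing U)
    (hcoexp : ∃ e : ℕ, AddMonoid.exponent U = p ^ e ∧ (f + aMuInv p U 1) - e = f)
    (hμeq : aMuInv p U 1 = aMuInv p U 2) (hμf : aMuInv p U 1 ≤ f)
    -- P-2 : `|U| = p ^ (f + μ₁(U))`
    (hcard : Nat.card U = p ^ (f + aMuInv p U 1))
    -- P-3 and the choice of `z` : a central element of order `p ^ μ₁(U)`
    (z : U) (hzc : ∀ u : U, ⁅z, u⁆ = 0)
    (hzo : addOrderOf z = p ^ aMuInv p U 1)
    -- `n - f ≥ 2μ₁(U)`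
    (hn : 2 * aMuInv p U 1 ≤ n - f)
    -- `w` a generator of `ℤ/p^(n-f)ℤ`
    (w : ZMod (p ^ (n - f))) (hw : addOrderOf w = p ^ (n - f))
    -- `θ` a Lie ring homomorphism into `Der(U)_z`
    (θ : ZMod (p ^ (n - f)) →ₗ⁅ℤ⁆ LieDerivation ℤ U U)
    (hθz : ∀ c : ZMod (p ^ (n - f)), (θ c) z = 0) :
    let v : LieSD U (p ^ (n - f)) θ := ⟨-z, p ^ (n - f - aMuInv p U 1) • w⟩
    -- (1) `⟨v⟩` is an ideal of `U ⋊_θ (ℤ/p^(n-f)ℤ)w`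
    (∀ b : LieSD U (p ^ (n - f)) θ, ∀ a ∈ AddSubgroup.zmultiples v,
        ⁅a, b⁆ ∈ AddSubgroup.zmultiples v ∧ ⁅b, a⁆ ∈ AddSubgroup.zmultiples v) ∧
    -- and for the corresponding Lie ideal `I`, the quotient `U(n-f,w,wθ,z)` satisfies:
    ∀ I : LieIdeal ℤ (LieSD U (p ^ (n - f)) θ),
      (I : Set (LieSD U (p ^ (n - f)) θ)) =
          (AddSubgroup.zmultiples v : Set (LieSD U (p ^ (n - f)) θ)) →
      -- (2) it is a Lie ring of order `p ^ n` and additive coexponent `f`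
      (Nat.card (LieSD U (p ^ (n - f)) θ ⧸ I) = p ^ n ∧
        (∃ e : ℕ,
          AddMonoid.exponent (LieSD U (p ^ (n - f)) θ ⧸ I) = p ^ e ∧ n - e = f)) ∧
      -- (3) `μ₂` of the quotient is `μ₁(U)`, and `Ω_{μ₁(U)}` of the quotient is
      -- isomorphic to `U` (as a Lie ring)
      (aMuInv p (LieSD U (p ^ (n - f)) θ ⧸ I) 2 = aMuInv p U 1 ∧
        ∃ g : U →+ (LieSD U (p ^ (n - f)) θ ⧸ I),
          Function.Injective g ∧
          (∀ x y : U, g ⁅x, y⁆ = ⁅g x, g y⁆) ∧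
          g.range = aOmega p (LieSD U (p ^ (n - f)) θ ⧸ I) (aMuInv p U 1)) ∧
      -- (4) if `wθ` is nilpotent then the quotient is a nilpotent Lie ring
      ((∃ k : ℕ, ((θ w).toLinearMap : Module.End ℤ U) ^ k = 0) →
        IsNilpotentLieRing (LieSD U (p ^ (n - f)) θ ⧸ I)) := by
  intro v
  have : NeZero p := ⟨hp.ne_zero⟩
  obtain ⟨e, hexp, he⟩ := hcoexp
  have hU {k : ℕ} (hk : aMuInv p U 1 ≤ k) : ∀ u : U, p ^ k • u = 0 :=
    AddMonoid.exponent_dvd_iff_forall_nsmul_eq_zero.1 (hexp ▸ pow_dvd_pow p (by omega))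
  have hwtop : AddSubgroup.zmultiples w = ⊤ := zmultiples_eq_top_of_addOrderOf_eq hw
  have hw_mul : addOrderOf w = p ^ aMuInv p U 1 * p ^ (n - f - aMuInv p U 1) := by
    rw [hw, ← pow_add, Nat.add_sub_cancel' (by omega)]
  have hz : z ∈ LieAlgebra.center ℤ U := fun u ↦ by rw [← lie_skew, hzc, neg_zero]
  have hv : v ∈ LieAlgebra.center ℤ (LieSD U (p ^ (n - f)) θ) :=
    LieSD.mk_mem_center (neg_mem hz) (by simp [hθz]) (LieSD.theta_nsmul_eq_zero (hU (by omega)) w)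
  refine ⟨fun b a ha ↦ lie_mem_zmultiples_of_mem_center hv ha b, fun I hI ↦ ?_⟩
  have hQ := LieSD.isCyclicAmalgam_quotientMap hI hwtop
    ((addOrderOf_nsmul_of_addOrderOf_eq_mul (NeZero.ne _) hw_mul).trans hzo.symm)
  refine ⟨⟨?_, n - f, ?_, by omega⟩, ⟨?_, _, hQ.injective_inl, LieSD.quotientMap_inl_lie I,
    hQ.range_inl_eq_aOmega hp.ne_zero (hU le_rfl) hw_mul⟩, fun hθw ↦ ?_⟩
  · rw [hQ.card_eq_pow hp.pos hzo hcard (Nat.card_zmod _), Nat.add_sub_cancel' hfn]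
  · rw [hQ.exponent_eq (hw.symm ▸ hU (by omega)), hw]
  · rw [hQ.aMuInv_eq hp (hU le_rfl) hw_mul le_rfl, ← hμeq]
  · have := isNilpotentLieRing_iff.1 hnil
    have := LieSD.isNilpotent hwtop hθw
    exact isNilpotentLieRing_iff.2 (lieRing_isNilpotent_quotient I)
end

section
/- Let p be a prime, f a positive integer, and let U be a Lie ring satisfying: (P-1) U is nilpotent, has additive coexponent f, and μ_1(U) = μ_2(U) ≤ f; (P-2) |U| = p^{f + μ_1(U)}; (P-3) U possesses a central element of order p^{μ_1(U)}. Let n - f ≥ 2μ_1(U), let z, z' be central elements of U of order p^{μ_1(U)}, let w, w' be generators of ℤ/p^{n-f}ℤ, and let θ, θ' be Lie ring homomorphisms from (ℤ/p^{n-f}ℤ)w and (ℤ/p^{n-f}ℤ)w' into Der(U)_z and Der(U)_{z'} respectively. Then U(n-f, w, wθ, z) ≅ U(n-f, w', w'θ', z') if and only if there exists a Lie ring automorphism π of U such that (1) zπ = α z' for some integer α coprime to p, and (2) π^{-1}(wθ)π = ad_r x + α(w'θ') for some x ∈ U. -/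
attribute [local instance 100] LieRing.ofAssociativeRing

/-!
Each `U(n-f, w, wθ, z)` is an extension of the cyclic group of order `P = p^(n-f-μ₁(U))` by `U`,
together with an element `W` that generates it modulo `U`, acts on `U` as `wθ` and satisfies
`P • W = z`; these data determine the extension. As `z` has order `p^μ₁(U)`, the copy of `U` is the
`p^μ₁(U)`-torsion of the extension, so an isomorphism restricts to an automorphism `π` of `U`.
It sends `W` to some `x + α • W'`, and comparing multiples by `P` and actions on `U` gives (1) and
(2), while `α` is coprime to `P` because `x + α • W'` again generates modulo `U`.
Conversely, given `π`, `α` and `x`, replacing `W'` by `x + α • W'` presents both extensions by the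
same data.
-/

lemma exists_addEquiv_of_ker_eq {A B C : Type*} [AddCommGroup A] [AddCommGroup B] [AddCommGroup C]
    {f : A →+ B} {g : A →+ C} (hf : Function.Surjective f) (hg : Function.Surjective g)
    (h : f.ker = g.ker) : ∃ e : B ≃+ C, ∀ a, e (f a) = g a := by
  let F := QuotientAddGroup.quotientKerEquivOfSurjective f hf
  let G := QuotientAddGroup.quotientKerEquivOfSurjective g hg
  refine ⟨F.symm.trans ((QuotientAddGroup.quotientAddEquivOfEq h).trans G), fun a => ?_⟩
  have hF : F.symm (f a) = QuotientAddGroup.mk a := F.symm_apply_eq.mpr rfl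
  rw [AddEquiv.trans_apply, hF]
  rfl

lemma exists_zsmul_eq_of_addOrderOf_eq_card {G : Type*} [AddGroup G] [Finite G] {w : G}
    (hw : addOrderOf w = Nat.card G) (g : G) : ∃ k : ℤ, k • w = g := by
  have htop : AddSubgroup.zmultiples w = ⊤ := by
    rw [← AddSubgroup.card_eq_iff_eq_top, Nat.card_zmultiples, hw]
  exact AddSubgroup.mem_zmultiples_iff.mp (htop ▸ AddSubgroup.mem_top g)

lemma exponent_eq_pow_of_coexponent {A : Type*} [AddMonoid A] {p f m : ℕ} (hf : 1 ≤ f)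
    (h : ∃ e : ℕ, AddMonoid.exponent A = p ^ e ∧ f + m - e = f) :
    AddMonoid.exponent A = p ^ m := by
  obtain ⟨e, hexp, he⟩ := h
  obtain rfl : e = m := by omega
  exact hexp

lemma ne_zero_of_exponent_eq_pow {A : Type*} [AddMonoid A] {p m k : ℕ} (hp : 1 < p) (hk : k ≠ 0)
    (hexp : AddMonoid.exponent A = p ^ m) (hcard : Nat.card A = p ^ k) : m ≠ 0 := by
  rintro rfl
  have : Subsingleton A := AddMonoid.exp_eq_one_iff.mp (by rw [hexp, pow_zero])
  have : Nonempty A := ⟨0⟩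
  exact (Nat.one_lt_pow hk hp).ne (by rw [← hcard, Nat.card_unique])

/-- An additive isomorphism preserving brackets, as an isomorphism of Lie algebras over `ℤ`. -/
def lieEquivOfAddEquiv {L M : Type*} [LieRing L] [LieRing M] (e : L ≃+ M)
    (he : ∀ x y, e ⁅x, y⁆ = ⁅e x, e y⁆) : L ≃ₗ⁅ℤ⁆ M :=
  { e.toIntLinearEquiv with map_lie' := he _ _ }

lemma exists_lieEquiv_of_map_range_eq {L M A B : Type*} [LieRing L] [LieRing M] [LieRing A]
    [LieRing B] {i : L →ₗ⁅ℤ⁆ A} {j : M →ₗ⁅ℤ⁆ B} (hi : Function.Injective i)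
    (hj : Function.Injective j) (e : A ≃ₗ⁅ℤ⁆ B)
    (h : i.range.map (e : A →ₗ⁅ℤ⁆ B) = j.range) :
    ∃ π : L ≃ₗ⁅ℤ⁆ M, ∀ u, j (π u) = e (i u) := by
  let I := LieEquiv.ofInjective i hi
  let J := LieEquiv.ofInjective j hj
  refine ⟨I.trans ((e.ofSubalgebras _ _ h).trans J.symm), fun u => ?_⟩
  exact congrArg Subtype.val (J.apply_symm_apply (e.ofSubalgebras _ _ h (I u)))

/-- `Q` is an extension, via `i`, of the cyclic group of order `P` by the Lie ring `U`; the element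
`W` generates `Q` modulo `U`, acts on `U` (on the right) as the derivation `D`, and its multiple
`P • W` is `z`. The parameter `P = 0` stands for an infinite cyclic quotient. -/
structure IsCyclicExtension {U Q : Type*} [LieRing U] [LieRing Q] (i : U →ₗ⁅ℤ⁆ Q) (W : Q)
    (D : LieDerivation ℤ U U) (P : ℕ) (z : U) : Prop where
  injective : Function.Injective i
  lie_gen : ∀ u, ⁅i u, W⁆ = i (D u)
  exists_eq_add_zsmul : ∀ q, ∃ (u : U) (k : ℤ), q = i u + k • W
  nsmul_gen : P • W = i z
  dvd_of_zsmul_gen_mem : ∀ k : ℤ, k • W ∈ i.range → (P : ℤ) ∣ k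

namespace IsCyclicExtension

variable {U V Q Q' : Type*} [LieRing U] [LieRing V] [LieRing Q] [LieRing Q']
  {i : U →ₗ⁅ℤ⁆ Q} {i' : V →ₗ⁅ℤ⁆ Q'} {W : Q} {W' : Q'}
  {D : LieDerivation ℤ U U} {D' : LieDerivation ℤ V V} {P R : ℕ} {z : U} {z' : V}

lemma of_add_zsmul_gen_eq_zero_iff (hP : P ≠ 0) (lie_gen : ∀ u, ⁅i u, W⁆ = i (D u))
    (exists_eq_add_zsmul : ∀ q, ∃ (u : U) (k : ℤ), q = i u + k • W)
    (add_zsmul_gen_eq_zero_iff : ∀ (u : U) (k : ℤ),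
      i u + k • W = 0 ↔ ∃ j : ℤ, k = P * j ∧ u = -(j • z)) : IsCyclicExtension i W D P z where
  injective := by
    refine (injective_iff_map_eq_zero i).mpr fun u hu => ?_
    obtain ⟨j, hj, rfl⟩ := (add_zsmul_gen_eq_zero_iff u 0).mp (by rw [hu, zero_smul, add_zero])
    obtain rfl : j = 0 := (mul_eq_zero_iff_left (Nat.cast_ne_zero.mpr hP)).mp hj.symm
    rw [zero_smul, neg_zero]
  lie_gen := lie_gen
  exists_eq_add_zsmul := exists_eq_add_zsmul
  nsmul_gen := by
    have hrel : i (-z) + (P : ℤ) • W = 0 :=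
      (add_zsmul_gen_eq_zero_iff _ _).mpr ⟨1, (mul_one _).symm, by rw [one_smul]⟩
    rwa [map_neg, neg_add_eq_zero, natCast_zsmul, eq_comm] at hrel
  dvd_of_zsmul_gen_mem k := by
    rintro ⟨u, hu⟩
    have huk : i (-u) + k • W = 0 := by
      rw [map_neg, neg_add_eq_zero]
      exact hu
    obtain ⟨j, hj, -⟩ := (add_zsmul_gen_eq_zero_iff _ _).mp huk
    exact ⟨j, hj⟩

lemma mul_zsmul_gen (h : IsCyclicExtension i W D P z) (j : ℤ) : (P * j : ℤ) • W = i (j • z) := by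
  rw [mul_comm, mul_smul, natCast_zsmul, h.nsmul_gen, map_zsmul]

lemma add_zsmul_gen_eq_zero_iff (h : IsCyclicExtension i W D P z) (u : U) (k : ℤ) :
    i u + k • W = 0 ↔ ∃ j : ℤ, k = P * j ∧ u = -(j • z) := by
  constructor
  · intro huk
    obtain ⟨j, rfl⟩ := h.dvd_of_zsmul_gen_mem k
      ⟨-u, by rw [LieHom.coe_toLinearMap, map_neg, neg_eq_of_add_eq_zero_right huk]⟩
    rw [h.mul_zsmul_gen, ← map_add] at huk
    exact ⟨j, rfl, eq_neg_of_add_eq_zero_left (h.injective (huk.trans (map_zero i).symm))⟩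
  · rintro ⟨j, rfl, rfl⟩
    rw [h.mul_zsmul_gen, map_neg, neg_add_cancel]

lemma lie_add_zsmul_gen (h : IsCyclicExtension i W D P z) (u v : U) (k l : ℤ) :
    ⁅i u + k • W, i v + l • W⁆ = i (⁅u, v⁆ + l • D u - k • D v) := by
  have hskew : ⁅W, i v⁆ = -i (D v) := by rw [← h.lie_gen, lie_skew]
  simp only [add_lie, lie_add, lie_zsmul, zsmul_lie, h.lie_gen, hskew, lie_self, smul_zero,
    smul_neg, map_add, map_sub, map_zsmul, LieHom.map_lie]
  abel

theorem nonempty_lieEquiv (h : IsCyclicExtension i W D P z) {j : U →ₗ⁅ℤ⁆ Q'}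
    (h' : IsCyclicExtension j W' D P z) : Nonempty (Q ≃ₗ⁅ℤ⁆ Q') := by
  let g : U × ℤ →+ Q := (i : U →+ Q).coprod (zmultiplesHom Q W)
  let g' : U × ℤ →+ Q' := (j : U →+ Q').coprod (zmultiplesHom Q' W')
  have hg : Function.Surjective g := fun q =>
    let ⟨u, k, hq⟩ := h.exists_eq_add_zsmul q
    ⟨(u, k), hq.symm⟩
  have hg' : Function.Surjective g' := fun q =>
    let ⟨u, k, hq⟩ := h'.exists_eq_add_zsmul q
    ⟨(u, k), hq.symm⟩
  have hker : g.ker = g'.ker := by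
    ext ⟨u, k⟩
    exact (h.add_zsmul_gen_eq_zero_iff u k).trans (h'.add_zsmul_gen_eq_zero_iff u k).symm
  obtain ⟨e, he⟩ := exists_addEquiv_of_ker_eq hg hg' hker
  have he' (u : U) (k : ℤ) : e (i u + k • W) = j u + k • W' := he (u, k)
  have hei (u : U) : e (i u) = j u := by simpa using he' u 0
  refine ⟨lieEquivOfAddEquiv e fun a b => ?_⟩
  obtain ⟨u, k, rfl⟩ := h.exists_eq_add_zsmul a
  obtain ⟨v, l, rfl⟩ := h.exists_eq_add_zsmul b
  rw [h.lie_add_zsmul_gen, hei, he', he', h'.lie_add_zsmul_gen]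

theorem change_gen (h' : IsCyclicExtension i' W' D' P z') (hP : ∀ v : V, P • v = 0)
    (π : U ≃ₗ⁅ℤ⁆ V) {α : ℤ} (hα : IsCoprime α P) (hz : π z = α • z') (x : V)
    (hD : ∀ v, π (D (π.symm v)) = ⁅v, x⁆ + α • D' v) :
    IsCyclicExtension (i'.comp (π : U →ₗ⁅ℤ⁆ V)) (i' x + α • W') D P z where
  injective := h'.injective.comp π.injective
  lie_gen u := by
    have hDu := hD (π u)
    rw [π.symm_apply_apply] at hDu
    simp [hDu, h'.lie_gen]
  exists_eq_add_zsmul q := by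
    obtain ⟨v, k, rfl⟩ := h'.exists_eq_add_zsmul q
    obtain ⟨β, γ, hβ⟩ := hα
    have hW' : W' = (β * α) • W' + i' (γ • z') := by
      rw [← h'.mul_zsmul_gen, ← add_smul, mul_comm (P : ℤ), hβ, one_smul]
    refine ⟨π.symm (v + k • γ • z' - (k * β) • x), k * β, ?_⟩
    conv_lhs => rw [hW']
    simp only [LieHom.comp_apply, LieEquiv.coe_toLieHom, LieEquiv.apply_symm_apply, map_add,
      map_sub, map_zsmul, smul_add, mul_smul]
    abel
  nsmul_gen := by
    rw [smul_add, ← map_nsmul, hP, map_zero, zero_add, smul_comm, h'.nsmul_gen, ← map_zsmul, ← hz]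
    rfl
  dvd_of_zsmul_gen_mem k := by
    rintro ⟨u, hu⟩
    have hmem : (k * α) • W' ∈ i'.range := by
      refine ⟨π u - k • x, ?_⟩
      change i' (π u) = k • (i' x + α • W') at hu
      rw [LieHom.coe_toLinearMap, map_sub, hu, map_zsmul, mul_smul, smul_add, add_sub_cancel_left]
    exact hα.symm.dvd_of_dvd_mul_right (h'.dvd_of_zsmul_gen_mem _ hmem)

lemma mem_range_iff_nsmul_eq_zero (h : IsCyclicExtension i W D P z) (hR : R ≠ 0)
    (hU : ∀ u : U, R • u = 0) (hz : addOrderOf z = R) (q : Q) : q ∈ i.range ↔ R • q = 0 := by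
  constructor
  · rintro ⟨u, rfl⟩
    rw [← map_nsmul, hU, map_zero]
  · intro hq
    obtain ⟨u, k, rfl⟩ := h.exists_eq_add_zsmul q
    have hRk : i 0 + (R * k : ℤ) • W = 0 := by
      rw [smul_add, ← map_nsmul, hU] at hq
      rwa [mul_smul, natCast_zsmul]
    obtain ⟨j, hj, hjz⟩ := (h.add_zsmul_gen_eq_zero_iff _ _).mp hRk
    obtain ⟨s, rfl⟩ : (R : ℤ) ∣ j := by
      rw [← hz, addOrderOf_dvd_iff_zsmul_eq_zero, ← neg_eq_zero, ← hjz]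
    have hk : k = P * s := mul_left_cancel₀ (Nat.cast_ne_zero.mpr hR) (hj.trans (by ring))
    exact ⟨u + s • z, by rw [hk, h.mul_zsmul_gen, ← map_add]; rfl⟩

lemma map_range_eq_range (h : IsCyclicExtension i W D P z) (h' : IsCyclicExtension i' W' D' P z')
    (hR : R ≠ 0) (hU : ∀ u : U, R • u = 0) (hV : ∀ v : V, R • v = 0)
    (hz : addOrderOf z = R) (hz' : addOrderOf z' = R) (e : Q ≃ₗ⁅ℤ⁆ Q') :
    i.range.map (e : Q →ₗ⁅ℤ⁆ Q') = i'.range := by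
  ext q
  rw [h'.mem_range_iff_nsmul_eq_zero hR hV hz', LieSubalgebra.mem_map]
  constructor
  · rintro ⟨a, ha, rfl⟩
    rw [h.mem_range_iff_nsmul_eq_zero hR hU hz] at ha
    rw [← map_nsmul, ha, map_zero]
  · intro hq
    refine ⟨e.symm q, ?_, e.apply_symm_apply q⟩
    rw [h.mem_range_iff_nsmul_eq_zero hR hU hz, ← map_nsmul, hq, map_zero]

lemma isCoprime_of_map_gen (h : IsCyclicExtension i W D P z) (h' : IsCyclicExtension i' W' D' P z')
    (e : Q ≃ₗ⁅ℤ⁆ Q') (hrange : i.range.map (e : Q →ₗ⁅ℤ⁆ Q') ≤ i'.range) {x : V} {α : ℤ}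
    (hW : e W = i' x + α • W') : IsCoprime α P := by
  obtain ⟨u, k, huk⟩ := h.exists_eq_add_zsmul (e.symm W')
  obtain ⟨v, hv⟩ : e (i u) ∈ i'.range := hrange ⟨i u, ⟨u, rfl⟩, rfl⟩
  have hv' : i' v = e (i u) := hv
  have hW' : W' = i' v + k • (i' x + α • W') :=
    calc W' = e (e.symm W') := (e.apply_symm_apply W').symm
      _ = i' v + k • (i' x + α • W') := by rw [huk, map_add, map_zsmul, hW, hv']
  have hmem : (1 - k * α) • W' = i' (v + k • x) := by
    rw [sub_smul, one_smul, mul_smul, map_add, map_zsmul, sub_eq_iff_eq_add, add_assoc, ← smul_add]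
    exact hW'
  obtain ⟨c, hc⟩ := h'.dvd_of_zsmul_gen_mem _ ⟨_, hmem.symm⟩
  exact ⟨k, c, by linear_combination -hc⟩

theorem exists_lieEquiv_of_lieEquiv (h : IsCyclicExtension i W D P z)
    (h' : IsCyclicExtension i' W' D' P z') (hP : ∀ v : V, P • v = 0) (e : Q ≃ₗ⁅ℤ⁆ Q')
    (hrange : i.range.map (e : Q →ₗ⁅ℤ⁆ Q') = i'.range) :
    ∃ (π : U ≃ₗ⁅ℤ⁆ V) (α : ℤ), IsCoprime α P ∧ π z = α • z' ∧
      ∃ x, ∀ v, π (D (π.symm v)) = ⁅v, x⁆ + α • D' v := by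
  obtain ⟨π, hπ⟩ := exists_lieEquiv_of_map_range_eq h.injective h'.injective e hrange
  obtain ⟨x, α, hW⟩ := h'.exists_eq_add_zsmul (e W)
  refine ⟨π, α, h.isCoprime_of_map_gen h' e hrange.le hW, h'.injective ?_, x,
    fun v => h'.injective ?_⟩
  · calc i' (π z) = P • e W := by rw [hπ, ← h.nsmul_gen, map_nsmul]
      _ = i' (α • z') := by
        rw [hW, smul_add, ← map_nsmul, hP, map_zero, zero_add, smul_comm, h'.nsmul_gen, map_zsmul]
  · calc i' (π (D (π.symm v))) = ⁅i' v, e W⁆ := by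
          rw [hπ, ← h.lie_gen, LieEquiv.map_lie, ← hπ, π.apply_symm_apply]
      _ = i' (⁅v, x⁆ + α • D' v) := by
        rw [hW, lie_add, ← LieHom.map_lie, lie_zsmul, h'.lie_gen, map_add, map_zsmul]

theorem nonempty_lieEquiv_iff (h : IsCyclicExtension i W D P z)
    (h' : IsCyclicExtension i' W' D' P z') (hR : R ≠ 0) (hRP : R ∣ P)
    (hU : ∀ u : U, R • u = 0) (hV : ∀ v : V, R • v = 0)
    (hz : addOrderOf z = R) (hz' : addOrderOf z' = R) :
    Nonempty (Q ≃ₗ⁅ℤ⁆ Q') ↔ ∃ (π : U ≃ₗ⁅ℤ⁆ V) (α : ℤ), IsCoprime α P ∧ π z = α • z' ∧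
      ∃ x, ∀ v, π (D (π.symm v)) = ⁅v, x⁆ + α • D' v := by
  have hP (v : V) : P • v = 0 := by
    obtain ⟨c, rfl⟩ := hRP
    rw [mul_comm, mul_smul, hV, smul_zero]
  constructor
  · rintro ⟨e⟩
    exact h.exists_lieEquiv_of_lieEquiv h' hP e (h.map_range_eq_range h' hR hU hV hz hz' e)
  · rintro ⟨π, α, hα, hπz, x, hD⟩
    exact h.nonempty_lieEquiv (h'.change_gen hP π hα hπz x hD)

end IsCyclicExtension

namespace LieSD

variable {L : Type} {m : ℕ} [LieRing L] {θ : ZMod m →ₗ⁅ℤ⁆ LieDerivation ℤ L L}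

lemma lie_def (a b : LieSD L m θ) :
    ⁅a, b⁆ = ⟨⁅a.fst, b.fst⁆ + θ b.snd a.fst - θ a.snd b.fst, ⁅a.snd, b.snd⁆⟩ := rfl

@[simp] lemma zsmul_fst (k : ℤ) (a : LieSD L m θ) : (k • a).fst = k • a.fst :=
  map_zsmul (⟨⟨fst, zero_fst⟩, add_fst⟩ : LieSD L m θ →+ L) k a

@[simp] lemma zsmul_snd (k : ℤ) (a : LieSD L m θ) : (k • a).snd = k • a.snd :=
  map_zsmul (⟨⟨snd, zero_snd⟩, add_snd⟩ : LieSD L m θ →+ ZMod m) k a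

lemma mk_zsmul_mem_zmultiples_iff {P R : ℕ} (hm : P * R = m) {z : L} (hz : addOrderOf z = R)
    {w : ZMod m} (hw : addOrderOf w = m) (u : L) (k : ℤ) :
    (⟨u, k • w⟩ : LieSD L m θ) ∈ AddSubgroup.zmultiples ⟨-z, P • w⟩ ↔
      ∃ j : ℤ, k = P * j ∧ u = -(j • z) := by
  constructor
  · rintro ⟨j, hj⟩
    have hu : u = -(j • z) := by simpa using (congrArg fst hj).symm
    have hk : j • P • w = k • w := by simpa using congrArg snd hj
    have hdvd : (m : ℤ) ∣ k - P * j := by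
      rw [← hw, addOrderOf_dvd_iff_zsmul_eq_zero, sub_smul, mul_comm, mul_smul, natCast_zsmul, hk,
        sub_self]
    obtain ⟨t, ht⟩ := hdvd
    have hRt : (R * t : ℤ) • z = 0 := by
      rw [← addOrderOf_dvd_iff_zsmul_eq_zero, hz]
      exact dvd_mul_right _ _
    refine ⟨j + R * t, ?_, by rw [add_smul, hRt, add_zero, hu]⟩
    rw [← hm] at ht
    push_cast at ht
    linear_combination ht
  · rintro ⟨j, rfl, rfl⟩
    refine ⟨j, ?_⟩
    ext
    · simp
    · simp [mul_left_comm, mul_assoc]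

/-- The map of `L` into the quotient of `L ⋊_θ (ℤ/mℤ)` by the ideal `I`; it need not be
injective. -/
def quotientInl (I : LieIdeal ℤ (LieSD L m θ)) : L →ₗ⁅ℤ⁆ LieSD L m θ ⧸ I where
  toFun u := LieSubmodule.Quotient.mk (⟨u, 0⟩ : LieSD L m θ)
  map_add' u v := congrArg LieSubmodule.Quotient.mk
    (show (⟨u + v, 0⟩ : LieSD L m θ) = ⟨u, 0⟩ + ⟨v, 0⟩ by ext <;> simp)
  map_smul' k u := congrArg LieSubmodule.Quotient.mk
    (show (⟨k • u, 0⟩ : LieSD L m θ) = k • ⟨u, 0⟩ by ext <;> simp)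
  map_lie' {u v} := congrArg LieSubmodule.Quotient.mk
    (show (⟨⁅u, v⁆, 0⟩ : LieSD L m θ) = ⁅(⟨u, 0⟩ : LieSD L m θ), (⟨v, 0⟩ : LieSD L m θ)⁆ by
      ext <;> simp [lie_def, theta_zero])

lemma quotientInl_add_zsmul (I : LieIdeal ℤ (LieSD L m θ)) (u : L) (k : ℤ) (c : ZMod m) :
    quotientInl I u + k • (LieSubmodule.Quotient.mk (⟨0, c⟩ : LieSD L m θ) : LieSD L m θ ⧸ I) =
      LieSubmodule.Quotient.mk (⟨u, k • c⟩ : LieSD L m θ) := by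
  have huk : (⟨u, k • c⟩ : LieSD L m θ) = ⟨u, 0⟩ + k • ⟨0, c⟩ := by ext <;> simp
  rw [huk]
  rfl

theorem isCyclicExtension_quotient [NeZero m] {P R : ℕ} (hm : P * R = m) {z : L}
    (hz : addOrderOf z = R) {w : ZMod m} (hw : addOrderOf w = m) {I : LieIdeal ℤ (LieSD L m θ)}
    (hI : (I : Set (LieSD L m θ)) =
      (AddSubgroup.zmultiples (⟨-z, P • w⟩ : LieSD L m θ) : Set (LieSD L m θ))) :
    IsCyclicExtension (quotientInl I) (LieSubmodule.Quotient.mk ⟨0, w⟩) (θ w) P z := by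
  have hN : P * R ≠ 0 := hm.trans_ne (NeZero.ne m)
  refine .of_add_zsmul_gen_eq_zero_iff (left_ne_zero_of_mul hN) (fun u => ?_) (fun q => ?_)
    fun u k => ?_
  · refine congrArg LieSubmodule.Quotient.mk
      (show ⁅(⟨u, 0⟩ : LieSD L m θ), (⟨0, w⟩ : LieSD L m θ)⁆ = ⟨θ w u, 0⟩ from ?_)
    ext <;> simp [lie_def]
  · obtain ⟨⟨u, c⟩, rfl⟩ := LieSubmodule.Quotient.surjective_mk' I q
    obtain ⟨k, rfl⟩ := exists_zsmul_eq_of_addOrderOf_eq_card (hw.trans (Nat.card_zmod m).symm) c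
    exact ⟨u, k, (quotientInl_add_zsmul I u k w).symm⟩
  · rw [quotientInl_add_zsmul, LieSubmodule.Quotient.mk_eq_zero', ← SetLike.mem_coe, hI]
    exact mk_zsmul_mem_zmultiples_iff hm hz hw u k

end LieSD

theorem lieSD_quotient_iso_criterion_general {P R N : ℕ} [NeZero N] (hN : P * R = N) (hRP : R ∣ P)
    {U V : Type} [LieRing U] [LieRing V] (hU : ∀ u : U, R • u = 0) (hV : ∀ v : V, R • v = 0)
    {z : U} {z' : V} (hz : addOrderOf z = R) (hz' : addOrderOf z' = R)
    {w w' : ZMod N} (hw : addOrderOf w = N) (hw' : addOrderOf w' = N)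
    {θ : ZMod N →ₗ⁅ℤ⁆ LieDerivation ℤ U U} {θ' : ZMod N →ₗ⁅ℤ⁆ LieDerivation ℤ V V}
    {I : LieIdeal ℤ (LieSD U N θ)}
    (hI : (I : Set (LieSD U N θ)) =
      (AddSubgroup.zmultiples (⟨-z, P • w⟩ : LieSD U N θ) : Set (LieSD U N θ)))
    {I' : LieIdeal ℤ (LieSD V N θ')}
    (hI' : (I' : Set (LieSD V N θ')) =
      (AddSubgroup.zmultiples (⟨-z', P • w'⟩ : LieSD V N θ') : Set (LieSD V N θ'))) :
    (∃ e : (LieSD U N θ ⧸ I) ≃+ (LieSD V N θ' ⧸ I'), ∀ a b, e ⁅a, b⁆ = ⁅e a, e b⁆) ↔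
      ∃ π : U ≃+ V, (∀ x y, π ⁅x, y⁆ = ⁅π x, π y⁆) ∧ ∃ α : ℤ, IsCoprime α P ∧
        π z = α • z' ∧ ∃ x, ∀ v, π (θ w (π.symm v)) = ⁅v, x⁆ + α • θ' w' v := by
  have hR : R ≠ 0 := right_ne_zero_of_mul (hN.trans_ne (NeZero.ne N))
  have key := (LieSD.isCyclicExtension_quotient hN hz hw hI).nonempty_lieEquiv_iff
    (LieSD.isCyclicExtension_quotient hN hz' hw' hI') hR hRP hU hV hz hz'
  constructor
  · rintro ⟨e, he⟩
    obtain ⟨π, h⟩ := key.mp ⟨lieEquivOfAddEquiv e he⟩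
    exact ⟨π.toLinearEquiv.toAddEquiv, π.map_lie, h⟩
  · rintro ⟨π, hπ, h⟩
    obtain ⟨e⟩ := key.mpr ⟨lieEquivOfAddEquiv π hπ, h⟩
    exact ⟨e.toLinearEquiv.toAddEquiv, e.map_lie⟩

/-- With `U`, `z`, `z'`, `w`, `w'`, `θ`, `θ'` as in the construction of
`U(n-f, w, wθ, z)` and `U(n-f, w', w'θ', z')`, the two quotient Lie rings are isomorphic
if and only if there is a Lie ring automorphism `π` of `U` with `zπ = α·z'` for some
integer `α` coprime to `p`, and `π⁻¹(wθ)π = ad_r x + α·(w'θ')` for some `x ∈ U`. -/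
theorem lieSD_quotient_iso_criterion
    (p f n : ℕ) (hp : p.Prime) (hf : 1 ≤ f) (hfn : f ≤ n)
    (U : Type) [LieRing U] [Finite U]
    -- P-1 : `U` is nilpotent, has additive coexponent `f`, and `μ₁(U) = μ₂(U) ≤ f`
    (hnil : IsNilpotentLieRing U)
    (hcoexp : ∃ e : ℕ, AddMonoid.exponent U = p ^ e ∧ (f + aMuInv p U 1) - e = f)
    (hμeq : aMuInv p U 1 = aMuInv p U 2) (hμf : aMuInv p U 1 ≤ f)
    -- P-2 : `|U| = p ^ (f + μ₁(U))`
    (hcard : Nat.card U = p ^ (f + aMuInv p U 1))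
    -- `n - f ≥ 2μ₁(U)`
    (hn : 2 * aMuInv p U 1 ≤ n - f)
    -- P-3 and the choices of `z`, `z'` : central elements of order `p ^ μ₁(U)`
    (z z' : U) (hzc : ∀ u : U, ⁅z, u⁆ = 0) (hzc' : ∀ u : U, ⁅z', u⁆ = 0)
    (hzo : addOrderOf z = p ^ aMuInv p U 1) (hzo' : addOrderOf z' = p ^ aMuInv p U 1)
    -- `w`, `w'` generators of `ℤ/p^(n-f)ℤ`
    (w w' : ZMod (p ^ (n - f)))
    (hw : addOrderOf w = p ^ (n - f)) (hw' : addOrderOf w' = p ^ (n - f))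
    -- `θ`, `θ'` Lie ring homomorphisms into `Der(U)_z` and `Der(U)_{z'}`
    (θ θ' : ZMod (p ^ (n - f)) →ₗ⁅ℤ⁆ LieDerivation ℤ U U)
    (hθz : ∀ c : ZMod (p ^ (n - f)), (θ c) z = 0)
    (hθz' : ∀ c : ZMod (p ^ (n - f)), (θ' c) z' = 0)
    -- the Lie ideals generated by `p^(n-f-μ₁(U))·w - z` resp. `p^(n-f-μ₁(U))·w' - z'`
    (I : LieIdeal ℤ (LieSD U (p ^ (n - f)) θ))
    (hI : (I : Set (LieSD U (p ^ (n - f)) θ)) =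
      (AddSubgroup.zmultiples
        (⟨-z, p ^ (n - f - aMuInv p U 1) • w⟩ : LieSD U (p ^ (n - f)) θ) :
          Set (LieSD U (p ^ (n - f)) θ)))
    (I' : LieIdeal ℤ (LieSD U (p ^ (n - f)) θ'))
    (hI' : (I' : Set (LieSD U (p ^ (n - f)) θ')) =
      (AddSubgroup.zmultiples
        (⟨-z', p ^ (n - f - aMuInv p U 1) • w'⟩ : LieSD U (p ^ (n - f)) θ') :
          Set (LieSD U (p ^ (n - f)) θ'))) :
    -- `U(n-f,w,wθ,z) ≅ U(n-f,w',w'θ',z')` as Lie rings ...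
    (∃ e : (LieSD U (p ^ (n - f)) θ ⧸ I) ≃+ (LieSD U (p ^ (n - f)) θ' ⧸ I'),
        ∀ a b : LieSD U (p ^ (n - f)) θ ⧸ I, e ⁅a, b⁆ = ⁅e a, e b⁆) ↔
      -- ... iff there is a Lie ring automorphism `π` of `U` such that
      ∃ π : U ≃+ U, (∀ x y : U, π ⁅x, y⁆ = ⁅π x, π y⁆) ∧
        ∃ α : ℤ, IsCoprime α (p : ℤ) ∧
          -- (1) `zπ = α z'`
          π z = α • z' ∧
          -- (2) `π⁻¹(wθ)π = ad_r x + α(w'θ')` for some `x ∈ U`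
          ∃ x : U, ∀ u : U, π ((θ w) (π.symm u)) = ⁅u, x⁆ + α • ((θ' w') u) := by
  have hexp := exponent_eq_pow_of_coexponent hf hcoexp
  have hμ := ne_zero_of_exponent_eq_pow hp.one_lt (by omega) hexp hcard
  have hU (u : U) : p ^ aMuInv p U 1 • u = 0 := hexp ▸ AddMonoid.exponent_nsmul_eq_zero u
  have : NeZero p := ⟨hp.ne_zero⟩
  simpa only [Nat.cast_pow, IsCoprime.pow_right_iff (show 0 < n - f - aMuInv p U 1 by omega)] using
    lieSD_quotient_iso_criterion_general (pow_sub_mul_pow p (by omega)) (pow_dvd_pow p (by omega))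
      hU hU hzo hzo' hw hw' hI hI'
end
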